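/- Let 𝓔 = (E_n)_{n≥1} be a sequence of finite dimensional real Banach spaces with dim E_n = n and let F be a real Banach space such that (𝓔, F) is a Grothendieck pair. Then either F is finite dimensional, or both F and its dual space F* have non-trivial (finite) cotype. -/

import Mathlib

/-!
The second alternative always holds. Suppose that `F` or `F*` fails to have finite cotype. Then it
contains copies of `ℓ_∞^k` for all `k` with one constant (`GPair.hasLinf_of_no_cotype`), and the
Grothendieck pair inequality, tested on tensors built from these copies, puts a condition on the
spaces `E n` alone (`GPair.star_of_linf`, `GPair.star_of_dual_linf`): every bilinear form `A` on
`E n` satisfies `∑ A(x_i, y_i) ≤ C ‖A‖ a b` whenever `(x_i)` has weak `ℓ₁`-norm at most `a` and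
`‖y_i‖ ≤ b`. This condition is called `GPair.Star` below. It cannot hold for spaces of all
dimensions with one constant (`GPair.not_star`), for the following reasons.

*Cotype.* The condition fails on spaces `E` such that `E` or `E*` contains a large `ℓ_∞^k`: test a
random sign form. Hence for one `k`, in all `E n` and in their duals, `k` vectors satisfy a cotype-2
inequality with constant `k a`, `a < 1` (`GPair.exists_Q_of_star`). Such inequalities are
submultiplicative: `k ^ m` vectors satisfy one with constant `(k a) ^ m` (`GPair.Q.pow`).

*Bases.* Let `n = b ^ R` with `R` fixed and `b` large, and write `L` for the mean square of
`‖∑ ε_i φ_i‖`, where `φ : ℓ₂ⁿ → E*` is a contraction of maximal determinant. By maximality, a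
restriction of `φ` to a subspace of dimension `n/2` never has small norm, and the cotype inequality
in `E*` turns this into a lower bound for `L` (`GPair.exists_dual_basis`). Maximality also gives a
polynomial bound for the distance of `E` to `ℓ_1ⁿ`, so that the Rademacher projection on `L₂(E)`
has squared norm at most `K b²` (`GPair.rad_coeff_le`); this logarithmic loss becomes a small power
of the dimension and is harmless. By duality there are `x_i ∈ E` with `∑ φ_i(x_i) ≥ L / 2` and mean
square of `‖∑ ε_i x_i‖` at most `K b² L` (`GPair.exists_dual_rad`).

*Random copies.* After removing few directions, the operator norm of `x` on `ℓ₂ⁿ` is much smaller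
than its Gaussian average, again by the cotype inequality (`GPair.exists_cut_Q`). Take `h²`
independent Rademacher copies of the families `φ` and `x`. By concentration of measure, a random
combination of this kind is an operator on `ℓ₂` of norm comparable with the Gaussian average
(`GPair.exists_random_op`, a substitute for Chevet's inequality). Testing `Star` on the quadratic
form `∑ η_l ⊗ η_l` of the copies `η_l` of `φ` against the copies of `x` gives
`h L² ≤ C · O(b² L) · O(b⁴ L)` (`GPair.star_trace`, `GPair.core`). With `h = b⁷` this bounds `b`,
which is absurd, since `b` is arbitrary.
-/

open scoped BigOperators

/-- The projective tensor norm of the element of `X* ⊗ F` corresponding (via the canonical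
identification, `X` finite dimensional) to the continuous linear map `u : X → F`. -/
noncomputable def projNorm {X F : Type*} [NormedAddCommGroup X] [NormedSpace ℝ X]
    [NormedAddCommGroup F] [NormedSpace ℝ F] (u : X →L[ℝ] F) : ℝ :=
  sInf { r : ℝ | ∃ (k : ℕ) (η : Fin k → (X →L[ℝ] ℝ)) (f : Fin k → F),
    (∀ x, u x = ∑ i, η i x • f i) ∧ r = ∑ i, ‖η i‖ * ‖f i‖ }

/-- The Grothendieck constant `K_G(E,F)`.  An element of `E ⊗ F` is encoded as a map
`u : E* → F`, an element of `E* ⊗ F` as a map `E → F`, and `A ⊗ id_F` sends `u` to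
`u ∘ Aᵀ`, where `Aᵀ = A.flip : E → E*`. -/
noncomputable def KG (E F : Type*) [NormedAddCommGroup E] [NormedSpace ℝ E]
    [NormedAddCommGroup F] [NormedSpace ℝ F] : ℝ :=
  sSup { r : ℝ | ∃ (A : E →L[ℝ] (E →L[ℝ] ℝ)) (u : (E →L[ℝ] ℝ) →L[ℝ] F),
    ‖A‖ ≤ 1 ∧ ‖u‖ ≤ 1 ∧ r = projNorm (u.comp A.flip) }

/-- `ρ(E,F)`: the norm of the identity from `E ⊗̌ F` to `E ⊗̂ F`. -/
noncomputable def rho (E F : Type*) [NormedAddCommGroup E] [NormedSpace ℝ E]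
    [NormedAddCommGroup F] [NormedSpace ℝ F] : ℝ :=
  sSup { r : ℝ | ∃ u : (E →L[ℝ] ℝ) →L[ℝ] F, ‖u‖ ≤ 1 ∧ r = projNorm u }

/-- `A : E → E*` is non-negative: the corresponding tensor in `E* ⊗ E*` is a (finite) sum of
symmetric tensors `η ⊗ η`, i.e. lies in the convex hull of such tensors. -/
def IsNonnegMap {E : Type*} [NormedAddCommGroup E] [NormedSpace ℝ E]
    (A : E →L[ℝ] (E →L[ℝ] ℝ)) : Prop :=
  ∃ (k : ℕ) (η : Fin k → (E →L[ℝ] ℝ)), ∀ x, A x = ∑ i, η i x • η i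

/-- A tensor `z ∈ E ⊗ E` (encoded as a map `E* → E`) is non-negative if it is a finite sum of
symmetric tensors `e ⊗ e`. -/
def IsNonnegTensor {E : Type*} [NormedAddCommGroup E] [NormedSpace ℝ E]
    (z : (E →L[ℝ] ℝ) →L[ℝ] E) : Prop :=
  ∃ (k : ℕ) (e : Fin k → E), ∀ φ, z φ = ∑ i, φ (e i) • e i

/-- The positive Grothendieck constant `K_G⁺(E,F)`. -/
noncomputable def KGpos (E F : Type*) [NormedAddCommGroup E] [NormedSpace ℝ E]
    [NormedAddCommGroup F] [NormedSpace ℝ F] : ℝ :=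
  sSup { r : ℝ | ∃ (A : E →L[ℝ] (E →L[ℝ] ℝ)) (u : (E →L[ℝ] ℝ) →L[ℝ] F),
    IsNonnegMap A ∧ ‖A‖ ≤ 1 ∧ ‖u‖ ≤ 1 ∧ r = projNorm (u.comp A.flip) }

/-- The factorization constant `f(X,E)` of `X` through `E`. -/
noncomputable def factConst (X E : Type*) [NormedAddCommGroup X] [NormedSpace ℝ X]
    [NormedAddCommGroup E] [NormedSpace ℝ E] : ℝ :=
  sInf { r : ℝ | ∃ (u : X →L[ℝ] E) (v : E →L[ℝ] X),
    v.comp u = ContinuousLinearMap.id ℝ X ∧ r = ‖u‖ * ‖v‖ }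

/-- `γ(E) = sup { tr(BA) : A ≥ 0, B ≥ 0, ‖A‖ ≤ 1, ‖B‖ ≤ 1 }`. -/
noncomputable def gammaConst (E : Type*) [NormedAddCommGroup E] [NormedSpace ℝ E] : ℝ :=
  sSup { r : ℝ | ∃ (A : E →L[ℝ] (E →L[ℝ] ℝ)) (B : (E →L[ℝ] ℝ) →L[ℝ] E),
    IsNonnegMap A ∧ IsNonnegTensor B ∧ ‖A‖ ≤ 1 ∧ ‖B‖ ≤ 1 ∧
    r = LinearMap.trace ℝ E ((B.comp A : E →L[ℝ] E) : E →ₗ[ℝ] E) }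

/-- `ρ⁺(E)`: as `ρ(E,E)` but the supremum is restricted to non-negative tensors. -/
noncomputable def rhoPlus (E : Type*) [NormedAddCommGroup E] [NormedSpace ℝ E] : ℝ :=
  sSup { r : ℝ | ∃ z : (E →L[ℝ] ℝ) →L[ℝ] E,
    IsNonnegTensor z ∧ ‖z‖ ≤ 1 ∧ r = projNorm z }

/-- `X` has (Rademacher) cotype `q`. -/
def HasCotype (X : Type*) [NormedAddCommGroup X] [NormedSpace ℝ X] (q : ℝ) : Prop :=
  ∃ C > 0, ∀ (n : ℕ) (x : Fin n → X),
    (∑ i, ‖x i‖ ^ q) ^ (1/q) ≤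
      C * (((2 : ℝ) ^ n)⁻¹ *
        ∑ ε : Fin n → Bool, ‖∑ i, (if ε i then (1:ℝ) else -1) • x i‖ ^ 2) ^ (1/2 : ℝ)

/-! ### Averages, signs and Fourier–Walsh coefficients -/

namespace GPair

open Finset

/-- The average of a function on a finite type, with values in a real vector space. -/
noncomputable def avg {Ω V : Type*} [Fintype Ω] [AddCommGroup V] [Module ℝ V] (f : Ω → V) : V :=
  ((Fintype.card Ω : ℝ)⁻¹) • ∑ ω, f ω

section avg
variable {Ω Ω' V V' : Type*} [Fintype Ω] [Fintype Ω'] [AddCommGroup V] [Module ℝ V]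
  [AddCommGroup V'] [Module ℝ V']

lemma avg_const [Nonempty Ω] (v : V) : avg (fun _ : Ω => v) = v := by
  have : (Fintype.card Ω : ℝ) ≠ 0 := by exact_mod_cast Fintype.card_ne_zero
  simp only [avg, Finset.sum_const, Finset.card_univ]
  rw [← Nat.cast_smul_eq_nsmul ℝ, smul_smul, inv_mul_cancel₀ this, one_smul]

lemma avg_add (f g : Ω → V) : avg (fun ω => f ω + g ω) = avg f + avg g := by
  simp [avg, Finset.sum_add_distrib]

lemma avg_sub (f g : Ω → V) : avg (fun ω => f ω - g ω) = avg f - avg g := by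
  simp [avg, Finset.sum_sub_distrib, smul_sub]

lemma avg_smul (c : ℝ) (f : Ω → V) : avg (fun ω => c • f ω) = c • avg f := by
  simp only [avg, ← Finset.smul_sum]; rw [smul_comm]

lemma avg_mul (c : ℝ) (f : Ω → ℝ) : avg (fun ω => c * f ω) = c * avg f := avg_smul c f

lemma avg_sum {κ : Type*} (s : Finset κ) (f : κ → Ω → V) :
    avg (fun ω => ∑ i ∈ s, f i ω) = ∑ i ∈ s, avg (f i) := by
  simp only [avg]; rw [Finset.sum_comm, Finset.smul_sum]

lemma map_avg (L : V →ₗ[ℝ] V') (f : Ω → V) : L (avg f) = avg (fun ω => L (f ω)) := by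
  simp [avg, map_sum]

lemma avg_equiv (e : Ω ≃ Ω') (f : Ω' → V) : avg (fun ω => f (e ω)) = avg f := by
  simp only [avg]; rw [Fintype.card_congr e, e.sum_comp]

lemma avg_comm (f : Ω → Ω' → V) :
    avg (fun ω => avg (fun ω' => f ω ω')) = avg (fun ω' => avg (fun ω => f ω ω')) := by
  simp only [avg, ← Finset.smul_sum]; rw [smul_comm, Finset.sum_comm]

lemma avg_prod (f : Ω × Ω' → V) : avg f = avg (fun ω => avg (fun ω' => f (ω, ω'))) := by
  simp only [avg, ← Finset.smul_sum, smul_smul, Fintype.card_prod, Nat.cast_mul, mul_inv,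
    Fintype.sum_prod_type]

lemma avg_mono {f g : Ω → ℝ} (h : ∀ ω, f ω ≤ g ω) : avg f ≤ avg g := by
  simp only [avg, smul_eq_mul]; gcongr; exact h _

lemma avg_nonneg {f : Ω → ℝ} (h : ∀ ω, 0 ≤ f ω) : 0 ≤ avg f := by
  simp only [avg, smul_eq_mul]; exact mul_nonneg (by positivity) (Finset.sum_nonneg fun _ _ => h _)

lemma norm_avg_le {X : Type*} [NormedAddCommGroup X] [NormedSpace ℝ X] (f : Ω → X) :
    ‖avg f‖ ≤ avg (fun ω => ‖f ω‖) := by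
  simp only [avg, norm_smul, smul_eq_mul]
  rw [Real.norm_of_nonneg (by positivity)]
  gcongr; exact norm_sum_le _ _

/-- Cauchy–Schwarz. -/
lemma avg_cs (f g : Ω → ℝ) :
    avg (fun ω => f ω * g ω) ^ 2 ≤ avg (fun ω => f ω ^ 2) * avg (fun ω => g ω ^ 2) := by
  simp only [avg, smul_eq_mul]
  have := Finset.sum_mul_sq_le_sq_mul_sq Finset.univ f g
  calc _ = ((Fintype.card Ω : ℝ)⁻¹) ^ 2 * (∑ ω, f ω * g ω) ^ 2 := by ring
    _ ≤ ((Fintype.card Ω : ℝ)⁻¹) ^ 2 * ((∑ ω, f ω ^ 2) * ∑ ω, g ω ^ 2) := by gcongr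
    _ = _ := by ring

lemma avg_sq_le [Nonempty Ω] (f : Ω → ℝ) : avg f ^ 2 ≤ avg (fun ω => f ω ^ 2) := by
  have := avg_cs f (fun _ => 1)
  simpa [avg_const] using this

lemma norm_avg_sq_le [Nonempty Ω] {X : Type*} [NormedAddCommGroup X] [NormedSpace ℝ X] (f : Ω → X) :
    ‖avg f‖ ^ 2 ≤ avg (fun ω => ‖f ω‖ ^ 2) :=
  (pow_le_pow_left₀ (norm_nonneg _) (norm_avg_le f) 2).trans (avg_sq_le _)

lemma le_card_mul_avg {f : Ω → ℝ} (h : ∀ ω, 0 ≤ f ω) (ω : Ω) : f ω ≤ Fintype.card Ω * avg f := by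
  have : (Fintype.card Ω : ℝ) ≠ 0 := by
    exact_mod_cast (Fintype.card_pos_iff.2 ⟨ω⟩).ne'
  simp only [avg, smul_eq_mul]
  rw [mul_inv_cancel_left₀ this]
  exact Finset.single_le_sum (fun i _ => h i) (Finset.mem_univ ω)

end avg

/-- The sign `±1` encoded by a Boolean. -/
def sg (b : Bool) : ℝ := if b then 1 else -1

@[simp] lemma sg_true : sg true = 1 := rfl
@[simp] lemma sg_false : sg false = -1 := rfl
@[simp] lemma sg_mul_self (b : Bool) : sg b * sg b = 1 := by cases b <;> simp
@[simp] lemma sg_sq (b : Bool) : sg b ^ 2 = 1 := by cases b <;> simp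
@[simp] lemma abs_sg (b : Bool) : |sg b| = 1 := by cases b <;> simp

/-- Flipping signs: `sg (b == c) = sg b * sg c`. -/
lemma sg_beq (b c : Bool) : sg (b == c) = sg b * sg c := by cases b <;> cases c <;> simp

lemma exists_sg_mul (t : ℝ) : ∃ b, sg b * t = |t| := by
  rcases le_total 0 t with h | h
  · exact ⟨true, by simp [abs_of_nonneg h]⟩
  · exact ⟨false, by simp [abs_of_nonpos h]⟩

section cube
variable {ι κ : Type*} [Fintype ι] [DecidableEq ι] [Fintype κ] [DecidableEq κ]
variable {X : Type*} [NormedAddCommGroup X] [NormedSpace ℝ X]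

/-- Multiplication by a fixed sign vector, a bijection of the cube. -/
def flipEquiv (δ : ι → Bool) : (ι → Bool) ≃ (ι → Bool) where
  toFun ε i := ε i == δ i
  invFun ε i := ε i == δ i
  left_inv ε := by
    funext i; show ((ε i == δ i) == δ i) = ε i
    cases ε i <;> cases δ i <;> rfl
  right_inv ε := by
    funext i; show ((ε i == δ i) == δ i) = ε i
    cases ε i <;> cases δ i <;> rfl

/-- Product formula for averages over the cube. -/
lemma avg_cube_prod (g : ι → Bool → ℝ) :
    avg (fun ε : ι → Bool => ∏ i, g i (ε i)) = ∏ i, ((g i true + g i false) / 2) := by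
  simp only [avg, smul_eq_mul]
  have : ∑ ε : ι → Bool, ∏ i, g i (ε i) = ∏ i, ∑ b, g i b := by
    rw [Finset.prod_univ_sum, Fintype.piFinset_univ]
  rw [this]
  simp [Finset.prod_div_distrib, div_eq_inv_mul, Finset.prod_mul_distrib]

/-- Walsh functions. -/
def walsh (S : Finset ι) (ε : ι → Bool) : ℝ := ∏ i ∈ S, sg (ε i)

lemma walsh_eq (S : Finset ι) (ε : ι → Bool) :
    walsh S ε = ∏ i, (if i ∈ S then sg (ε i) else 1) := by
  simp [walsh, Finset.prod_ite_mem]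

@[simp] lemma walsh_singleton (i : ι) (ε : ι → Bool) : walsh {i} ε = sg (ε i) := by simp [walsh]
@[simp] lemma walsh_empty (ε : ι → Bool) : walsh (∅ : Finset ι) ε = 1 := by simp [walsh]

lemma walsh_orth (S T : Finset ι) :
    avg (fun ε : ι → Bool => walsh S ε * walsh T ε) = if S = T then 1 else 0 := by
  simp only [walsh_eq, ← Finset.prod_mul_distrib]
  rw [avg_cube_prod (fun i b => (if i ∈ S then sg b else 1) * (if i ∈ T then sg b else 1))]
  split_ifs with h
  · subst h
    apply Finset.prod_eq_one; intro i _; split_ifs <;> simp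
  · obtain ⟨i, hi⟩ : ∃ i, ¬ (i ∈ S ↔ i ∈ T) := by
      by_contra hc; push Not at hc; exact h (Finset.ext hc)
    apply Finset.prod_eq_zero (Finset.mem_univ i)
    by_cases h1 : i ∈ S <;> by_cases h2 : i ∈ T <;> simp_all

lemma avg_sg_mul_sg (i j : ι) :
    avg (fun ε : ι → Bool => sg (ε i) * sg (ε j)) = if i = j then 1 else 0 := by
  have := walsh_orth ({i} : Finset ι) {j}
  simpa using this

lemma walsh_dual (ε η : ι → Bool) :
    ∑ S : Finset ι, walsh S ε * walsh S η = if ε = η then (2 : ℝ) ^ Fintype.card ι else 0 := by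
  have : ∑ S : Finset ι, walsh S ε * walsh S η = ∏ i, (1 + sg (ε i) * sg (η i)) := by
    rw [Finset.prod_one_add]
    simp [walsh, Finset.prod_mul_distrib]
  rw [this]
  split_ifs with h
  · subst h
    have : ∀ i, (1 + sg (ε i) * sg (ε i)) = 2 := fun i => by rw [sg_mul_self]; norm_num
    simp only [this]
    simp
  · obtain ⟨i, hi⟩ := Function.ne_iff.1 h
    apply Finset.prod_eq_zero (Finset.mem_univ i)
    revert hi; cases ε i <;> cases η i <;> simp

/-- Fourier–Walsh coefficients. -/
noncomputable def coeff {V : Type*} [AddCommGroup V] [Module ℝ V] (f : (ι → Bool) → V)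
    (S : Finset ι) : V := avg (fun ε => walsh S ε • f ε)

lemma parseval (h : (ι → Bool) → ℝ) : ∑ S, coeff h S ^ 2 = avg (fun ε => h ε ^ 2) := by
  have e1 : ∀ S, coeff h S ^ 2 =
      avg (fun ε => avg (fun η => (walsh S ε * walsh S η) * (h ε * h η))) := by
    intro S
    rw [sq]
    nth_rewrite 1 [coeff]
    rw [mul_comm, ← smul_eq_mul, ← avg_smul]
    congr 1; funext ε
    rw [smul_eq_mul, mul_comm, smul_eq_mul, coeff, ← smul_eq_mul, ← avg_smul]
    congr 1; funext η
    simp only [smul_eq_mul]; ring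
  simp only [e1]
  rw [← avg_sum]
  congr 1; funext ε
  rw [← avg_sum]
  simp only [← Finset.sum_mul, walsh_dual]
  simp [avg, ite_mul, sq]

/-- Fourier multipliers on the cube. -/
noncomputable def mult {V : Type*} [AddCommGroup V] [Module ℝ V] (μ : Finset ι → ℝ)
    (f : (ι → Bool) → V) (ε : ι → Bool) : V := ∑ S, (μ S * walsh S ε) • coeff f S

lemma coeff_mult (μ : Finset ι → ℝ) (h : (ι → Bool) → ℝ) (S : Finset ι) :
    coeff (mult μ h) S = μ S * coeff h S := by
  simp only [coeff, mult, smul_eq_mul, Finset.mul_sum]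
  rw [avg_sum]
  have : ∀ T, avg (fun ε => walsh S ε * (μ T * walsh T ε * avg fun ε => walsh T ε * h ε)) =
      if S = T then μ T * avg (fun ε => walsh T ε * h ε) else 0 := by
    intro T
    have : (fun ε => walsh S ε * (μ T * walsh T ε * avg fun ε => walsh T ε * h ε)) =
      fun ε => (μ T * avg fun ε => walsh T ε * h ε) * (walsh S ε * walsh T ε) := by
      funext ε; ring
    rw [this, avg_mul, walsh_orth]; split_ifs <;> simp
  simp only [this]
  simp

lemma avg_mult_sq_le (μ : Finset ι → ℝ) (M : ℝ) (hμ : ∀ S, |μ S| ≤ M) (h : (ι → Bool) → ℝ) :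
    avg (fun ε => mult μ h ε ^ 2) ≤ M ^ 2 * avg (fun ε => h ε ^ 2) := by
  rw [← parseval, ← parseval, Finset.mul_sum]
  gcongr with S
  rw [coeff_mult, mul_pow]
  gcongr ?_ * _
  rw [← sq_abs (μ S)]; gcongr; exact hμ S

lemma map_mult {V V' : Type*} [AddCommGroup V] [Module ℝ V] [AddCommGroup V'] [Module ℝ V']
    (L : V →ₗ[ℝ] V') (μ : Finset ι → ℝ) (f : (ι → Bool) → V) (ε : ι → Bool) :
    L (mult μ f ε) = mult μ (fun η => L (f η)) ε := by
  simp [mult, coeff, map_avg]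

/-- The noise operator with parameter `s` is given by the kernel `∏ (1 + s ε_i η_i)`. -/
lemma mult_noise {V : Type*} [AddCommGroup V] [Module ℝ V] (s : ℝ) (f : (ι → Bool) → V)
    (ε : ι → Bool) :
    mult (fun S => s ^ S.card) f ε = avg (fun η => (∏ i, (1 + s * (sg (ε i) * sg (η i)))) • f η) := by
  simp only [mult, coeff, ← avg_smul]
  rw [← avg_sum]
  congr 1; funext η
  rw [Finset.prod_one_add, Finset.sum_smul]
  simp only [Finset.powerset_univ]
  refine Finset.sum_congr rfl fun S _ => ?_
  rw [smul_smul]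
  congr 1
  simp only [walsh, Finset.prod_mul_distrib, Finset.prod_const]
  ring

lemma avg_noise_kernel (s : ℝ) (ε : ι → Bool) :
    avg (fun η : ι → Bool => ∏ i, (1 + s * (sg (ε i) * sg (η i)))) = 1 := by
  rw [avg_cube_prod (fun i b => 1 + s * (sg (ε i) * sg b))]
  apply Finset.prod_eq_one; intro i _; simp; ring

/-- Weighted Jensen inequality for the square of the norm. -/
lemma norm_avg_weight_sq_le {Ω : Type*} [Fintype Ω] (p : Ω → ℝ) (hp : ∀ ω, 0 ≤ p ω)
    (h1 : avg p = 1) (f : Ω → X) :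
    ‖avg (fun ω => p ω • f ω)‖ ^ 2 ≤ avg (fun ω => p ω * ‖f ω‖ ^ 2) := by
  have h2 : ‖avg (fun ω => p ω • f ω)‖ ≤ avg (fun ω => Real.sqrt (p ω) * (Real.sqrt (p ω) * ‖f ω‖)) := by
    refine (norm_avg_le _).trans (avg_mono fun ω => ?_)
    rw [norm_smul, Real.norm_of_nonneg (hp ω), ← mul_assoc, Real.mul_self_sqrt (hp ω)]
  refine (pow_le_pow_left₀ (norm_nonneg _) h2 2).trans ((avg_cs _ _).trans ?_)
  simp only [mul_pow, Real.sq_sqrt (hp _)]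
  rw [h1, one_mul]

/-- The noise operator is a contraction in `L₂`. -/
lemma avg_noise_le (s : ℝ) (hs : |s| ≤ 1) (f : (ι → Bool) → X) :
    avg (fun ε => ‖mult (fun S => s ^ S.card) f ε‖ ^ 2) ≤ avg (fun ε => ‖f ε‖ ^ 2) := by
  have hpos : ∀ ε η : ι → Bool, 0 ≤ ∏ i, (1 + s * (sg (ε i) * sg (η i))) := by
    intro ε η
    apply Finset.prod_nonneg; intro i _
    have : |s * (sg (ε i) * sg (η i))| ≤ 1 := by simpa [abs_mul] using hs
    linarith [neg_le_of_abs_le this]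
  calc _ ≤ avg (fun ε : ι → Bool => avg (fun η : ι → Bool =>
        (∏ i, (1 + s * (sg (ε i) * sg (η i)))) * ‖f η‖ ^ 2)) := by
        apply avg_mono; intro ε
        rw [mult_noise]
        exact norm_avg_weight_sq_le _ (hpos ε) (avg_noise_kernel s ε) f
    _ = avg (fun η : ι → Bool => ‖f η‖ ^ 2 * avg (fun ε : ι → Bool =>
        (∏ i, (1 + s * (sg (η i) * sg (ε i)))))) := by
        rw [avg_comm]; congr 1; funext η
        rw [← avg_mul]
        congr 1; funext ε
        rw [mul_comm]; congr 1
        exact Finset.prod_congr rfl fun i _ => by ring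
    _ = _ := by simp only [avg_noise_kernel, mul_one]

/-- The squared `L₂` norm of the Rademacher sum `∑ ε_i z_i`. -/
noncomputable def rad (z : ι → X) : ℝ := avg (fun ε : ι → Bool => ‖∑ i, sg (ε i) • z i‖ ^ 2)

lemma rad_nonneg (z : ι → X) : 0 ≤ rad z := avg_nonneg fun _ => by positivity

lemma rad_smul (c : ℝ) (z : ι → X) : rad (fun i => c • z i) = c ^ 2 * rad z := by
  simp only [rad, ← avg_mul]
  congr 1; funext ε
  simp only [smul_comm _ c, ← Finset.smul_sum, norm_smul, mul_pow]
  simp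

lemma rad_equiv (e : ι ≃ κ) (z : κ → X) : rad (fun i => z (e i)) = rad z := by
  simp only [rad]
  rw [← avg_equiv (Equiv.arrowCongr e (Equiv.refl Bool))]
  congr 1; funext ε
  congr 2
  rw [← e.sum_comp]
  simp [Equiv.arrowCongr]

/-- Contraction principle. -/
lemma rad_contract (a : ι → ℝ) (ha : ∀ i, |a i| ≤ 1) (z : ι → X) :
    rad (fun i => a i • z i) ≤ rad z := by
  set p : (ι → Bool) → ℝ := fun η => ∏ i, (1 + a i * sg (η i)) with hp
  have hp0 : ∀ η, 0 ≤ p η := fun η => Finset.prod_nonneg fun i _ => by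
    have : |a i * sg (η i)| ≤ 1 := by simpa [abs_mul] using ha i
    linarith [neg_le_of_abs_le this]
  have hp1 : avg p = 1 := by
    rw [hp, avg_cube_prod (fun i b => 1 + a i * sg b)]
    apply Finset.prod_eq_one; intro i _; simp; ring
  have hpi : ∀ j, avg (fun η => p η * sg (η j)) = a j := by
    intro j
    have : (fun η => p η * sg (η j)) =
        fun η : ι → Bool => ∏ i, ((1 + a i * sg (η i)) * if i = j then sg (η i) else 1) := by
      funext η; simp only [hp]; rw [Finset.prod_mul_distrib]; simp
    rw [this, avg_cube_prod (fun i b => (1 + a i * sg b) * if i = j then sg b else 1)]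
    rw [Finset.prod_eq_single j]
    · simp; ring
    · intro i _ hij; simp [hij]; ring
    · simp
  have key : ∀ ε : ι → Bool, ∑ i, sg (ε i) • (a i • z i) =
      avg (fun η => p η • ∑ i, sg (ε i == η i) • z i) := by
    intro ε
    simp only [Finset.smul_sum]
    rw [avg_sum]
    refine Finset.sum_congr rfl fun i _ => ?_
    have : (fun η => p η • sg (ε i == η i) • z i) = fun η => (sg (ε i) * (p η * sg (η i))) • z i := by
      funext η; rw [sg_beq, smul_smul]; congr 1; ring
    rw [this, ← hpi i, smul_smul, ← avg_mul]
    exact map_avg (LinearMap.toSpanSingleton ℝ X (z i)) (fun η => sg (ε i) * (p η * sg (η i)))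
  calc rad (fun i => a i • z i) ≤ avg (fun ε : ι → Bool => avg (fun η : ι → Bool =>
        p η * ‖∑ i, sg (ε i == η i) • z i‖ ^ 2)) := by
        apply avg_mono; intro ε
        rw [key]; exact norm_avg_weight_sq_le _ hp0 hp1 _
    _ = avg (fun η : ι → Bool => p η * rad z) := by
        rw [avg_comm]; congr 1; funext η
        rw [avg_mul]; congr 1
        exact avg_equiv (flipEquiv η) (fun ε : ι → Bool => ‖∑ i, sg (ε i) • z i‖ ^ 2)
    _ = rad z := by simp only [mul_comm _ (rad z)]; rw [avg_mul, hp1, mul_one]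

lemma norm_sq_le_rad (z : ι → X) (i : ι) : ‖z i‖ ^ 2 ≤ rad z := by
  have : z i = avg (fun ε : ι → Bool => sg (ε i) • ∑ j, sg (ε j) • z j) := by
    simp only [Finset.smul_sum, smul_smul]
    rw [avg_sum]
    have : ∀ j, avg (fun ε : ι → Bool => (sg (ε i) * sg (ε j)) • z j) = (if i = j then (1:ℝ) else 0) • z j := by
      intro j
      rw [← avg_sg_mul_sg]
      exact (map_avg (LinearMap.toSpanSingleton ℝ X (z j)) (fun ε : ι → Bool => sg (ε i) * sg (ε j))).symm
    simp [this]
  rw [this]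
  refine (norm_avg_sq_le _).trans (le_of_eq ?_)
  simp [rad, norm_smul]

/-- Second moment of a scalar Rademacher sum. -/
lemma avg_sum_sg_sq (t : ι → ℝ) :
    avg (fun ε : ι → Bool => (∑ i, t i * sg (ε i)) ^ 2) = ∑ i, t i ^ 2 := by
  simp only [sq, Finset.sum_mul_sum]
  rw [avg_sum]
  refine Finset.sum_congr rfl fun i _ => ?_
  rw [avg_sum]
  have : ∀ j, avg (fun ε : ι → Bool => t i * sg (ε i) * (t j * sg (ε j))) =
      (t i * t j) * if i = j then 1 else 0 := by
    intro j; rw [← avg_sg_mul_sg, ← avg_mul]; congr 1; funext ε; ring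
  simp [this]

/-- Weak `ℓ₂` norms are dominated by Rademacher averages. -/
lemma norm_sum_sq_le_rad (z : ι → X) (t : ι → ℝ) :
    ‖∑ i, t i • z i‖ ^ 2 ≤ (∑ i, t i ^ 2) * rad z := by
  have h1 : ∑ i, t i • z i =
      avg (fun ε : ι → Bool => (∑ i, t i * sg (ε i)) • ∑ j, sg (ε j) • z j) := by
    simp only [Finset.smul_sum]
    rw [avg_sum]
    refine Finset.sum_congr rfl fun j _ => ?_
    simp only [smul_smul]
    have h0 : avg (fun ε : ι → Bool => (∑ i, t i * sg (ε i)) * sg (ε j)) = t j := by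
      simp only [Finset.sum_mul, mul_assoc]
      rw [avg_sum]
      simp [avg_mul, avg_sg_mul_sg]
    have := map_avg (LinearMap.toSpanSingleton ℝ X (z j))
      (fun ε : ι → Bool => (∑ i, t i * sg (ε i)) * sg (ε j))
    rw [h0] at this
    simpa using this
  rw [← avg_sum_sg_sq, h1]
  refine (pow_le_pow_left₀ (norm_nonneg _) (norm_avg_le _) 2).trans ?_
  simp only [norm_smul, Real.norm_eq_abs]
  refine (avg_cs _ _).trans (le_of_eq ?_)
  simp [rad]

end cube

end GPair

/-! ### Products of cubes, the ratio `Q`, and copies of `ℓ_∞` -/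

namespace GPair

open Finset

section
variable {ι κ : Type*} [Fintype ι] [DecidableEq ι] [Fintype κ] [DecidableEq κ]
variable {X : Type*} [NormedAddCommGroup X] [NormedSpace ℝ X]

/-- Marginals of the uniform measure on a cube are uniform. -/
lemma avg_comp_inj {V : Type*} [AddCommGroup V] [Module ℝ V] {e : κ → ι}
    (he : Function.Injective e) (g : (κ → Bool) → V) :
    avg (fun ε : ι → Bool => g (fun j => ε (e j))) = avg g := by
  have h1 : ∀ δ : κ → Bool, avg (fun ε : ι → Bool => g (fun j => ε (e j))) =
      avg (fun ε : ι → Bool => g (fun j => ε (e j) == δ j)) := by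
    intro δ
    rw [← avg_equiv (flipEquiv (Function.extend e δ (fun _ => true)))]
    congr 1; funext ε; congr 1; funext j
    simp [flipEquiv, he.extend_apply]
  have h2 : ∀ ε : ι → Bool, avg (fun δ : κ → Bool => g (fun j => ε (e j) == δ j)) = avg g := by
    intro ε
    rw [← avg_equiv (flipEquiv (fun j => ε (e j))) g]
    congr 1; funext δ; congr 1; funext j
    simp [flipEquiv, Bool.beq_comm]
  calc _ = avg (fun δ : κ → Bool => avg (fun ε : ι → Bool => g (fun j => ε (e j)))) :=
        (avg_const _).symm
    _ = avg (fun δ : κ → Bool => avg (fun ε : ι → Bool => g (fun j => ε (e j) == δ j))) := by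
        congr 1; funext δ; exact h1 δ
    _ = _ := by rw [avg_comm]; simp only [h2]; exact avg_const _

/-- Passing to a sub-family decreases Rademacher averages. -/
lemma rad_comp_inj {e : κ → ι} (he : Function.Injective e) (z : ι → X) :
    rad (fun j => z (e j)) ≤ rad z := by
  classical
  have h : rad (fun j => z (e j)) =
      rad (fun i => (if i ∈ Finset.univ.image e then (1:ℝ) else 0) • z i) := by
    simp only [rad]
    rw [← avg_comp_inj he]
    congr 1; funext ε; congr 2
    simp only [ite_smul, one_smul, zero_smul, smul_ite, smul_zero]
    rw [Finset.sum_ite_mem, Finset.univ_inter, Finset.sum_image he.injOn]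
  rw [h]
  apply rad_contract
  intro i; split_ifs <;> simp

lemma eq_avg_sg_smul_sum (z : ι → X) (i : ι) :
    z i = avg (fun ε : ι → Bool => sg (ε i) • ∑ j, sg (ε j) • z j) := by
  simp only [Finset.smul_sum, smul_smul]
  rw [avg_sum]
  have : ∀ j, avg (fun ε : ι → Bool => (sg (ε i) * sg (ε j)) • z j) =
      (if i = j then (1:ℝ) else 0) • z j := by
    intro j
    rw [← avg_sg_mul_sg]
    exact (map_avg (LinearMap.toSpanSingleton ℝ X (z j))
      (fun ε : ι → Bool => sg (ε i) * sg (ε j))).symm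
  simp [this]

omit [Fintype ι] [DecidableEq ι] in
lemma exists_signs (a : ι → ℝ) : ∃ ε : ι → Bool, ∀ i, sg (ε i) * a i = |a i| :=
  ⟨fun i => (exists_sg_mul (a i)).choose, fun i => (exists_sg_mul (a i)).choose_spec⟩

omit [DecidableEq ι] in
lemma sum_abs_dual_le {z : ι → X} {B : ℝ} (h : ∀ ε : ι → Bool, ‖∑ i, sg (ε i) • z i‖ ≤ B)
    (ψ : X →L[ℝ] ℝ) : ∑ i, |ψ (z i)| ≤ ‖ψ‖ * B := by
  obtain ⟨ε, hε⟩ := exists_signs (fun i => ψ (z i))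
  calc ∑ i, |ψ (z i)| = ψ (∑ i, sg (ε i) • z i) := by simp [← hε]
    _ ≤ ‖ψ (∑ i, sg (ε i) • z i)‖ := le_abs_self _
    _ ≤ ‖ψ‖ * ‖∑ i, sg (ε i) • z i‖ := ψ.le_opNorm _
    _ ≤ _ := by gcongr; exact h ε

omit [DecidableEq ι] in
/-- The norm on a parallelepiped is maximal at a vertex. -/
lemma norm_sum_le_of_signs {z : ι → X} {B c : ℝ} (h : ∀ ε : ι → Bool, ‖∑ i, sg (ε i) • z i‖ ≤ B)
    (t : ι → ℝ) (ht : ∀ i, |t i| ≤ c) (hc : 0 ≤ c) : ‖∑ i, t i • z i‖ ≤ c * B := by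
  obtain ⟨ψ, h1, h2⟩ := exists_dual_vector'' ℝ (∑ i, t i • z i)
  have hB : 0 ≤ B := (norm_nonneg _).trans (h fun _ => true)
  calc ‖∑ i, t i • z i‖ = ψ (∑ i, t i • z i) := h2.symm
    _ = ∑ i, t i * ψ (z i) := by simp
    _ ≤ ∑ i, c * |ψ (z i)| := by
        refine Finset.sum_le_sum fun i _ => ?_
        exact (le_abs_self _).trans (by rw [abs_mul]; gcongr; exact ht i)
    _ = c * ∑ i, |ψ (z i)| := by rw [Finset.mul_sum]
    _ ≤ c * (‖ψ‖ * B) := by gcongr; exact sum_abs_dual_le h ψ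
    _ ≤ c * (1 * B) := by gcongr
    _ = _ := by ring

end

/-- `Q X N a`: any `N` vectors satisfy the cotype-2 inequality with constant `a`. -/
def Q (X : Type*) [NormedAddCommGroup X] [NormedSpace ℝ X] (N : ℕ) (a : ℝ) : Prop :=
  ∀ z : Fin N → X, ∑ i, ‖z i‖ ^ 2 ≤ a * rad z

/-- `X` contains a `4`-isomorphic copy of `ℓ_∞^ι`. -/
def HasLinf (X : Type*) [NormedAddCommGroup X] [NormedSpace ℝ X] (ι : Type*) [Fintype ι] : Prop :=
  ∃ e : ι → X, (∀ (t : ι → ℝ) (c : ℝ), (∀ i, |t i| ≤ c) → 0 ≤ c → ‖∑ i, t i • e i‖ ≤ 2 * c) ∧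
    ∀ (t : ι → ℝ) (i : ι), |t i| ≤ 2 * ‖∑ i, t i • e i‖

section
variable {ι κ : Type*} [Fintype ι] [DecidableEq ι] [Fintype κ] [DecidableEq κ]
variable {X : Type*} [NormedAddCommGroup X] [NormedSpace ℝ X]

omit [DecidableEq ι] [DecidableEq κ] in
lemma HasLinf.equiv (e : ι ≃ κ) (h : HasLinf X κ) : HasLinf X ι := by
  obtain ⟨f, h1, h2⟩ := h
  have key : ∀ t : ι → ℝ, ∑ i, t i • f (e i) = ∑ k, t (e.symm k) • f k := by
    intro t; rw [← e.sum_comp]; simp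
  refine ⟨fun i => f (e i), fun t c ht hc => ?_, fun t i => ?_⟩
  · rw [key]; exact h1 _ c (fun k => ht _) hc
  · rw [key]; simpa using h2 (fun k => t (e.symm k)) (e i)

lemma Q.fintype {N : ℕ} {a : ℝ} (h : Q X N a) (hN : Fintype.card ι = N) (z : ι → X) :
    ∑ i, ‖z i‖ ^ 2 ≤ a * rad z := by
  subst hN
  have e := (Fintype.equivFin ι).symm
  rw [← e.sum_comp, ← rad_equiv e]
  exact h _

lemma Q.of_fintype {N : ℕ} {a : ℝ} (hN : Fintype.card ι = N)
    (h : ∀ z : ι → X, ∑ i, ‖z i‖ ^ 2 ≤ a * rad z) : Q X N a := by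
  subst hN
  intro z
  have e := (Fintype.equivFin ι)
  rw [← e.sum_comp, ← rad_equiv e]
  exact h _

/-- Submultiplicativity: apply the inequality to blocks, and then to the block sums. -/
lemma Q.mul {N M : ℕ} {a b : ℝ} (h1 : Q X N a) (h2 : Q X M b) (ha : 0 ≤ a) (hb : 0 ≤ b) :
    Q X (N * M) (a * b) := by
  apply Q.of_fintype (ι := Fin N × Fin M) (by simp)
  intro z
  let y : (Fin N × Fin M → Bool) → Fin N → X := fun ξ i => ∑ j, sg (ξ (i, j)) • z (i, j)
  have e1 : ∀ i, ∑ j, ‖z (i, j)‖ ^ 2 ≤ b * avg (fun ξ => ‖y ξ i‖ ^ 2) := by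
    intro i
    refine (h2 (fun j => z (i, j))).trans (le_of_eq ?_)
    congr 1
    exact (avg_comp_inj (e := fun j => (i, j)) (Prod.mk_right_injective i)
      (fun δ => ‖∑ j, sg (δ j) • z (i, j)‖ ^ 2)).symm
  have e2 : ∀ ε : Fin N → Bool, avg (fun ξ => ‖∑ i, sg (ε i) • y ξ i‖ ^ 2) = rad z := by
    intro ε
    rw [rad, ← avg_equiv (flipEquiv (fun p : Fin N × Fin M => ε p.1))]
    congr 1; funext ξ; congr 2
    rw [Fintype.sum_prod_type]
    refine Finset.sum_congr rfl fun i _ => ?_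
    simp only [y, Finset.smul_sum, smul_smul]
    refine Finset.sum_congr rfl fun j _ => ?_
    simp only [flipEquiv, Equiv.coe_fn_mk, sg_beq]
    rw [mul_comm, mul_assoc, sg_mul_self, mul_one]
  calc ∑ p, ‖z p‖ ^ 2 = ∑ i, ∑ j, ‖z (i, j)‖ ^ 2 := by rw [Fintype.sum_prod_type]
    _ ≤ ∑ i, b * avg (fun ξ => ‖y ξ i‖ ^ 2) := by gcongr with i; exact e1 i
    _ = b * avg (fun ξ => ∑ i, ‖y ξ i‖ ^ 2) := by rw [avg_sum, Finset.mul_sum]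
    _ ≤ b * avg (fun ξ => a * rad (y ξ)) := by gcongr; exact avg_mono fun ξ => h1 (y ξ)
    _ = b * (a * avg (fun ε : Fin N → Bool => avg (fun ξ => ‖∑ i, sg (ε i) • y ξ i‖ ^ 2))) := by
        rw [avg_mul, avg_comm]; rfl
    _ = a * b * rad z := by simp only [e2, avg_const]; ring

lemma Q.pow {k : ℕ} {a : ℝ} (h : Q X k a) (ha : 0 ≤ a) (m : ℕ) : Q X (k ^ m) (a ^ m) := by
  induction m with
  | zero =>
    apply Q.of_fintype (ι := Unit) (by simp)
    intro z
    have := norm_sq_le_rad z ()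
    simpa using this
  | succ m ih => rw [pow_succ, pow_succ]; exact ih.mul h (by positivity) ha

lemma norm_le_avg_norm (z : ι → X) (i : ι) :
    ‖z i‖ ≤ avg (fun ε : ι → Bool => ‖∑ j, sg (ε j) • z j‖) := by
  calc ‖z i‖ = ‖avg (fun ε : ι → Bool => sg (ε i) • ∑ j, sg (ε j) • z j)‖ := by
        rw [← eq_avg_sg_smul_sum]
    _ ≤ _ := (norm_avg_le _).trans (le_of_eq (by simp [norm_smul]))

/-- The dichotomy: a space without a good copy of `ℓ_∞^k` satisfies a cotype-2 inequality for
`k` vectors with a constant strictly better than the trivial constant `k`. -/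
lemma hasLinf_of_not_Q (k : ℕ) (hk : 1 ≤ k)
    (h : ¬ Q X k (k * (1 - 1 / (16 * k * 2 ^ k)))) : HasLinf X (Fin k) := by
  set η : ℝ := 1 / (16 * k * 2 ^ k) with hη
  have hk0 : (1 : ℝ) ≤ k := by exact_mod_cast hk
  have hηk : 2 ^ k * (k * η) = 1 / 16 := by rw [hη]; field_simp
  have hη0 : 0 < η := by positivity
  have h2k : (1:ℝ) ≤ 2 ^ k := one_le_pow₀ (by norm_num)
  have hkη : k * η ≤ 1 / 16 := by
    rw [← hηk]; exact le_mul_of_one_le_left (by positivity) h2k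
  simp only [Q, not_forall, not_le] at h
  obtain ⟨w, hw⟩ := h
  have hrad : 0 < rad w := by
    rcases (rad_nonneg w).lt_or_eq with h | h
    · exact h
    · exfalso
      rw [← h, mul_zero] at hw
      have : ∑ i, ‖w i‖ ^ 2 ≤ 0 := Finset.sum_nonpos fun i _ => h ▸ norm_sq_le_rad w i
      linarith
  set c := (Real.sqrt (rad w))⁻¹ with hc
  have hc2 : c ^ 2 * rad w = 1 := by
    rw [hc, inv_pow, Real.sq_sqrt hrad.le, inv_mul_cancel₀ hrad.ne']
  have hcpos : 0 < c := by positivity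
  set z : Fin k → X := fun i => c • w i with hz
  have hz1 : rad z = 1 := by rw [hz, rad_smul, hc2]
  have hzs : k * (1 - η) < ∑ i, ‖z i‖ ^ 2 := by
    have : ∑ i, ‖z i‖ ^ 2 = c ^ 2 * ∑ i, ‖w i‖ ^ 2 := by
      simp [hz, norm_smul, mul_pow, Finset.mul_sum]
    rw [this]
    calc k * (1 - η) = c ^ 2 * (k * (1 - η) * rad w) := by linear_combination (-(k * (1 - η))) * hc2
      _ < _ := by gcongr
  have hle : ∀ i, ‖z i‖ ^ 2 ≤ 1 := fun i => hz1 ▸ norm_sq_le_rad z i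
  -- near-equality in `∑ ‖z i‖ ^ 2 ≤ k` forces every `‖z i‖` to be close to `1`
  have hge : ∀ i, 1 - k * η < ‖z i‖ ^ 2 := by
    intro i
    have h1 : ∑ j ∈ Finset.univ.erase i, ‖z j‖ ^ 2 ≤ k - 1 := by
      refine (Finset.sum_le_sum fun j _ => hle j).trans ?_
      rw [Finset.sum_const, Finset.card_erase_of_mem (Finset.mem_univ i)]
      simp [Nat.cast_sub hk]
    have h2 := Finset.add_sum_erase Finset.univ (fun j => ‖z j‖ ^ 2) (Finset.mem_univ i)
    linarith
  set f : (Fin k → Bool) → ℝ := fun ε => ‖∑ j, sg (ε j) • z j‖ with hf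
  set m := avg f with hm
  have hf2 : avg (fun ε => f ε ^ 2) = 1 := hz1
  have hm2 : 1 - k * η < m ^ 2 := by
    refine (hge ⟨0, hk⟩).trans_le ?_
    gcongr; exact norm_le_avg_norm z _
  have hm0 : 0 ≤ m := avg_nonneg fun ε => norm_nonneg _
  have hm1 : m ≤ 1 := by
    have := avg_sq_le f
    rw [hf2] at this
    exact (sq_le_one_iff₀ hm0).1 this
  have hvar : avg (fun ε => (f ε - m) ^ 2) = 1 - m ^ 2 := by
    have : (fun ε => (f ε - m) ^ 2) = fun ε => (f ε ^ 2 - (2 * m) * f ε) + m ^ 2 := by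
      funext ε; ring
    rw [this, avg_add, avg_sub, avg_mul, avg_const, hf2, ← hm]; ring
  -- the average of `(f - m) ^ 2` is tiny compared with the weight `2 ^ (-k)` of a single sign
  -- choice, so that no sign choice deviates much from the mean
  have hup : ∀ ε, f ε ≤ 5 / 4 := by
    intro ε
    have h1 := le_card_mul_avg (f := fun ε => (f ε - m) ^ 2) (fun ε => sq_nonneg _) ε
    rw [hvar] at h1
    simp only [Fintype.card_pi, Fintype.card_bool, Finset.prod_const, Finset.card_univ,
      Fintype.card_fin, Nat.cast_pow, Nat.cast_ofNat] at h1
    have h2 : (f ε - m) ^ 2 ≤ (1 / 4) ^ 2 := by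
      refine h1.trans ?_
      calc (2:ℝ) ^ k * (1 - m ^ 2) ≤ 2 ^ k * (k * η) := by gcongr; linarith
        _ = _ := by rw [hηk]; norm_num
    have := abs_le_of_sq_le_sq' h2 (by norm_num)
    linarith [this.2]
  have hupper : ∀ (t : Fin k → ℝ) (c : ℝ), (∀ i, |t i| ≤ c) → 0 ≤ c →
      ‖∑ i, t i • z i‖ ≤ c * (5 / 4) := fun t c ht hc => norm_sum_le_of_signs hup t ht hc
  refine ⟨z, fun t c ht hc => (hupper t c ht hc).trans (by linarith), fun t i => ?_⟩
  obtain ⟨i₀, -, hi₀⟩ := Finset.exists_max_image Finset.univ (fun i => |t i|) ⟨i, Finset.mem_univ i⟩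
  refine (hi₀ i (Finset.mem_univ i)).trans ?_
  -- flip all coordinates except the largest one
  have h1 : (∑ j, t j • z j) + ∑ j, (if j = i₀ then t j else - t j) • z j = (2 * t i₀) • z i₀ := by
    rw [← Finset.sum_add_distrib, Finset.sum_eq_single i₀]
    · simp [two_mul, add_smul]
    · intro j _ hj; simp [hj]
    · simp
  have h2 : ‖∑ j, (if j = i₀ then t j else - t j) • z j‖ ≤ |t i₀| * (5 / 4) := by
    refine hupper _ _ (fun j => ?_) (abs_nonneg _)
    split_ifs <;> simp [hi₀ j]
  have h3 : 15 / 16 ≤ ‖z i₀‖ := by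
    have := hge i₀
    have h4 := hle i₀
    nlinarith [norm_nonneg (z i₀)]
  have h4 : 2 * |t i₀| * ‖z i₀‖ ≤ ‖∑ j, t j • z j‖ + |t i₀| * (5 / 4) := by
    calc 2 * |t i₀| * ‖z i₀‖ = ‖(2 * t i₀) • z i₀‖ := by simp [norm_smul, abs_mul]
      _ ≤ _ := by rw [← h1]; exact (norm_add_le _ _).trans (by gcongr)
  nlinarith [abs_nonneg (t i₀)]

/-- The layer-cake inequality for powers along a geometric scale. -/
lemma pow_le_layers (a : ℝ) (ha : 0 < a) (p : ℕ) (y : ℝ) (hy0 : 0 ≤ y) (hy : y ≤ 1) (M : ℕ) :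
    y ^ p ≤ (∑ m ∈ range M, if a ^ (m + 1) < y then a ^ (m * p) else 0) + a ^ (M * p) := by
  induction M with
  | zero => simpa using pow_le_one₀ hy0 hy
  | succ M ih =>
    by_cases h : a ^ (M + 1) < y
    · rw [Finset.sum_range_succ, if_pos h]
      have : 0 ≤ a ^ ((M + 1) * p) := by positivity
      linarith
    · have : 0 ≤ ∑ m ∈ range (M + 1), if a ^ (m + 1) < y then a ^ (m * p) else 0 :=
        Finset.sum_nonneg fun m _ => by split_ifs <;> positivity
      have h2 : y ^ p ≤ (a ^ (M + 1)) ^ p := by gcongr; exact not_lt.1 h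
      rw [pow_mul]; linarith

/-- Level sets: fewer than `k ^ m` of the vectors are larger than `a ^ m` relative to the
Rademacher average, as `k ^ m` such vectors would violate the `m`-fold iterate of `Q`. -/
lemma card_lt_of_Q {k : ℕ} (hk : 1 ≤ k) {a : ℝ} (ha : 0 < a) (h : Q X k (k * a)) {n : ℕ}
    (x : Fin n → X) (hr : 0 ≤ rad x) (m : ℕ) :
    (Finset.univ.filter fun i => a ^ m * rad x < ‖x i‖ ^ 2).card < k ^ m := by
  by_contra hc
  rw [not_lt] at hc
  obtain ⟨s, hs, hcard⟩ := Finset.exists_subset_card_eq hc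
  have h1 := (h.pow (by positivity) m).fintype (ι := s) (by simpa using hcard) (fun i => x i)
  have h2 : rad (fun i : s => x i) ≤ rad x := rad_comp_inj Subtype.val_injective x
  have h3 : ∑ i : s, a ^ m * rad x < ∑ i : s, ‖x i‖ ^ 2 := by
    apply Finset.sum_lt_sum_of_nonempty
    · have : 0 < s.card := by rw [hcard]; positivity
      obtain ⟨i, hi⟩ := Finset.card_pos.1 this
      exact ⟨⟨i, hi⟩, Finset.mem_univ _⟩
    · intro i _
      exact (Finset.mem_filter.1 (hs i.2)).2
  simp only [Finset.sum_const, Finset.card_univ, Fintype.card_coe, hcard, nsmul_eq_mul] at h3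
  have h4 : (k * a) ^ m * rad (fun i : s => x i) ≤ (k * a) ^ m * rad x := by gcongr
  rw [mul_pow] at h1 h4
  push_cast at h3
  nlinarith

/-- A cotype-2 inequality for `k` vectors with a non-trivial constant yields finite cotype. -/
lemma cotype_of_Q {k : ℕ} (hk : 1 ≤ k) {a : ℝ} (ha : 0 < a) (ha1 : a < 1) (h : Q X k (k * a)) :
    ∃ q, 2 ≤ q ∧ HasCotype X q := by
  have hk0 : (1 : ℝ) ≤ k := by exact_mod_cast hk
  -- the exponent `q = 2 (p + 1)` is large enough for the level sets, of size `k ^ m` at height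
  -- `a ^ m`, to be summed as a geometric series
  obtain ⟨p, hp⟩ : ∃ p : ℕ, k * a ^ (p + 1) ≤ 1 / 2 := by
    obtain ⟨p, hp⟩ := exists_pow_lt_of_lt_one (y := a) (x := (1 / (2 * k) : ℝ)) (by positivity) ha1
    refine ⟨p, ?_⟩
    have : a ^ (p + 1) ≤ a ^ p := pow_le_pow_of_le_one ha.le ha1.le (by omega)
    calc k * a ^ (p + 1) ≤ k * (1 / (2 * k)) := by gcongr; linarith
      _ = 1 / 2 := by field_simp
  have key : ∀ (n : ℕ) (x : Fin n → X),
      ∑ i, (‖x i‖ ^ 2) ^ (p + 1) ≤ (2 * k + 1) * rad x ^ (p + 1) := by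
    intro n x
    rcases (rad_nonneg x).lt_or_eq with hr | hr
    · set y : Fin n → ℝ := fun i => ‖x i‖ ^ 2 / rad x with hy
      have hy1 : ∀ i, y i ≤ 1 := fun i => (div_le_one hr).2 (norm_sq_le_rad x i)
      have hy0 : ∀ i, 0 ≤ y i := fun i => by positivity
      have hcount : ∀ m, ((Finset.univ.filter fun i => a ^ m < y i).card : ℝ) ≤ (k : ℝ) ^ m := by
        intro m
        have := card_lt_of_Q hk ha h x hr.le m
        simp only [hy, lt_div_iff₀ hr]
        exact_mod_cast this.le
      have hpow : ∀ m, (k : ℝ) ^ m * a ^ (m * (p + 1)) ≤ (1 / 2) ^ m := by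
        intro m; rw [mul_comm m, pow_mul, ← mul_pow]; gcongr
      have hsum : ∑ i, y i ^ (p + 1) ≤ 2 * k + 1 := by
        calc ∑ i, y i ^ (p + 1) ≤ ∑ i, ((∑ m ∈ range n, if a ^ (m + 1) < y i then a ^ (m * (p + 1))
                else 0) + a ^ (n * (p + 1))) := by
              gcongr with i; exact pow_le_layers a ha (p + 1) (y i) (hy0 i) (hy1 i) n
          _ = (∑ m ∈ range n, ((Finset.univ.filter fun i => a ^ (m + 1) < y i).card : ℝ) *
                a ^ (m * (p + 1))) + n * a ^ (n * (p + 1)) := by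
              rw [Finset.sum_add_distrib, Finset.sum_comm]
              simp [← Finset.sum_filter]
          _ ≤ (∑ m ∈ range n, (k : ℝ) ^ (m + 1) * a ^ (m * (p + 1))) + 2 ^ n * (1 / 2) ^ n := by
              gcongr with m
              · exact hcount (m + 1)
              · exact_mod_cast Nat.lt_two_pow_self.le
              · exact (le_mul_of_one_le_left (by positivity) (one_le_pow₀ hk0)).trans (hpow n)
          _ ≤ (∑ m ∈ range n, k * (1 / 2 : ℝ) ^ m) + 1 := by
              refine add_le_add (Finset.sum_le_sum fun m _ => ?_) ?_
              · rw [pow_succ', mul_assoc]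
                exact mul_le_mul_of_nonneg_left (hpow m) (by positivity)
              · rw [← mul_pow]; norm_num
          _ ≤ _ := by
              rw [← Finset.mul_sum]
              have : ∑ m ∈ range n, (1 / 2 : ℝ) ^ m ≤ 2 := sum_geometric_two_le n
              nlinarith
      have : ∑ i, (‖x i‖ ^ 2) ^ (p + 1) = (∑ i, y i ^ (p + 1)) * rad x ^ (p + 1) := by
        rw [Finset.sum_mul]
        refine Finset.sum_congr rfl fun i _ => ?_
        rw [← mul_pow, hy]; simp only; rw [div_mul_cancel₀ _ hr.ne']
      rw [this]; gcongr
    · have : ∀ i, ‖x i‖ ^ 2 = 0 := fun i =>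
        le_antisymm (hr ▸ norm_sq_le_rad x i) (by positivity)
      simp [this, ← hr]
  set q : ℝ := 2 * (p + 1 : ℕ) with hq
  have hp1 : (1:ℝ) ≤ ((p + 1 : ℕ) : ℝ) := by exact_mod_cast Nat.succ_pos p
  have hq2 : 2 ≤ q := by rw [hq]; linarith
  refine ⟨q, hq2, (2 * k + 1) ^ (1 / q), by positivity, fun n x => ?_⟩
  have hrad : ((2 : ℝ) ^ n)⁻¹ * ∑ ε : Fin n → Bool, ‖∑ i, (if ε i then (1:ℝ) else -1) • x i‖ ^ 2 =
      rad x := by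
    simp [rad, avg, sg]
  rw [hrad]
  have e1 : ∀ i, ‖x i‖ ^ q = (‖x i‖ ^ 2) ^ (p + 1) := by
    intro i
    rw [hq, ← pow_mul]
    rw [← Real.rpow_natCast]; push_cast; rfl
  simp only [e1]
  have e2 : (rad x) ^ (1 / 2 : ℝ) = (rad x ^ (p + 1)) ^ (1 / q) := by
    rw [← Real.rpow_natCast (rad x), ← Real.rpow_mul (rad_nonneg x)]
    congr 1
    rw [hq]; field_simp
  rw [e2, ← Real.mul_rpow (by positivity) (pow_nonneg (rad_nonneg x) _)]
  exact Real.rpow_le_rpow (Finset.sum_nonneg fun i _ => by positivity) (key n x) (by positivity)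

end

end GPair

/-! ### From failure of cotype to the star inequality -/

namespace GPair

open Finset

section
variable {ι : Type*} [Fintype ι] [DecidableEq ι]
variable {X : Type*} [NormedAddCommGroup X] [NormedSpace ℝ X]

/-- Functionals biorthogonal to a family dominating the `ℓ_∞` norm (Hahn–Banach). -/
lemma exists_biorth (e : ι → X) (h : ∀ (t : ι → ℝ) (i : ι), |t i| ≤ 2 * ‖∑ i, t i • e i‖) :
    ∃ g : ι → (X →L[ℝ] ℝ), (∀ i j, g i (e j) = if i = j then 1 else 0) ∧ ∀ i, ‖g i‖ ≤ 2 := by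
  have hli : LinearIndependent ℝ e := by
    rw [Fintype.linearIndependent_iff]
    intro t ht i
    have := h t i
    rw [ht, norm_zero, mul_zero] at this
    exact abs_eq_zero.1 (le_antisymm this (abs_nonneg _))
  let B := Module.Basis.span hli
  have hB : ∀ j, ((B j : Submodule.span ℝ (Set.range e)) : X) = e j := fun j =>
    congrArg Subtype.val (Module.Basis.span_apply hli j)
  have hb : ∀ i (x : Submodule.span ℝ (Set.range e)), ‖B.coord i x‖ ≤ 2 * ‖x‖ := by
    intro i x
    have h1 : (x : X) = ∑ j, B.repr x j • e j := by
      have := congrArg Subtype.val (B.sum_repr x)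
      simp only [Submodule.coe_sum, Submodule.coe_smul, hB] at this
      exact this.symm
    have := h (fun j => B.repr x j) i
    rw [← h1] at this
    simpa using this
  have : ∀ i, ∃ g : X →L[ℝ] ℝ, (∀ x : Submodule.span ℝ (Set.range e), g x = B.coord i x) ∧
      ‖g‖ ≤ 2 := by
    intro i
    obtain ⟨g, hg1, hg2⟩ := exists_extension_norm_eq _ ((B.coord i).mkContinuous 2 (hb i))
    exact ⟨g, fun x => by rw [hg1]; rfl,
      hg2.le.trans (LinearMap.mkContinuous_norm_le _ (by norm_num) _)⟩
  choose g hg1 hg2 using this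
  refine ⟨g, fun i j => ?_, hg2⟩
  rw [← hB, hg1]
  simp [Finsupp.single_apply, eq_comm]

omit [Fintype ι] [DecidableEq ι] in
/-- A functional that stays below `T` on the open ball of radius `4` has norm at most `T / 4`. -/
lemma opNorm_le_of_lt {L : X →L[ℝ] ℝ} {T : ℝ} (hT : 0 < T) (h : ∀ x, ‖x‖ < 4 → L x < T) :
    ‖L‖ ≤ T / 4 := by
  have key : ∀ x, L x ≤ T / 4 * ‖x‖ := by
    intro x
    by_contra hcon
    rw [not_le] at hcon
    have hpos : 0 < L x := lt_of_le_of_lt (by positivity) hcon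
    have := h ((T / L x) • x) (by
      rw [norm_smul, Real.norm_of_nonneg (by positivity), div_mul_eq_mul_div, div_lt_iff₀ hpos]
      linarith)
    rw [map_smul, smul_eq_mul, div_mul_cancel₀ _ hpos.ne'] at this
    exact lt_irrefl _ this
  refine L.opNorm_le_bound (by positivity) fun x => ?_
  rw [Real.norm_eq_abs, abs_le]
  have := key (-x)
  rw [map_neg, norm_neg] at this
  exact ⟨by linarith, key x⟩

/-- Vectors biorthogonal to a family of functionals dominating the `ℓ_∞` norm (Helly). -/
lemma exists_helly (g : ι → (X →L[ℝ] ℝ))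
    (h : ∀ (t : ι → ℝ) (i : ι), |t i| ≤ 2 * ‖∑ i, t i • g i‖) :
    ∃ f : ι → X, (∀ i j, g i (f j) = if i = j then 1 else 0) ∧ ∀ i, ‖f i‖ ≤ 4 := by
  let G : X →L[ℝ] (ι → ℝ) := ContinuousLinearMap.pi g
  have hφ : ∀ (φ : (ι → ℝ) →ₗ[ℝ] ℝ) (x : X),
      φ (G x) = (∑ i, φ (Pi.single i 1) • g i) x := by
    intro φ x
    rw [LinearMap.pi_apply_eq_sum_univ φ]
    simp only [_root_.sum_apply, _root_.smul_apply, smul_eq_mul]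
    refine Finset.sum_congr rfl fun i _ => ?_
    rw [mul_comm]
    congr 2
    funext j
    simp [Pi.single_apply, eq_comm]
  have hsurj : Function.Surjective G := by
    have : LinearMap.range (G : X →ₗ[ℝ] (ι → ℝ)) = ⊤ := by
      by_contra hne
      obtain ⟨φ, hφ0, hφ1⟩ := Submodule.exists_le_ker_of_lt_top _ (lt_top_iff_ne_top.2 hne)
      apply hφ0
      have hz : (∑ i, φ (Pi.single i 1) • g i) = 0 := by
        ext x
        rw [← hφ]
        exact hφ1 ⟨x, rfl⟩
      refine LinearMap.pi_ext' fun i => LinearMap.ext_ring ?_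
      have := h (fun i => φ (Pi.single i 1)) i
      rw [hz, norm_zero, mul_zero] at this
      simpa using abs_eq_zero.1 (le_antisymm this (abs_nonneg _))
    exact LinearMap.range_eq_top.1 this
  have hopen : IsOpenMap G := G.isOpenMap_of_finiteDimensional hsurj
  have : ∀ i, ∃ x : X, G x = Pi.single i 1 ∧ ‖x‖ ≤ 4 := by
    intro i
    by_contra hcon
    push Not at hcon
    have hS : Pi.single i 1 ∉ G '' Metric.ball 0 4 := by
      rintro ⟨x, hx, hx'⟩
      have := hcon x hx'
      rw [mem_ball_zero_iff] at hx
      linarith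
    obtain ⟨φ, hφ1⟩ := geometric_hahn_banach_open_point
      ((convex_ball (0 : X) 4).linear_image (G : X →ₗ[ℝ] (ι → ℝ)))
      (hopen _ Metric.isOpen_ball) hS
    set T := φ (Pi.single i 1) with hT
    have h0 : 0 < T := by
      have := hφ1 0 ⟨0, by simp, by simp⟩
      simpa using this
    have h1 : ∀ x : X, ‖x‖ < 4 → (∑ i, φ (Pi.single i 1) • g i) x < T := by
      intro x hx
      have := hφ1 (G x) ⟨x, by simpa using hx, rfl⟩
      rwa [← ContinuousLinearMap.coe_coe, hφ] at this
    have h2 : ‖∑ i, φ (Pi.single i 1) • g i‖ ≤ T / 4 := by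
      exact opNorm_le_of_lt h0 h1
    have h3 := h (fun i => φ (Pi.single i 1)) i
    simp only [← hT, abs_of_pos h0] at h3
    linarith
  choose f hf1 hf2 using this
  refine ⟨f, fun i j => ?_, hf2⟩
  have := congrFun (hf1 j) i
  simpa [G, Pi.single_apply] using this
end

section
variable {E F : Type*} [NormedAddCommGroup E] [NormedSpace ℝ E] [FiniteDimensional ℝ E]
  [NormedAddCommGroup F] [NormedSpace ℝ F]

/-- Lower bounds for the projective norm by duality. -/
lemma le_projNorm {ι : Type*} [Fintype ι] (v : E →L[ℝ] F) (x : ι → E) (g : ι → (F →L[ℝ] ℝ))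
    {K : ℝ} (hK : 0 ≤ K) (h : ∀ (η : E →L[ℝ] ℝ) (f : F), ∑ i, η (x i) * g i f ≤ K * (‖η‖ * ‖f‖)) :
    ∑ i, g i (v (x i)) ≤ K * projNorm v := by
  have hb : ∀ r ∈ { r : ℝ | ∃ (k : ℕ) (η : Fin k → (E →L[ℝ] ℝ)) (f : Fin k → F),
      (∀ x, v x = ∑ i, η i x • f i) ∧ r = ∑ i, ‖η i‖ * ‖f i‖ }, ∑ i, g i (v (x i)) ≤ K * r := by
    rintro r ⟨k, η, f, h1, rfl⟩
    simp only [h1, map_sum, map_smul, smul_eq_mul]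
    rw [Finset.sum_comm, Finset.mul_sum]
    gcongr with j
    exact h (η j) (f j)
  have hne : { r : ℝ | ∃ (k : ℕ) (η : Fin k → (E →L[ℝ] ℝ)) (f : Fin k → F),
      (∀ x, v x = ∑ i, η i x • f i) ∧ r = ∑ i, ‖η i‖ * ‖f i‖ }.Nonempty := by
    let B := Module.finBasis ℝ E
    refine ⟨_, _, fun i => LinearMap.toContinuousLinearMap (B.coord i), fun i => v (B i),
      fun y => ?_, rfl⟩
    have := congrArg v (B.sum_repr y)
    simp only [map_sum, map_smul] at this
    simpa using this.symm
  rcases hK.eq_or_lt with h0 | h0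
  · obtain ⟨r, hr⟩ := hne
    have := hb r hr
    rw [← h0] at this ⊢
    linarith
  · rw [mul_comm, ← div_le_iff₀ h0]
    refine le_csInf hne fun r hr => ?_
    rw [div_le_iff₀ h0, mul_comm]
    exact hb r hr

/-- A Grothendieck-type inequality on `E` pairing weakly summable with bounded families. -/
def Star (E : Type*) [NormedAddCommGroup E] [NormedSpace ℝ E] (C : ℝ) : Prop :=
  ∀ (N : ℕ) (A : E →L[ℝ] (E →L[ℝ] ℝ)) (x y : Fin N → E) (a b : ℝ), 0 ≤ a → 0 ≤ b →
    (∀ ψ : E →L[ℝ] ℝ, ∑ i, |ψ (x i)| ≤ a * ‖ψ‖) → (∀ i, ‖y i‖ ≤ b) →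
    ∑ i, A (x i) (y i) ≤ C * ‖A‖ * a * b

omit [FiniteDimensional ℝ E] in
lemma Star.fintype {C : ℝ} (h : Star E C) {ι : Type*} [Fintype ι]
    (A : E →L[ℝ] (E →L[ℝ] ℝ)) (x y : ι → E) {a b : ℝ} (ha : 0 ≤ a) (hb : 0 ≤ b)
    (hx : ∀ ψ : E →L[ℝ] ℝ, ∑ i, |ψ (x i)| ≤ a * ‖ψ‖) (hy : ∀ i, ‖y i‖ ≤ b) :
    ∑ i, A (x i) (y i) ≤ C * ‖A‖ * a * b := by
  have e := (Fintype.equivFin ι).symm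
  rw [← e.sum_comp]
  refine h _ A _ _ a b ha hb (fun ψ => ?_) (fun i => hy _)
  rw [e.sum_comp (fun i => |ψ (x i)|)]
  exact hx ψ

/-- `ℓ_∞^k ⊆ F` uniformly: test the tensors `∑ y_i ⊗ f_i`. -/
lemma star_of_linf {C : ℝ} (hC : 0 < C) (hGP : ∀ (A : E →L[ℝ] (E →L[ℝ] ℝ))
      (u : (E →L[ℝ] ℝ) →L[ℝ] F), projNorm (u.comp A.flip) ≤ C * ‖A‖ * ‖u‖)
    (hF : ∀ k : ℕ, HasLinf F (Fin k)) : Star E (8 * C) := by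
  intro N A x y a b ha hb hx hy
  obtain ⟨e, he1, he2⟩ := hF N
  obtain ⟨g, hg1, hg2⟩ := exists_biorth e he2
  -- `u` encodes `∑ y_i ⊗ e_i`; the biorthogonal functionals `g i` recover the `y_i`
  let u : (E →L[ℝ] ℝ) →L[ℝ] F :=
    ∑ i, (ContinuousLinearMap.apply ℝ ℝ (y i)).smulRight (e i)
  have hu : ∀ ψ, u ψ = ∑ i, ψ (y i) • e i := by intro ψ; simp [u]
  have hun : ‖u‖ ≤ 2 * b := by
    refine u.opNorm_le_bound (by positivity) fun ψ => ?_
    rw [hu, mul_assoc]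
    refine he1 _ _ (fun i => ?_) (by positivity)
    calc |ψ (y i)| ≤ ‖ψ‖ * ‖y i‖ := ψ.le_opNorm _
      _ ≤ b * ‖ψ‖ := by rw [mul_comm]; gcongr; exact hy i
  have h1 := le_projNorm (u.comp A.flip.flip) x g (K := 2 * a) (by positivity) (fun η f => by
    calc ∑ i, η (x i) * g i f ≤ ∑ i, |η (x i)| * (2 * ‖f‖) := by
          refine Finset.sum_le_sum fun i _ => (le_abs_self _).trans ?_
          rw [abs_mul]
          gcongr
          exact ((g i).le_opNorm f).trans (by gcongr; exact hg2 i)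
      _ = (∑ i, |η (x i)|) * (2 * ‖f‖) := by rw [Finset.sum_mul]
      _ ≤ (a * ‖η‖) * (2 * ‖f‖) := by gcongr; exact hx η
      _ = _ := by ring)
  have h2 : ∑ i, g i ((u.comp A.flip.flip) (x i)) = ∑ i, A (x i) (y i) := by
    simp [hu, hg1]
  have h3 := hGP A.flip u
  rw [ContinuousLinearMap.opNorm_flip] at h3
  rw [h2] at h1
  calc _ ≤ 2 * a * (C * ‖A‖ * ‖u‖) := h1.trans (by gcongr)
    _ ≤ 2 * a * (C * ‖A‖ * (2 * b)) := by gcongr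
    _ = 4 * (C * ‖A‖ * a * b) := by ring
    _ ≤ 8 * (C * ‖A‖ * a * b) := by gcongr; norm_num
    _ = _ := by ring

/-- `ℓ_∞^k ⊆ F*` uniformly: test the tensors `∑ x_i ⊗ f_i`, where `f_i` spans a copy of
`ℓ_1^k`. -/
lemma star_of_dual_linf {C : ℝ} (hC : 0 < C) (hGP : ∀ (A : E →L[ℝ] (E →L[ℝ] ℝ))
      (u : (E →L[ℝ] ℝ) →L[ℝ] F), projNorm (u.comp A.flip) ≤ C * ‖A‖ * ‖u‖)
    (hF : ∀ k : ℕ, HasLinf (F →L[ℝ] ℝ) (Fin k)) : Star E (8 * C) := by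
  intro N A x y a b ha hb hx hy
  obtain ⟨g, hg1, hg2⟩ := hF N
  obtain ⟨e, he1, he2⟩ := exists_helly g hg2
  -- `u` encodes `∑ x_i ⊗ e_i`, with `e` biorthogonal to the functionals `g i`
  let u : (E →L[ℝ] ℝ) →L[ℝ] F :=
    ∑ i, (ContinuousLinearMap.apply ℝ ℝ (x i)).smulRight (e i)
  have hu : ∀ ψ, u ψ = ∑ i, ψ (x i) • e i := by intro ψ; simp [u]
  have hun : ‖u‖ ≤ 4 * a := by
    refine u.opNorm_le_bound (by positivity) fun ψ => ?_
    rw [hu]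
    calc ‖∑ i, ψ (x i) • e i‖ ≤ ∑ i, |ψ (x i)| * 4 := by
          refine (norm_sum_le _ _).trans (Finset.sum_le_sum fun i _ => ?_)
          rw [norm_smul, Real.norm_eq_abs]; gcongr; exact he2 i
      _ = (∑ i, |ψ (x i)|) * 4 := by rw [Finset.sum_mul]
      _ ≤ (a * ‖ψ‖) * 4 := by gcongr; exact hx ψ
      _ = _ := by ring
  have h1 := le_projNorm (u.comp A.flip) y g (K := 2 * b) (by positivity) (fun η f => by
    have h : ‖∑ i, η (y i) • g i‖ ≤ 2 * (b * ‖η‖) := by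
      refine hg1 _ _ (fun i => ?_) (by positivity)
      calc |η (y i)| ≤ ‖η‖ * ‖y i‖ := η.le_opNorm _
        _ ≤ b * ‖η‖ := by rw [mul_comm]; gcongr; exact hy i
    calc ∑ i, η (y i) * g i f = (∑ i, η (y i) • g i) f := by simp
      _ ≤ ‖(∑ i, η (y i) • g i)‖ * ‖f‖ := (Real.le_norm_self _).trans (ContinuousLinearMap.le_opNorm _ _)
      _ ≤ 2 * (b * ‖η‖) * ‖f‖ := by gcongr
      _ = _ := by ring)
  have h2 : ∑ i, g i ((u.comp A.flip) (y i)) = ∑ i, A (x i) (y i) := by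
    simp [hu, he1]
  rw [h2] at h1
  calc _ ≤ 2 * b * (C * ‖A‖ * ‖u‖) := h1.trans (by gcongr; exact hGP A u)
    _ ≤ 2 * b * (C * ‖A‖ * (4 * a)) := by gcongr
    _ = _ := by ring

/-- `L₁`–`L₂` comparison for scalar Rademacher sums. -/
lemma sum_abs_sg_le {m : ℕ} (t : Fin m → ℝ) {T : ℝ} (hT : 0 ≤ T) (ht : ∀ i, |t i| ≤ T) :
    ∑ b : Fin m → Bool, |∑ i, sg (b i) * t i| ≤ 2 ^ m * (Real.sqrt m * T) := by
  have h1 : avg (fun b : Fin m → Bool => |∑ i, sg (b i) * t i|) ≤ Real.sqrt m * T := by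
    refine (abs_le_of_sq_le_sq' ?_ (by positivity)).2
    refine (avg_sq_le _).trans ?_
    have := avg_sum_sg_sq t
    simp only [sq_abs, mul_comm (sg _)]
    rw [this, mul_pow, Real.sq_sqrt (by positivity)]
    calc ∑ i, t i ^ 2 ≤ ∑ i : Fin m, T ^ 2 := by
          refine Finset.sum_le_sum fun i _ => ?_
          rw [← sq_abs]; gcongr; exact ht i
      _ = _ := by simp
  simp only [avg, smul_eq_mul] at h1
  simp only [Fintype.card_pi, Fintype.card_bool, Finset.prod_const, Finset.card_univ,
      Fintype.card_fin, Nat.cast_pow, Nat.cast_ofNat] at h1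
  rwa [inv_mul_le_iff₀ (by positivity)] at h1

end

section
variable {E : Type*} [NormedAddCommGroup E] [NormedSpace ℝ E]

/-- The bilinear form `∑_{b,i} b_i g_i(x) g_b(y)`. -/
noncomputable def signForm {m : ℕ} (g : Fin m ⊕ (Fin m → Bool) → (E →L[ℝ] ℝ)) :
    E →L[ℝ] (E →L[ℝ] ℝ) :=
  ∑ b : Fin m → Bool, (∑ i, sg (b i) • g (Sum.inl i)).smulRight (g (Sum.inr b))

lemma signForm_apply {m : ℕ} (g : Fin m ⊕ (Fin m → Bool) → (E →L[ℝ] ℝ)) (x y : E) :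
    signForm g x y = ∑ b : Fin m → Bool, (∑ i, sg (b i) * g (Sum.inl i) x) * g (Sum.inr b) y := by
  simp [signForm]

lemma le_of_sqrt_bound {m : ℕ} {C : ℝ} (h : (m : ℝ) * 2 ^ m ≤ C * (2 ^ m * Real.sqrt m)) :
    (m : ℝ) ≤ C ^ 2 := by
  have h1 : (m:ℝ) ≤ C * Real.sqrt m := by
    have : (0:ℝ) < 2 ^ m := by positivity
    nlinarith
  rcases Nat.eq_zero_or_pos m with h0 | h0
  · subst h0; simpa using sq_nonneg C
  · have hs : 0 < Real.sqrt m := Real.sqrt_pos.2 (by exact_mod_cast h0)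
    have h2 : Real.sqrt m ≤ C := by
      have := Real.mul_self_sqrt (Nat.cast_nonneg (α := ℝ) m)
      nlinarith
    calc (m:ℝ) = Real.sqrt m ^ 2 := (Real.sq_sqrt (Nat.cast_nonneg _)).symm
      _ ≤ C ^ 2 := by gcongr

/-- The star inequality excludes large `ℓ_∞` copies. On `ℓ_∞^m ⊕ ℓ_∞^(2^m)`, the form
`∑ b_i s_i t_b` has norm of order `2^m √m` by Khintchine, while the unit vectors are weakly
summable and the sign sums bounded, with total value `m 2^m`. -/
lemma star_linf {C : ℝ} (hC : 0 ≤ C) (hS : Star E C) {m : ℕ}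
    (h : HasLinf E (Fin m ⊕ (Fin m → Bool))) : (m : ℝ) ≤ (64 * C) ^ 2 := by
  obtain ⟨e, he1, he2⟩ := h
  obtain ⟨g, hg1, hg2⟩ := exists_biorth e he2
  have hA : ‖signForm g‖ ≤ 4 * (2 ^ m * Real.sqrt m) := by
    refine ContinuousLinearMap.opNorm_le_bound₂ _ (by positivity) fun x y => ?_
    rw [signForm_apply]
    have hb : ∀ j z, |g j z| ≤ 2 * ‖z‖ := fun j z =>
      ((g j).le_opNorm z).trans (by gcongr; exact hg2 j)
    calc _ ≤ ∑ b : Fin m → Bool, |∑ i, sg (b i) * g (Sum.inl i) x| * (2 * ‖y‖) := by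
          refine (norm_sum_le _ _).trans (Finset.sum_le_sum fun b _ => ?_)
          rw [Real.norm_eq_abs, abs_mul]; gcongr; exact hb _ _
      _ = (∑ b : Fin m → Bool, |∑ i, sg (b i) * g (Sum.inl i) x|) * (2 * ‖y‖) := by
          rw [Finset.sum_mul]
      _ ≤ (2 ^ m * (Real.sqrt m * (2 * ‖x‖))) * (2 * ‖y‖) := by
          gcongr
          exact sum_abs_sg_le _ (by positivity) (fun i => hb _ _)
      _ = _ := by ring
  have h1 := hS m (signForm g) (fun i => e (Sum.inl i))
    (fun i => ∑ b : Fin m → Bool, sg (b i) • e (Sum.inr b)) 2 2 (by norm_num) (by norm_num)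
    (fun ψ => by
      rw [mul_comm]
      refine sum_abs_dual_le (fun ε => ?_) ψ
      have := he1 (Sum.elim (fun i => sg (ε i)) (fun _ => 0)) 1 (by rintro (i | b) <;> simp)
        (by norm_num)
      simpa [Fintype.sum_sum_type] using this)
    (fun i => by
      have := he1 (Sum.elim (fun _ => 0) (fun b => sg (b i))) 1 (by rintro (i | b) <;> simp)
        (by norm_num)
      simpa [Fintype.sum_sum_type] using this)
  have h2 : ∑ i : Fin m, signForm g (e (Sum.inl i)) (∑ b : Fin m → Bool, sg (b i) • e (Sum.inr b)) =
      m * 2 ^ m := by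
    simp [signForm_apply, hg1]
  rw [h2] at h1
  apply le_of_sqrt_bound
  calc (m : ℝ) * 2 ^ m ≤ C * ‖signForm g‖ * 2 * 2 := h1
    _ ≤ C * (4 * (2 ^ m * Real.sqrt m)) * 2 * 2 := by gcongr
    _ = 16 * (C * (2 ^ m * Real.sqrt m)) := by ring
    _ ≤ 64 * (C * (2 ^ m * Real.sqrt m)) := by gcongr; norm_num
    _ = _ := by ring

/-- The dual version: the sign form on a copy of `ℓ_∞` in the dual is tested against the
biorthogonal vectors, which span `ℓ_1`; here the sign form is bounded by `4`, and the weak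
`ℓ₁`-norm of the sign sums is of order `2^m √m`. -/
lemma star_dual_linf {C : ℝ} (hC : 0 ≤ C) (hS : Star E C) {m : ℕ}
    (h : HasLinf (E →L[ℝ] ℝ) (Fin m ⊕ (Fin m → Bool))) : (m : ℝ) ≤ (64 * C) ^ 2 := by
  obtain ⟨g, hg1, hg2⟩ := h
  obtain ⟨e, he1, he2⟩ := exists_helly g hg2
  have hl : ∀ b : Fin m → Bool, ‖∑ i, sg (b i) • g (Sum.inl i)‖ ≤ 2 := by
    intro b
    have := hg1 (Sum.elim (fun i => sg (b i)) (fun _ => 0)) 1 (by rintro (i | b) <;> simp)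
        (by norm_num)
    simpa [Fintype.sum_sum_type] using this
  have hr : ∀ y : E, ∑ b, |g (Sum.inr b) y| ≤ 2 * ‖y‖ := by
    intro y
    obtain ⟨ε, hε⟩ := exists_signs (fun b : Fin m → Bool => g (Sum.inr b) y)
    have := hg1 (Sum.elim (fun i => 0) (fun b => sg (ε b))) 1 (by rintro (i | b) <;> simp)
        (by norm_num)
    calc ∑ b, |g (Sum.inr b) y| = (∑ b, sg (ε b) • g (Sum.inr b)) y := by simp [← hε]
      _ ≤ ‖∑ b, sg (ε b) • g (Sum.inr b)‖ * ‖y‖ :=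
        (Real.le_norm_self _).trans (ContinuousLinearMap.le_opNorm _ _)
      _ ≤ 2 * ‖y‖ := by gcongr; simpa [Fintype.sum_sum_type] using this
  have hA : ‖signForm g‖ ≤ 4 := by
    refine ContinuousLinearMap.opNorm_le_bound₂ _ (by positivity) fun x y => ?_
    rw [signForm_apply]
    calc _ ≤ ∑ b : Fin m → Bool, (2 * ‖x‖) * |g (Sum.inr b) y| := by
          refine (norm_sum_le _ _).trans (Finset.sum_le_sum fun b _ => ?_)
          rw [Real.norm_eq_abs, abs_mul]; gcongr
          have := (∑ i, sg (b i) • g (Sum.inl i)).le_opNorm x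
          simp only [_root_.sum_apply, _root_.smul_apply,
            smul_eq_mul] at this
          exact this.trans (by gcongr; exact hl b)
      _ = (2 * ‖x‖) * ∑ b, |g (Sum.inr b) y| := by rw [Finset.mul_sum]
      _ ≤ (2 * ‖x‖) * (2 * ‖y‖) := by gcongr; exact hr y
      _ = _ := by ring
  have h1 := hS.fintype (signForm g) (fun b : Fin m → Bool => ∑ i, sg (b i) • e (Sum.inl i))
    (fun b => e (Sum.inr b)) (a := 4 * (2 ^ m * Real.sqrt m)) (b := 4) (by positivity) (by norm_num)
    (fun ψ => by
      have := sum_abs_sg_le (fun i => ψ (e (Sum.inl i))) (T := ‖ψ‖ * 4) (by positivity)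
        (fun i => (ψ.le_opNorm _).trans (by gcongr; exact he2 _))
      simp only [map_sum, map_smul, smul_eq_mul]
      refine this.trans (le_of_eq (by ring)))
    (fun b => he2 _)
  have h2 : ∑ b : Fin m → Bool, signForm g (∑ i, sg (b i) • e (Sum.inl i)) (e (Sum.inr b)) =
      m * 2 ^ m := by
    simp [signForm_apply, he1, mul_comm]
  rw [h2] at h1
  apply le_of_sqrt_bound
  calc (m : ℝ) * 2 ^ m ≤ C * ‖signForm g‖ * (4 * (2 ^ m * Real.sqrt m)) * 4 := h1
    _ ≤ C * 4 * (4 * (2 ^ m * Real.sqrt m)) * 4 := by gcongr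
    _ = _ := by ring

/-- A space satisfying the inequality and its dual both have a non-trivial cotype-2 inequality,
with constants depending only on `C`. -/
lemma exists_Q_of_star (C : ℝ) (hC : 0 ≤ C) : ∃ (k : ℕ) (a : ℝ), 2 ≤ k ∧ 0 < a ∧ a < 1 ∧
    ∀ (E : Type*) [NormedAddCommGroup E] [NormedSpace ℝ E], Star E C →
      Q E k (k * a) ∧ Q (E →L[ℝ] ℝ) k (k * a) := by
  obtain ⟨m, hm⟩ := exists_nat_gt ((64 * C) ^ 2)
  have hcard : Fintype.card (Fin m ⊕ (Fin m → Bool)) = m + 2 ^ m := by simp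
  have hm1 : 1 ≤ m := by
    have : (0:ℝ) < m := lt_of_le_of_lt (sq_nonneg _) hm
    exact_mod_cast this
  set k := m + 2 ^ m with hk
  have hk2 : 2 ≤ k := by
    have : 0 < 2 ^ m := by positivity
    omega
  have hkr : (1:ℝ) ≤ k := by exact_mod_cast (by omega : 1 ≤ k)
  have h2k : (1:ℝ) ≤ 2 ^ k := one_le_pow₀ (by norm_num)
  have hpos : (0:ℝ) < 1 / (16 * k * 2 ^ k) := by positivity
  have hlt : (1:ℝ) / (16 * k * 2 ^ k) < 1 := by
    rw [div_lt_one (by positivity)]; nlinarith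
  have e := (Fintype.equivFin (Fin m ⊕ (Fin m → Bool))).trans (finCongr hcard)
  refine ⟨k, 1 - 1 / (16 * k * 2 ^ k), hk2, by linarith, by linarith, fun E _ _ hS => ⟨?_, ?_⟩⟩
  · by_contra hcon
    have := star_linf hC hS ((hasLinf_of_not_Q k (by omega) hcon).equiv e)
    linarith
  · by_contra hcon
    have := star_dual_linf hC hS ((hasLinf_of_not_Q k (by omega) hcon).equiv e)
    linarith

/-- Spaces without finite cotype contain all `ℓ_∞^k` uniformly. -/
lemma hasLinf_of_no_cotype (h : ¬ ∃ q, 2 ≤ q ∧ HasCotype E q) (k : ℕ) : HasLinf E (Fin k) := by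
  rcases Nat.eq_zero_or_pos k with h0 | h0
  · subst h0
    exact ⟨Fin.elim0, fun t c _ hc => by simpa using hc, fun t i => i.elim0⟩
  · by_contra hcon
    apply h
    have hkr : (1:ℝ) ≤ k := by exact_mod_cast h0
    have h2k : (1:ℝ) ≤ 2 ^ k := one_le_pow₀ (by norm_num)
    have hpos : (0:ℝ) < 1 / (16 * k * 2 ^ k) := by positivity
    have hlt : (1:ℝ) / (16 * k * 2 ^ k) < 1 := by
      rw [div_lt_one (by positivity)]; nlinarith
    have hQ : Q E k (k * (1 - 1 / (16 * k * 2 ^ k))) := by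
      by_contra hQ; exact hcon (hasLinf_of_not_Q k h0 hQ)
    exact cotype_of_Q h0 (by linarith) (by linarith) hQ

end

end GPair

/-! ### K-convexity bound and duality for Rademacher sums -/

namespace GPair

open Finset

/-- Interpolation weights: a linear combination of powers `r_a^d` that isolates degree one among
all degrees `≤ D`. -/
lemma exists_nodes (D : ℕ) (hD : 1 ≤ D) : ∃ r c : Fin (D + 1) → ℝ, (∀ a, |r a| ≤ 1) ∧
    ∀ d ≤ D, ∑ a, c a * r a ^ d = if d = 1 then 1 else 0 := by
  let r : Fin (D + 1) → ℝ := fun a => 1 / ((a : ℕ) + 1)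
  have hinj : Function.Injective r := by
    intro a b hab
    simp only [r, one_div, inv_inj, add_left_inj, Nat.cast_inj] at hab
    exact Fin.ext hab
  have hdet : IsUnit (Matrix.vandermonde r).det :=
    isUnit_iff_ne_zero.2 (Matrix.det_vandermonde_ne_zero_iff.2 hinj)
  let i1 : Fin (D + 1) := ⟨1, by omega⟩
  refine ⟨r, Matrix.vecMul (Pi.single i1 1) (Matrix.vandermonde r)⁻¹, fun a => ?_, fun d hd => ?_⟩
  · simp only [r]
    rw [abs_of_pos (by positivity), div_le_one (by positivity)]
    linarith [Nat.cast_nonneg (α := ℝ) (a : ℕ)]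
  · have h : Matrix.vecMul (Matrix.vecMul (Pi.single i1 1) (Matrix.vandermonde r)⁻¹)
        (Matrix.vandermonde r) = Pi.single i1 1 := by
      rw [Matrix.vecMul_vecMul, Matrix.nonsing_inv_mul _ hdet, Matrix.vecMul_one]
    have h2 := congrFun h ⟨d, by omega⟩
    simp only [Matrix.vecMul, dotProduct, Matrix.vandermonde_apply] at h2 ⊢
    rw [h2]
    simp [Pi.single_apply, i1, Fin.ext_iff]

section
variable {ι : Type*} [Fintype ι] [DecidableEq ι]
variable {X : Type*} [NormedAddCommGroup X] [NormedSpace ℝ X]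

lemma norm_sum_smul_sq_le {κ : Type*} [Fintype κ] (w : κ → ℝ) (v : κ → X) :
    ‖∑ a, w a • v a‖ ^ 2 ≤ (∑ a, |w a|) * ∑ a, |w a| * ‖v a‖ ^ 2 := by
  have h1 : ‖∑ a, w a • v a‖ ≤ ∑ a, Real.sqrt |w a| * (Real.sqrt |w a| * ‖v a‖) := by
    refine (norm_sum_le _ _).trans (Finset.sum_le_sum fun a _ => ?_)
    rw [norm_smul, Real.norm_eq_abs, ← mul_assoc, Real.mul_self_sqrt (abs_nonneg _)]
  refine (pow_le_pow_left₀ (norm_nonneg _) h1 2).trans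
    ((Finset.sum_mul_sq_le_sq_mul_sq _ _ _).trans (le_of_eq ?_))
  simp only [mul_pow, Real.sq_sqrt (abs_nonneg _)]

/-- A combination of noise operators is bounded on `L₂(X)`. -/
lemma avg_comb_noise_le {κ : Type*} [Fintype κ] (w r : κ → ℝ) (hr : ∀ a, |r a| ≤ 1)
    (f : (ι → Bool) → X) :
    avg (fun ε => ‖mult (fun S => ∑ a, w a * r a ^ S.card) f ε‖ ^ 2) ≤
      (∑ a, |w a|) ^ 2 * avg (fun ε => ‖f ε‖ ^ 2) := by
  have h1 : ∀ ε, mult (fun S => ∑ a, w a * r a ^ S.card) f ε =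
      ∑ a, w a • mult (fun S => r a ^ S.card) f ε := by
    intro ε
    simp only [mult, Finset.smul_sum, smul_smul]
    rw [Finset.sum_comm]
    refine Finset.sum_congr rfl fun S _ => ?_
    rw [← Finset.sum_smul, Finset.sum_mul]
    simp only [mul_assoc]
  calc _ ≤ avg (fun ε => (∑ a, |w a|) * ∑ a, |w a| * ‖mult (fun S => r a ^ S.card) f ε‖ ^ 2) :=
        avg_mono fun ε => by rw [h1]; exact norm_sum_smul_sq_le _ _
    _ = (∑ a, |w a|) * ∑ a, |w a| * avg (fun ε => ‖mult (fun S => r a ^ S.card) f ε‖ ^ 2) := by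
        rw [avg_mul, avg_sum]; simp only [avg_mul]
    _ ≤ (∑ a, |w a|) * ∑ a, |w a| * avg (fun ε => ‖f ε‖ ^ 2) := by
        gcongr with a
        exact avg_noise_le (r a) (hr a) f
    _ = _ := by rw [← Finset.sum_mul]; ring

/-- A Fourier multiplier bounded by `M` is bounded on `L₂(X)`, with a loss depending on the
distance of `X` to `ℓ_1^n`. -/
lemma avg_mult_norm_sq_le {n : ℕ} (φ : Fin n → (X →L[ℝ] ℝ)) (hφ : ∀ i, ‖φ i‖ ≤ 1) {κ : ℝ}
    (hy : ∀ y, ‖y‖ ≤ κ * ∑ i, |φ i y|) (μ : Finset ι → ℝ) {M : ℝ}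
    (hμ : ∀ S, |μ S| ≤ M) (f : (ι → Bool) → X) :
    avg (fun ε => ‖mult μ f ε‖ ^ 2) ≤ κ ^ 2 * n ^ 2 * M ^ 2 * avg (fun ε => ‖f ε‖ ^ 2) := by
  have h1 : ∀ y, ‖y‖ ^ 2 ≤ κ ^ 2 * (n * ∑ i, φ i y ^ 2) := by
    intro y
    refine (pow_le_pow_left₀ (norm_nonneg _) (hy y) 2).trans ?_
    rw [mul_pow]
    gcongr
    have := sq_sum_le_card_mul_sum_sq (s := Finset.univ) (f := fun i => |φ i y|)
    simpa using this
  have h2 : ∀ i, avg (fun ε => φ i (mult μ f ε) ^ 2) ≤ M ^ 2 * avg (fun ε => ‖f ε‖ ^ 2) := by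
    intro i
    have := fun ε => map_mult (φ i : X →ₗ[ℝ] ℝ) μ f ε
    simp only [ContinuousLinearMap.coe_coe] at this
    simp only [this]
    refine (avg_mult_sq_le μ M hμ _).trans ?_
    gcongr
    refine avg_mono fun ε => ?_
    rw [← sq_abs]
    gcongr
    calc |φ i (f ε)| ≤ ‖φ i‖ * ‖f ε‖ := (φ i).le_opNorm _
      _ ≤ 1 * ‖f ε‖ := by gcongr; exact hφ i
      _ = _ := one_mul _
  calc _ ≤ avg (fun ε => κ ^ 2 * (n * ∑ i, φ i (mult μ f ε) ^ 2)) := avg_mono fun ε => h1 _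
    _ = κ ^ 2 * (n * ∑ i, avg (fun ε => φ i (mult μ f ε) ^ 2)) := by
        rw [avg_mul, avg_mul, avg_sum]
    _ ≤ κ ^ 2 * (n * ∑ i : Fin n, M ^ 2 * avg (fun ε => ‖f ε‖ ^ 2)) := by
        gcongr with i; exact h2 i
    _ = _ := by simp; ring

lemma rad_add_le {V : Type*} [Fintype V] (f g : V → X) :
    avg (fun ε => ‖f ε + g ε‖ ^ 2) ≤ 2 * avg (fun ε => ‖f ε‖ ^ 2) + 2 * avg (fun ε => ‖g ε‖ ^ 2) := by
  rw [← avg_mul, ← avg_mul, ← avg_add]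
  refine avg_mono fun ε => ?_
  have := norm_add_le (f ε) (g ε)
  nlinarith [sq_nonneg (‖f ε‖ - ‖g ε‖), norm_nonneg (f ε + g ε), norm_nonneg (f ε),
    norm_nonneg (g ε)]

/-- The Rademacher projection as a Fourier multiplier. -/
lemma mult_rad (f : (ι → Bool) → X) (ε : ι → Bool) :
    mult (fun S => if S.card = 1 then 1 else 0) f ε = ∑ i, sg (ε i) • coeff f {i} := by
  simp only [mult]
  have : ∀ S : Finset ι, ((if S.card = 1 then (1:ℝ) else 0) * walsh S ε) • coeff f S =
      if S ∈ Finset.univ.image (fun i : ι => ({i} : Finset ι)) then walsh S ε • coeff f S else 0 := by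
    intro S
    have : S ∈ Finset.univ.image (fun i : ι => ({i} : Finset ι)) ↔ S.card = 1 := by
      rw [Finset.card_eq_one]; simp [eq_comm]
    simp only [this]
    split_ifs <;> simp
  simp only [this]
  rw [Finset.sum_ite_mem, Finset.univ_inter, Finset.sum_image (by
    intro i _ j _ h; simpa using h)]
  simp

end

/-- `K`-convexity with a loss: in a space whose distance to `ℓ_1^n` is polynomial in `n = b^R`,
the Rademacher projection has squared norm at most `K₀ b²`, with `K₀` depending only on `R`. -/
lemma rad_coeff_le (R : ℕ) : ∃ K₀ : ℝ, 0 < K₀ ∧ ∀ (b : ℕ), 1 ≤ b → ∀ (X : Type*)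
    [NormedAddCommGroup X] [NormedSpace ℝ X] (φ : Fin (b ^ R) → (X →L[ℝ] ℝ)),
    (∀ i, ‖φ i‖ ≤ 1) → (∀ y, ‖y‖ ≤ 3 * (b : ℝ) ^ R * ∑ i, |φ i y|) →
    ∀ (ι : Type) [Fintype ι] [DecidableEq ι] (f : (ι → Bool) → X),
      rad (fun i => coeff f {i}) ≤ K₀ * b ^ 2 * avg (fun ε => ‖f ε‖ ^ 2) := by
  obtain ⟨r, c, hr, hc⟩ := exists_nodes (2 * R + 1) (by omega)
  set W := ∑ a, |c a| with hW
  have hW0 : 0 ≤ W := Finset.sum_nonneg fun _ _ => abs_nonneg _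
  refine ⟨20 * W ^ 2 + 1, by positivity, fun b hb X _ _ φ hφ hy ι _ _ f => ?_⟩
  have hb1 : (1:ℝ) ≤ b := by exact_mod_cast hb
  have hb0 : (0:ℝ) < b := by linarith
  set s : ℝ := (b : ℝ)⁻¹ with hs
  have hs0 : 0 < s := by positivity
  have hs1 : s ≤ 1 := inv_le_one_of_one_le₀ hb1
  have hbs : b * s = 1 := mul_inv_cancel₀ hb0.ne'
  -- noise operators at scale `s = 1/b`: their combination `μ` agrees with the Rademacher projection
  -- up to degree `2 R + 1`, and the error `ν` beyond is at most of order `b ^ (-(2 R + 1))`, which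
  -- compensates the distance to `ℓ_1^n`
  let μ : Finset ι → ℝ := fun S => ∑ a, (b * c a) * (s * r a) ^ S.card
  let ν : Finset ι → ℝ := fun S => (if S.card = 1 then 1 else 0) - μ S
  have hμ : ∀ S, μ S = b * s ^ S.card * ∑ a, c a * r a ^ S.card := by
    intro S; simp only [μ, Finset.mul_sum, mul_pow]
    exact Finset.sum_congr rfl fun a _ => by ring
  have hν : ∀ S, |ν S| ≤ W * s ^ (2 * R + 1) := by
    intro S
    have hpos : 0 ≤ W * s ^ (2 * R + 1) := by positivity
    by_cases hS : S.card ≤ 2 * R + 1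
    · have : ν S = 0 := by
        simp only [ν]
        rw [hμ, hc _ hS]
        split_ifs with h
        · rw [h]; simp [hbs]
        · simp
      rw [this, abs_zero]; exact hpos
    · have h1 : S.card ≠ 1 := by omega
      simp only [ν, if_neg h1, zero_sub, abs_neg]
      rw [hμ]
      obtain ⟨d, hd⟩ : ∃ d, S.card = d + 1 := ⟨S.card - 1, by omega⟩
      rw [abs_mul, abs_of_nonneg (by positivity), hd, pow_succ, mul_comm (s ^ d), ← mul_assoc, hbs,
        one_mul, mul_comm]
      refine mul_le_mul ?_ ?_ (by positivity) hW0
      · refine (Finset.abs_sum_le_sum_abs _ _).trans (Finset.sum_le_sum fun a _ => ?_)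
        rw [abs_mul, abs_pow]
        exact mul_le_of_le_one_right (abs_nonneg _) (pow_le_one₀ (abs_nonneg _) (hr a))
      · exact pow_le_pow_of_le_one hs0.le hs1 (by omega)
  have h0 : ∀ ε, ∑ i, sg (ε i) • coeff f {i} = mult μ f ε + mult ν f ε := by
    intro ε
    rw [← mult_rad]
    simp only [mult, ← Finset.sum_add_distrib, ← add_smul, ← add_mul, ν, add_sub_cancel]
  have h1 : avg (fun ε => ‖mult μ f ε‖ ^ 2) ≤ (b * W) ^ 2 * avg (fun ε => ‖f ε‖ ^ 2) := by
    refine (avg_comb_noise_le (fun a => b * c a) (fun a => s * r a) (fun a => ?_) f).trans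
      (le_of_eq ?_)
    · rw [abs_mul, abs_of_pos hs0]
      exact mul_le_one₀ hs1 (abs_nonneg _) (hr a)
    · simp only [abs_mul, abs_of_pos hb0, ← Finset.mul_sum, hW]
  have h2 := avg_mult_norm_sq_le φ hφ hy ν hν f
  have h3 : (3 * (b : ℝ) ^ R) ^ 2 * ((b ^ R : ℕ) : ℝ) ^ 2 * (W * s ^ (2 * R + 1)) ^ 2 ≤ 9 * W ^ 2 := by
    push_cast
    have e : (3 * (b : ℝ) ^ R) ^ 2 * ((b : ℝ) ^ R) ^ 2 * (W * s ^ (2 * R + 1)) ^ 2 =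
        9 * W ^ 2 * ((b * s) ^ (4 * R) * s ^ 2) := by
      rw [mul_pow (b:ℝ) s]; ring
    rw [e, hbs, one_pow, one_mul]
    exact mul_le_of_le_one_right (by positivity) (pow_le_one₀ hs0.le hs1)
  have hav : 0 ≤ avg (fun ε => ‖f ε‖ ^ 2) := avg_nonneg fun _ => by positivity
  calc rad (fun i => coeff f {i}) = avg (fun ε => ‖mult μ f ε + mult ν f ε‖ ^ 2) := by
        simp only [rad, h0]
    _ ≤ _ := rad_add_le _ _
    _ ≤ 2 * ((b * W) ^ 2 * avg (fun ε => ‖f ε‖ ^ 2)) + 2 * (9 * W ^ 2 * avg (fun ε => ‖f ε‖ ^ 2)) := by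
        gcongr
        exact h2.trans (by gcongr)
    _ = (2 * W ^ 2 * b ^ 2 + 18 * W ^ 2 * 1) * avg (fun ε => ‖f ε‖ ^ 2) := by ring
    _ ≤ (2 * W ^ 2 * b ^ 2 + 18 * W ^ 2 * b ^ 2 + b ^ 2) * avg (fun ε => ‖f ε‖ ^ 2) := by
        refine mul_le_mul_of_nonneg_right ?_ hav
        have : (1:ℝ) ≤ b ^ 2 := one_le_pow₀ hb1
        nlinarith [sq_nonneg W]
    _ = _ := by ring

/-- Dual form: Rademacher sums in the dual are nearly normed by Rademacher sums. -/
lemma exists_dual_rad {X : Type*} [NormedAddCommGroup X] [NormedSpace ℝ X] {K : ℝ} {ι : Type}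
    [Fintype ι] [DecidableEq ι] (hK : 0 ≤ K)
    (h : ∀ f : (ι → Bool) → X, rad (fun i => coeff f {i}) ≤ K * avg (fun ε => ‖f ε‖ ^ 2))
    (z : ι → (X →L[ℝ] ℝ)) :
    ∃ x : ι → X, rad z / 2 ≤ ∑ i, z i (x i) ∧ rad x ≤ K * rad z := by
  have : ∀ Φ : X →L[ℝ] ℝ, ∃ y : X, ‖y‖ ≤ ‖Φ‖ ∧ ‖Φ‖ ^ 2 / 2 ≤ Φ y := by
    intro Φ
    rcases (norm_nonneg Φ).eq_or_lt with h0 | h0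
    · exact ⟨0, by simp, by simp [← h0]⟩
    · obtain ⟨x, hx1, hx2⟩ := ContinuousLinearMap.exists_lt_apply_of_lt_opNorm Φ
        (half_lt_self h0)
      obtain ⟨b, hb⟩ := exists_sg_mul (Φ x)
      refine ⟨(‖Φ‖ * sg b) • x, ?_, ?_⟩
      · rw [norm_smul, Real.norm_eq_abs, abs_mul, abs_sg, abs_norm, mul_one]
        exact mul_le_of_le_one_right h0.le hx1.le
      · rw [map_smul, smul_eq_mul, mul_assoc, hb]
        rw [Real.norm_eq_abs] at hx2
        nlinarith
  choose y hy1 hy2 using this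
  set f : (ι → Bool) → X := fun ε => y (∑ i, sg (ε i) • z i) with hf
  refine ⟨fun i => coeff f {i}, ?_, (h f).trans ?_⟩
  · have e : ∑ i, z i (coeff f {i}) = avg (fun ε => (∑ i, sg (ε i) • z i) (f ε)) := by
      simp only [coeff, walsh_singleton]
      have : ∀ i, z i (avg fun ε => sg (ε i) • f ε) = avg fun ε => sg (ε i) * z i (f ε) := by
        intro i
        have := map_avg (z i : X →ₗ[ℝ] ℝ) (fun ε : ι → Bool => sg (ε i) • f ε)
        simpa using this
      simp only [this]
      rw [← avg_sum]
      simp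
    rw [e, rad, div_eq_inv_mul, ← avg_mul]
    refine avg_mono fun ε => ?_
    rw [← div_eq_inv_mul]
    exact hy2 _
  · gcongr
    exact avg_mono fun ε => pow_le_pow_left₀ (norm_nonneg _) (hy1 _) 2

end GPair

/-! ### Gaussian averages -/

namespace GPair

open Finset MeasureTheory ProbabilityTheory

section gauss
variable {X : Type*} [NormedAddCommGroup X] [NormedSpace ℝ X]
variable {ι κ : Type} [Fintype ι] [DecidableEq ι] [Fintype κ] [DecidableEq κ]

/-- The standard Gaussian measure on `ℝ^ι`. -/
noncomputable def gm (ι : Type) [Fintype ι] : Measure (ι → ℝ) :=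
  Measure.pi (fun _ : ι => gaussianReal 0 1)

instance (ι : Type) [Fintype ι] : IsProbabilityMeasure (gm ι) := by unfold gm; infer_instance

/-- The second moment of the Gaussian vector `∑ g_i z_i`. -/
noncomputable def lg (z : ι → X) : ℝ := ∫ x, ‖∑ i, x i • z i‖ ^ 2 ∂(gm ι)

omit [DecidableEq ι] in
lemma lg_nonneg (z : ι → X) : 0 ≤ lg z := integral_nonneg fun _ => by positivity

/-- A matrix with orthonormal columns pushes the standard Gaussian measure to the standard one. -/
lemma gm_map (W : ι → κ → ℝ) (hW : ∀ k l, ∑ i, W i k * W i l = if k = l then 1 else 0) :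
    (gm ι).map (fun x k => ∑ i, x i * W i k) = gm κ := by
  have key : (stdGaussian (EuclideanSpace ℝ ι)).map
      (fun x => WithLp.toLp 2 (fun k => ∑ i, x i * W i k)) = stdGaussian (EuclideanSpace ℝ κ) := by
    have hm : Measurable (fun x : EuclideanSpace ℝ ι => WithLp.toLp 2 (fun k => ∑ i, x i * W i k)) := by
      fun_prop
    haveI := Measure.isProbabilityMeasure_map (μ := stdGaussian (EuclideanSpace ℝ ι)) hm.aemeasurable
    apply Measure.ext_of_charFun
    funext t
    rw [charFun_apply, integral_map hm.aemeasurable (Measurable.aestronglyMeasurable (by fun_prop))]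
    have e1 : ∀ x : EuclideanSpace ℝ ι,
        inner ℝ (WithLp.toLp 2 (fun k => ∑ i, x i * W i k)) t
          = inner ℝ x (WithLp.toLp 2 (fun i => ∑ k, W i k * t k)) := by
      intro x
      simp only [PiLp.inner_apply, RCLike.inner_apply, conj_trivial, Finset.mul_sum, Finset.sum_mul]
      rw [Finset.sum_comm]
      refine Finset.sum_congr rfl fun i _ => Finset.sum_congr rfl fun k _ => by ring
    simp only [e1]
    rw [← charFun_apply, charFun_stdGaussian, charFun_stdGaussian]
    have e2 : ‖(WithLp.toLp 2 (fun i => ∑ k, W i k * t k) : EuclideanSpace ℝ ι)‖ ^ 2 = ‖t‖ ^ 2 := by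
      rw [EuclideanSpace.real_norm_sq_eq, EuclideanSpace.real_norm_sq_eq]
      have : ∀ i, (∑ k, W i k * t k) ^ 2 = ∑ k, ∑ l, (W i k * W i l) * (t k * t l) := by
        intro i; rw [sq, Finset.sum_mul_sum]
        refine Finset.sum_congr rfl fun i _ => Finset.sum_congr rfl fun k _ => by ring
      simp only [this]
      rw [Finset.sum_comm]
      refine Finset.sum_congr rfl fun k _ => ?_
      rw [Finset.sum_comm]
      simp only [← Finset.sum_mul, hW]
      simp [sq]
    have e3 := congrArg (fun r : ℝ => (r : ℂ)) e2
    simp only [Complex.ofReal_pow] at e3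
    rw [e3]
  rw [← map_pi_eq_stdGaussian, ← map_pi_eq_stdGaussian] at key
  have h := congrArg (fun μ => μ.map (WithLp.ofLp : EuclideanSpace ℝ κ → _)) key
  simp only at h
  rw [Measure.map_map (by fun_prop) (by fun_prop), Measure.map_map (by fun_prop) (by fun_prop),
    Measure.map_map (by fun_prop) (by fun_prop)] at h
  have h2 : (WithLp.ofLp ∘ WithLp.toLp 2 : (κ → ℝ) → κ → ℝ) = id := by funext x; rfl
  rw [h2, Measure.map_id] at h
  exact h

/-- Rotation invariance. -/
lemma lg_rot (W : ι → κ → ℝ) (hW : ∀ k l, ∑ i, W i k * W i l = if k = l then 1 else 0)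
    (z : κ → X) : lg (fun i => ∑ k, W i k • z k) = lg z := by
  simp only [lg]
  rw [← gm_map W hW, integral_map (Measurable.aemeasurable (by fun_prop))
    (Continuous.aestronglyMeasurable (by fun_prop))]
  congr 1; funext x
  congr 2
  simp only [Finset.smul_sum, Finset.sum_smul, smul_smul]
  rw [Finset.sum_comm]

omit [DecidableEq ι] in
lemma integrable_coord {f : ℝ → ℝ} (hf : Integrable f (gaussianReal 0 1)) (i : ι) :
    Integrable (fun x : ι → ℝ => f (x i)) (gm ι) :=
  integrable_comp_eval (μ := fun _ : ι => gaussianReal 0 1) hf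

omit [DecidableEq ι] in
lemma integral_coord {f : ℝ → ℝ} (hf : Integrable f (gaussianReal 0 1)) (i : ι) :
    ∫ x : ι → ℝ, f (x i) ∂(gm ι) = ∫ t, f t ∂(gaussianReal 0 1) :=
  integral_comp_eval (μ := fun _ : ι => gaussianReal 0 1) hf.aestronglyMeasurable

lemma integrable_pow_gaussian (n : ℕ) : Integrable (fun t : ℝ => |t| ^ n) (gaussianReal 0 1) := by
  have := (memLp_id_gaussianReal (μ := 0) (v := 1) (n : NNReal)).integrable_norm_pow'
  simpa using this

omit [DecidableEq ι] in
lemma integrable_norm_sum (z : ι → X) : Integrable (fun x : ι → ℝ => ‖∑ i, x i • z i‖ ^ 2) (gm ι) := by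
  have h : Integrable (fun x : ι → ℝ => ∑ i, |x i| ^ 2 * (∑ i, ‖z i‖ ^ 2)) (gm ι) := by
    apply integrable_finsetSum
    intro i _
    exact (integrable_coord (integrable_pow_gaussian 2) i).mul_const _
  refine h.mono' (Continuous.aestronglyMeasurable (by fun_prop)) (ae_of_all _ fun x => ?_)
  rw [Real.norm_of_nonneg (by positivity), ← Finset.sum_mul]
  calc ‖∑ i, x i • z i‖ ^ 2 ≤ (∑ i, |x i| * ‖z i‖) ^ 2 := by
        gcongr; refine (norm_sum_le _ _).trans (le_of_eq ?_); simp [norm_smul]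
    _ ≤ _ := Finset.sum_mul_sq_le_sq_mul_sq _ _ _

lemma gm_sign (ε : ι → Bool) (F : (ι → ℝ) → ℝ) (hF : Continuous F) :
    ∫ x, F (fun i => sg (ε i) * x i) ∂(gm ι) = ∫ x, F x ∂(gm ι) := by
  have := gm_map (fun i k : ι => if i = k then sg (ε i) else 0) (by
    intro k l
    by_cases h : k = l
    · subst h; simp
    · simp [h, Ne.symm h])
  conv_rhs => rw [← this]
  rw [integral_map (Measurable.aemeasurable (by fun_prop)) hF.aestronglyMeasurable]
  congr 1; funext x; congr 1; funext i
  simp [mul_comm]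

lemma rad_le_rad_abs (x : ι → ℝ) (z : ι → X) :
    rad (fun i => x i • z i) ≤ rad (fun i => |x i| • z i) := by
  choose b hb using fun i => exists_sg_mul (x i)
  have := rad_contract (fun i => sg (b i)) (fun i => by simp) (fun i => |x i| • z i)
  refine le_trans (le_of_eq ?_) this
  congr 1; funext i
  rw [smul_smul, ← hb, ← mul_assoc]; simp

lemma rad_abs_le_rad (x : ι → ℝ) (z : ι → X) :
    rad (fun i => |x i| • z i) ≤ rad (fun i => x i • z i) := by
  choose b hb using fun i => exists_sg_mul (x i)
  have := rad_contract (fun i => sg (b i)) (fun i => by simp) (fun i => x i • z i)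
  refine le_trans (le_of_eq ?_) this
  congr 1; funext i
  rw [smul_smul, hb]

lemma continuous_rad (z : ι → X) : Continuous (fun x : ι → ℝ => rad (fun i => x i • z i)) := by
  simp only [rad, avg]; fun_prop

/-- By symmetry of the Gaussian measure, signs can be averaged conditionally on the moduli. -/
lemma lg_eq_rad (z : ι → X) : lg z = ∫ x, rad (fun i => x i • z i) ∂(gm ι) := by
  have h1 : ∀ ε : ι → Bool, lg z = ∫ x, ‖∑ i, sg (ε i) • x i • z i‖ ^ 2 ∂(gm ι) := by
    intro ε
    rw [lg, ← gm_sign ε _ (by fun_prop)]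
    simp only [smul_smul]
  calc lg z = avg (fun ε : ι → Bool => lg z) := (avg_const _).symm
    _ = avg (fun ε : ι → Bool => ∫ x, ‖∑ i, sg (ε i) • x i • z i‖ ^ 2 ∂(gm ι)) := by
        congr 1; funext ε; exact h1 ε
    _ = _ := by
        simp only [rad, avg, smul_eq_mul]
        rw [integral_const_mul, integral_finsetSum]
        intro ε _
        have := integrable_norm_sum (fun i => sg (ε i) • z i)
        refine this.congr (ae_of_all _ fun x => ?_)
        simp only [smul_comm (sg _)]

/-- `E|g|` for a standard Gaussian variable. -/
noncomputable def gabs : ℝ := ∫ t, |t| ∂(gaussianReal 0 1)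

lemma gabs_pos : 0 < gabs := by
  have h0 : 0 ≤ gabs := integral_nonneg fun _ => abs_nonneg _
  rcases h0.lt_or_eq with h | h
  · exact h
  exfalso
  have hi : Integrable (fun t : ℝ => |t|) (gaussianReal 0 1) := by simpa using integrable_pow_gaussian 1
  have h1 := (integral_eq_zero_iff_of_nonneg (fun t : ℝ => abs_nonneg t) hi).1 h.symm
  have h2 : Var[id; gaussianReal 0 1] = 1 := by simp
  have h3 : (id : ℝ → ℝ) =ᵐ[gaussianReal 0 1] fun _ => 0 := by
    filter_upwards [h1] with t ht
    simpa using ht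
  rw [variance_congr h3] at h2
  rw [variance_eq_integral (by fun_prop)] at h2
  simp at h2

/-- Gaussian averages dominate Rademacher averages: Jensen's inequality in the moduli `|x_i|`. -/
lemma rad_le_lg (z : ι → X) : gabs ^ 2 * rad z ≤ lg z := by
  have hi : Integrable (fun t : ℝ => |t|) (gaussianReal 0 1) := by simpa using integrable_pow_gaussian 1
  have hint2' : ∀ ε : ι → Bool,
      Integrable (fun x : ι → ℝ => ‖∑ i, |x i| • (sg (ε i) • z i)‖ ^ 2) (gm ι) := by
    intro ε
    have h : Integrable (fun x : ι → ℝ => ∑ i, |x i| ^ 2 * (∑ i, ‖sg (ε i) • z i‖ ^ 2)) (gm ι) := by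
      apply integrable_finsetSum
      intro i _
      exact (integrable_coord (integrable_pow_gaussian 2) i).mul_const _
    refine h.mono' (Continuous.aestronglyMeasurable (by fun_prop)) (ae_of_all _ fun x => ?_)
    rw [Real.norm_of_nonneg (by positivity), ← Finset.sum_mul]
    calc ‖∑ i, |x i| • (sg (ε i) • z i)‖ ^ 2 ≤ (∑ i, |x i| * ‖sg (ε i) • z i‖) ^ 2 := by
          gcongr; refine (norm_sum_le _ _).trans (le_of_eq ?_); simp [norm_smul]
      _ ≤ _ := Finset.sum_mul_sq_le_sq_mul_sq _ _ _
  have h1 : ∀ ε : ι → Bool, gabs ^ 2 * ‖∑ i, sg (ε i) • z i‖ ^ 2 ≤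
      ∫ x, ‖∑ i, |x i| • (sg (ε i) • z i)‖ ^ 2 ∂(gm ι) := by
    intro ε
    set v := ∑ i, sg (ε i) • z i with hv
    obtain ⟨f, hf1, hf2⟩ := exists_dual_vector'' ℝ v
    have hint : Integrable (fun x : ι → ℝ => ∑ i, |x i| * f (sg (ε i) • z i)) (gm ι) := by
      apply integrable_finsetSum; intro i _
      exact (integrable_coord hi i).mul_const _
    have hval : ∫ x : ι → ℝ, ∑ i, |x i| * f (sg (ε i) • z i) ∂(gm ι) = gabs * ‖v‖ := by
      rw [integral_finsetSum _ fun i _ => (integrable_coord hi i).mul_const _]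
      simp only [integral_mul_const, integral_coord hi]
      rw [← Finset.mul_sum, ← map_sum, ← hv, hf2]; rfl
    have hle : ∀ x : ι → ℝ, 2 * (gabs * ‖v‖) * (∑ i, |x i| * f (sg (ε i) • z i)) - (gabs * ‖v‖) ^ 2
        ≤ ‖∑ i, |x i| • (sg (ε i) • z i)‖ ^ 2 := by
      intro x
      have e : ∑ i, |x i| * f (sg (ε i) • z i) = f (∑ i, |x i| • (sg (ε i) • z i)) := by
        simp [map_sum]
      have h2 : |f (∑ i, |x i| • (sg (ε i) • z i))| ≤ ‖∑ i, |x i| • (sg (ε i) • z i)‖ := by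
        have := f.le_of_opNorm_le hf1 (∑ i, |x i| • (sg (ε i) • z i))
        simpa using this
      rw [e]
      have h3 := pow_le_pow_left₀ (abs_nonneg _) h2 2
      rw [sq_abs] at h3
      nlinarith [sq_nonneg (f (∑ i, |x i| • (sg (ε i) • z i)) - gabs * ‖v‖)]
    have hint2 := hint2' ε
    have := integral_mono ((hint.const_mul _).sub (integrable_const _)) hint2 hle
    refine le_trans (le_of_eq ?_) this
    simp only [Pi.sub_apply]
    rw [integral_sub (hint.const_mul _) (integrable_const _), integral_const_mul, hval]
    simp; ring
  have h2 : lg z = avg (fun ε : ι → Bool => ∫ x, ‖∑ i, |x i| • (sg (ε i) • z i)‖ ^ 2 ∂(gm ι)) := by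
    rw [lg_eq_rad]
    simp only [avg, smul_eq_mul]
    rw [← integral_finsetSum _ fun ε _ => hint2' ε, ← integral_const_mul]
    congr 1; funext x
    rw [le_antisymm (rad_le_rad_abs x z) (rad_abs_le_rad x z)]
    simp only [rad, avg, smul_eq_mul, smul_comm (sg _)]
  rw [h2, rad, ← avg_mul]
  exact avg_mono h1

/-- The `2R`-th absolute moment of a standard Gaussian variable. -/
noncomputable def gmom (R : ℕ) : ℝ := ∫ t, |t| ^ (2 * R) ∂(gaussianReal 0 1)

lemma gmom_nonneg (R : ℕ) : 0 ≤ gmom R := integral_nonneg fun _ => by positivity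

/-- Converse comparison, by contraction with `max |x_i|`. The `2R`-th power of the maximum is at
most the sum of the `2R`-th powers, which costs only the factor `b` for `b ^ R` coordinates. -/
lemma lg_le_rad (b R : ℕ) (hb : 1 ≤ b) (hR : 1 ≤ R) (hN : Fintype.card ι = b ^ R) (z : ι → X) :
    lg z ≤ b * (1 + gmom R) * rad z := by
  have hb' : (0 : ℝ) < b := by exact_mod_cast hb
  rw [lg_eq_rad]
  have hp : ∀ x : ι → ℝ, rad (fun i => x i • z i) ≤
      b * (1 + (∑ i, |x i| ^ (2 * R)) / b ^ R) * rad z := by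
    intro x
    set M2 : ℝ := b * (1 + (∑ i, |x i| ^ (2 * R)) / b ^ R) with hM2
    have hM2p : 0 < M2 := by positivity
    have hx : ∀ i, x i ^ 2 ≤ M2 := by
      intro i
      have h1 : x i ^ 2 / b ≤ 1 + (x i ^ 2 / b) ^ R := by
        rcases le_total (x i ^ 2 / b) 1 with h | h
        · have : 0 ≤ (x i ^ 2 / b) ^ R := by positivity
          linarith
        · have := le_self_pow₀ h (by omega : R ≠ 0)
          linarith
      have h2 : (x i ^ 2 / b) ^ R ≤ (∑ i, |x i| ^ (2 * R)) / b ^ R := by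
        rw [div_pow, ← pow_mul]
        gcongr
        rw [← Even.pow_abs (even_two_mul R)]
        exact Finset.single_le_sum (f := fun i => |x i| ^ (2 * R)) (fun _ _ => by positivity)
          (Finset.mem_univ i)
      rw [hM2, mul_comm, ← div_le_iff₀ hb']
      linarith
    have hM : 0 < Real.sqrt M2 := Real.sqrt_pos.2 hM2p
    have h3 := rad_contract (fun i => x i / Real.sqrt M2) (fun i => by
      rw [abs_div, abs_of_pos hM, div_le_one hM]
      exact Real.abs_le_sqrt (hx i)) z
    have h4 : rad (fun i => x i • z i) =
        Real.sqrt M2 ^ 2 * rad (fun i => (x i / Real.sqrt M2) • z i) := by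
      rw [← rad_smul]
      congr 1; funext i
      rw [smul_smul, mul_div_cancel₀ _ hM.ne']
    rw [h4, Real.sq_sqrt hM2p.le]
    gcongr
  have hi := fun i : ι => integrable_coord (integrable_pow_gaussian (2 * R)) i
  have hs : Integrable (fun x : ι → ℝ => ∑ i, |x i| ^ (2 * R)) (gm ι) :=
    integrable_finsetSum _ fun i _ => hi i
  have hI : Integrable (fun x : ι → ℝ => b * (1 + (∑ i, |x i| ^ (2 * R)) / b ^ R) * rad z) (gm ι) :=
    ((((integrable_const (1:ℝ)).add (hs.div_const _)).const_mul _).mul_const _)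
  refine (integral_mono_of_nonneg (ae_of_all _ fun x => rad_nonneg _) hI (ae_of_all _ hp)).trans
    (le_of_eq ?_)
  rw [integral_mul_const, integral_const_mul, integral_add (integrable_const _) (hs.div_const _),
    integral_div, integral_finsetSum _ fun i _ => hi i]
  simp only [integral_coord (integrable_pow_gaussian (2 * R))]
  simp only [Finset.sum_const, Finset.card_univ, hN, nsmul_eq_mul]
  rw [gmom]
  simp
  left; left
  field_simp

end gauss

end GPair

/-! ### Cutting a family to a subspace where it is small -/

namespace GPair

open Finset

section cut
variable {X : Type*} [NormedAddCommGroup X] [NormedSpace ℝ X]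

/-- Orthonormal vectors on which `T` is at least `u`, while `T` is at most `u` on their orthogonal
complement: choose successively unit vectors maximizing `‖T t‖` in the complement of the preceding
ones. -/
lemma exists_cut {H : Type} [NormedAddCommGroup H] [InnerProductSpace ℝ H] [FiniteDimensional ℝ H]
    (T : H →L[ℝ] X) (j : ℕ) (hj : j ≤ Module.finrank ℝ H) :
    ∃ (v : Fin j → H) (u : ℝ), Orthonormal ℝ v ∧ 0 ≤ u ∧ (∀ s, u ≤ ‖T (v s)‖) ∧
      ∀ t, (∀ s, inner ℝ (v s) t = 0) → ‖T t‖ ≤ u * ‖t‖ := by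
  induction j with
  | zero =>
    exact ⟨Fin.elim0, ‖T‖, ⟨fun i => i.elim0, fun i => i.elim0⟩, norm_nonneg _, fun i => i.elim0,
      fun t _ => T.le_opNorm t⟩
  | succ j ih =>
    obtain ⟨v, u, hv, hu, huv, ht⟩ := ih (by omega)
    set K : Set H := {t | ‖t‖ = 1 ∧ ∀ s, inner ℝ (v s) t = 0} with hK
    have hKc : IsCompact K := by
      have : K = Metric.sphere 0 1 ∩ ⋂ s, {t | inner ℝ (v s) t = 0} := by
        ext t; simp [hK]
      rw [this]
      exact (isCompact_sphere 0 1).inter_right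
        (isClosed_iInter fun s => isClosed_eq (by fun_prop) continuous_const)
    have hex : ∃ t : H, t ≠ 0 ∧ ∀ s, inner ℝ (v s) t = 0 := by
      by_contra! hcon
      let L : H →ₗ[ℝ] (Fin j → ℝ) := LinearMap.pi fun s => (innerₛₗ ℝ (v s))
      have hL : Function.Injective L := by
        rw [← LinearMap.ker_eq_bot, LinearMap.ker_eq_bot']
        intro t h0
        by_contra h1
        obtain ⟨s, hs⟩ := hcon t h1
        exact hs (congrFun h0 s)
      have := LinearMap.finrank_le_finrank_of_injective hL
      simp at this
      omega
    obtain ⟨t0, ht0, ht0s⟩ := hex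
    have hne : K.Nonempty := ⟨‖t0‖⁻¹ • t0, by
      refine ⟨?_, fun s => ?_⟩
      · rw [norm_smul, norm_inv, norm_norm, inv_mul_cancel₀ (norm_ne_zero_iff.2 ht0)]
      · rw [inner_smul_right, ht0s, mul_zero]⟩
    obtain ⟨w, ⟨hw1, hws⟩, hwmax⟩ := hKc.exists_isMaxOn hne
      (f := fun t => ‖T t‖) (by fun_prop)
    have hle : ‖T w‖ ≤ u := by simpa [hw1] using ht w hws
    refine ⟨Fin.snoc v w, ‖T w‖, ?_, norm_nonneg _, ?_, ?_⟩
    · rw [orthonormal_iff_ite] at hv ⊢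
      intro a b
      refine Fin.lastCases ?_ (fun a => ?_) a <;> refine Fin.lastCases ?_ (fun b => ?_) b
      · simp [hw1]
      · simp only [Fin.snoc_last, Fin.snoc_castSucc]
        rw [real_inner_comm, hws, if_neg]
        exact (Fin.castSucc_lt_last b).ne'
      · simp only [Fin.snoc_last, Fin.snoc_castSucc]
        rw [hws, if_neg]
        exact (Fin.castSucc_lt_last a).ne
      · simp [hv a b]
    · intro s
      refine Fin.lastCases ?_ (fun s => ?_) s
      · simp
      · simpa using hle.trans (huv s)
    · intro t hts
      by_cases h0 : t = 0
      · simp [h0]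
      have hmem : ‖t‖⁻¹ • t ∈ K := by
        refine ⟨?_, fun s => ?_⟩
        · rw [norm_smul, norm_inv, norm_norm, inv_mul_cancel₀ (norm_ne_zero_iff.2 h0)]
        · have := hts s.castSucc
          simp only [Fin.snoc_castSucc] at this
          rw [inner_smul_right, this, mul_zero]
      have h1 : ‖T (‖t‖⁻¹ • t)‖ ≤ ‖T w‖ := hwmax hmem
      rw [map_smul, norm_smul, norm_inv, norm_norm] at h1
      have hpos : 0 < ‖t‖ := norm_pos_iff.2 h0
      rwa [inv_mul_le_iff₀ hpos, mul_comm] at h1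

/-- `U` is an orthogonal matrix (rows indexed by the first variable). -/
def IsOrth {n : ℕ} (U : Fin n → Fin n → ℝ) : Prop :=
  (∀ i j, ∑ k, U i k * U j k = if i = j then 1 else 0) ∧
  (∀ k l, ∑ i, U i k * U i l = if k = l then 1 else 0)

lemma isOrth_of_rows {n : ℕ} {U : Fin n → Fin n → ℝ}
    (h : ∀ i j, ∑ k, U i k * U j k = if i = j then 1 else 0) : IsOrth U := by
  refine ⟨h, ?_⟩
  have h1 : (Matrix.of U) * (Matrix.of U).transpose = 1 := by
    ext i j
    simp [Matrix.mul_apply, h, Matrix.one_apply]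
  rw [mul_eq_one_comm] at h1
  intro k l
  have := congrFun (congrFun h1 k) l
  simpa [Matrix.mul_apply, Matrix.one_apply] using this

/-- The family `z` expressed in the orthonormal basis given by the rows of `U`. -/
def rot {n : ℕ} (U : Fin n → Fin n → ℝ) (z : Fin n → X) (i : Fin n) : X := ∑ k, U i k • z k

lemma lg_rot' {n : ℕ} {U : Fin n → Fin n → ℝ} (hU : IsOrth U) (z : Fin n → X) :
    lg (rot U z) = lg z := lg_rot U hU.2 z

/-- The preceding cut in coordinates: after a rotation, the first `j` vectors have norm at least
`u`, and the remaining ones span an operator from `ℓ₂` of norm at most `u`. -/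
lemma exists_cut_basis {n : ℕ} (z : Fin n → X) (j : ℕ) (hj : j ≤ n) :
    ∃ (U : Fin n → Fin n → ℝ) (u : ℝ), IsOrth U ∧ 0 ≤ u ∧
      (∀ i : Fin n, i.1 < j → u ≤ ‖rot U z i‖) ∧
      ∀ t : Fin n → ℝ, (∀ i : Fin n, i.1 < j → t i = 0) →
        ‖∑ i, t i • rot U z i‖ ^ 2 ≤ u ^ 2 * ∑ i, t i ^ 2 := by
  let T : EuclideanSpace ℝ (Fin n) →L[ℝ] X :=
    ∑ k, (EuclideanSpace.proj k : EuclideanSpace ℝ (Fin n) →L[ℝ] ℝ).smulRight (z k)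
  have hT : ∀ t, T t = ∑ k, t k • z k := by
    intro t; simp [T, _root_.sum_apply]
  obtain ⟨v, u, hv, hu, huv, ht⟩ := exists_cut T j (by simpa using hj)
  let v' : Fin n → EuclideanSpace ℝ (Fin n) := fun i => if h : i.1 < j then v ⟨i, h⟩ else 0
  have hv' : Orthonormal ℝ (Set.domRestrict {i : Fin n | i.1 < j} v') := by
    rw [orthonormal_iff_ite] at hv ⊢
    rintro ⟨a, ha⟩ ⟨b, hb⟩
    have ha' : a.1 < j := ha
    have hb' : b.1 < j := hb
    simp only [Set.domRestrict_apply, v', ha', hb', dif_pos, hv, Subtype.mk.injEq,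
      Fin.ext_iff]
  obtain ⟨b, hb⟩ := hv'.exists_orthonormalBasis_extension_of_card_eq (by simp)
  have hb' : ∀ (i : Fin n) (h : i.1 < j), b i = v ⟨i, h⟩ := by
    intro i h
    rw [hb i h]; simp [v', h]
  have hrot : ∀ i, rot (fun i k => b i k) z i = T (b i) := by
    intro i; rw [hT]; rfl
  refine ⟨fun i k => b i k, u, ?_, hu, ?_, ?_⟩
  · apply isOrth_of_rows
    intro i j
    have := orthonormal_iff_ite.1 b.orthonormal j i
    rw [PiLp.inner_apply] at this
    simp only [RCLike.inner_apply, conj_trivial] at this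
    rw [this]; simp [eq_comm]
  · intro i hi
    rw [hrot, hb' i hi]; exact huv _
  · intro t ht0
    have e1 : ∑ i, t i • rot (fun i k => b i k) z i = T (∑ i, t i • b i) := by
      simp only [hrot, map_sum, map_smul]
    have e2 : ‖∑ i, t i • b i‖ ^ 2 = ∑ i, t i ^ 2 := by
      rw [← real_inner_self_eq_norm_sq, b.orthonormal.inner_sum]
      simp [sq]
    rw [e1, ← e2, ← mul_pow]
    gcongr
    apply ht
    intro s
    have hsn : s.1 < n := by omega
    have : v s = b ⟨s, hsn⟩ := (hb' ⟨s, hsn⟩ s.2).symm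
    rw [this, b.orthonormal.inner_right_fintype]
    exact ht0 _ s.2

lemma rad_head_le {n j : ℕ} (hj : j ≤ n) (z : Fin n → X) :
    rad (fun s : Fin j => z (Fin.castLE hj s)) ≤ rad z :=
  rad_comp_inj (Fin.castLE_injective hj) z

/-- The cotype inequality makes the cut effective: the `j` head vectors of norm at least `u` have
Rademacher average at least `u ^ 2 / α`, so `u` is small compared with the Gaussian average. -/
lemma exists_cut_Q {n : ℕ} (z : Fin n → X) (j : ℕ) (hj1 : 1 ≤ j) (hj : j ≤ n) (α : ℝ) (hα : 0 ≤ α)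
    (hQ : Q X j (j * α)) :
    ∃ (U : Fin n → Fin n → ℝ) (u : ℝ), IsOrth U ∧ 0 ≤ u ∧
      (∀ t : Fin n → ℝ, (∀ i : Fin n, i.1 < j → t i = 0) →
        ‖∑ i, t i • rot U z i‖ ^ 2 ≤ u ^ 2 * ∑ i, t i ^ 2) ∧ gabs ^ 2 * u ^ 2 ≤ α * lg z := by
  obtain ⟨U, u, hU, hu, huv, ht⟩ := exists_cut_basis z j hj
  refine ⟨U, u, hU, hu, ht, ?_⟩
  have h1 := hQ (fun s : Fin j => rot U z (Fin.castLE hj s))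
  have h2 : (j : ℝ) * u ^ 2 ≤ ∑ s : Fin j, ‖rot U z (Fin.castLE hj s)‖ ^ 2 := by
    have : ∑ s : Fin j, u ^ 2 ≤ ∑ s : Fin j, ‖rot U z (Fin.castLE hj s)‖ ^ 2 :=
      Finset.sum_le_sum fun s _ => by gcongr; exact huv _ s.2
    simpa using this
  have h3 := rad_le_lg (rot U z)
  rw [lg_rot' hU] at h3
  have h4 := rad_head_le hj (rot U z)
  have hj0 : (0:ℝ) < j := by exact_mod_cast hj1
  have h5 : (j:ℝ) * u ^ 2 ≤ j * (α * rad (rot U z)) := by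
    refine h2.trans (h1.trans ?_)
    rw [mul_assoc]; gcongr
  have h6 := le_of_mul_le_mul_left h5 hj0
  calc gabs ^ 2 * u ^ 2 ≤ gabs ^ 2 * (α * rad (rot U z)) := by gcongr
    _ = α * (gabs ^ 2 * rad (rot U z)) := by ring
    _ ≤ _ := by gcongr

end cut

end GPair

/-! ### Maximal determinant bases -/

namespace GPair

open Finset

section maxdet
variable {V : Type*} [NormedAddCommGroup V] [NormedSpace ℝ V] [FiniteDimensional ℝ V]

/-- `t ↦ ∑ t_i φ_i` is a contraction from `ℓ₂^n`. -/
def Contr {n : ℕ} (φ : Fin n → V) : Prop := ∀ t : Fin n → ℝ, ‖∑ i, t i • φ i‖ ^ 2 ≤ ∑ i, t i ^ 2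

omit [FiniteDimensional ℝ V] in
lemma Contr.norm_le {n : ℕ} {φ : Fin n → V} (h : Contr φ) (i : Fin n) : ‖φ i‖ ≤ 1 := by
  have := h (Pi.single i 1)
  simp [Pi.single_apply] at this
  exact this

/-- Contractions from `ℓ₂^n` form a compact set, so that one of them has maximal volume. -/
lemma exists_max_det {n : ℕ} (b : Module.Basis (Fin n) ℝ V) : ∃ φ : Fin n → V, Contr φ ∧
    b.det φ ≠ 0 ∧ ∀ φ' : Fin n → V, Contr φ' → |b.det φ'| ≤ |b.det φ| := by
  haveI : ProperSpace V := FiniteDimensional.proper_real V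
  have hcont : Continuous fun φ : Fin n → V => |b.det φ| := by
    have : ∀ φ : Fin n → V, b.det φ = (Matrix.of fun i j => b.coord i (φ j)).det := by
      intro φ; rw [Module.Basis.det_apply]; rfl
    simp only [this]
    have hc : ∀ i, Continuous (b.coord i) := fun i => (b.coord i).continuous_of_finiteDimensional
    refine continuous_abs.comp (Continuous.matrix_det ?_)
    refine continuous_matrix fun i j => ?_
    exact (hc i).comp (continuous_apply j)
  have hclosed : IsClosed {φ : Fin n → V | Contr φ} := by
    simp only [Contr, Set.setOf_forall]
    exact isClosed_iInter fun t => isClosed_le (by fun_prop) continuous_const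
  have hcomp : IsCompact {φ : Fin n → V | Contr φ} := by
    refine Metric.isCompact_of_isClosed_isBounded hclosed ?_
    refine (Metric.isBounded_closedBall (x := (0 : Fin n → V)) (r := 1)).subset ?_
    intro φ hφ
    rw [mem_closedBall_zero_iff, pi_norm_le_iff_of_nonneg zero_le_one]
    exact fun i => Contr.norm_le hφ i
  set B := ∑ i, ‖b i‖ ^ 2 with hB
  have hB0 : 0 ≤ B := Finset.sum_nonneg fun _ _ => by positivity
  have hmem : Contr (fun i => (1 + B)⁻¹ • b i) := by
    intro t
    have h1 : ‖∑ i, t i • (1 + B)⁻¹ • b i‖ ≤ (1 + B)⁻¹ * ∑ i, |t i| * ‖b i‖ := by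
      rw [Finset.mul_sum]
      refine (norm_sum_le _ _).trans (le_of_eq (Finset.sum_congr rfl fun i _ => ?_))
      rw [norm_smul, norm_smul, Real.norm_eq_abs, Real.norm_of_nonneg (by positivity)]; ring
    have h2 : (∑ i, |t i| * ‖b i‖) ^ 2 ≤ (∑ i, t i ^ 2) * B := by
      simpa using Finset.sum_mul_sq_le_sq_mul_sq univ (fun i => |t i|) (fun i => ‖b i‖)
    have hS : 0 ≤ ∑ i, t i ^ 2 := Finset.sum_nonneg fun _ _ => by positivity
    calc _ ≤ ((1 + B)⁻¹ * ∑ i, |t i| * ‖b i‖) ^ 2 := by gcongr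
      _ = ((1 + B)⁻¹) ^ 2 * (∑ i, |t i| * ‖b i‖) ^ 2 := by ring
      _ ≤ ((1 + B)⁻¹) ^ 2 * ((∑ i, t i ^ 2) * B) := by gcongr
      _ ≤ ((1 + B)⁻¹) ^ 2 * ((∑ i, t i ^ 2) * (1 + B) ^ 2) := by gcongr; nlinarith
      _ = _ := by field_simp
  obtain ⟨φ, hφ, hmax⟩ := hcomp.exists_isMaxOn ⟨_, hmem⟩ hcont.continuousOn
  refine ⟨φ, hφ, ?_, fun φ' h => hmax h⟩
  have h1 : |b.det (fun i => (1 + B)⁻¹ • b i)| ≤ |b.det φ| := hmax hmem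
  have h2 : b.det (fun i => (1 + B)⁻¹ • b i) ≠ 0 := by
    rw [AlternatingMap.map_smul_univ, b.det_self]
    rw [smul_eq_mul, mul_one]
    exact Finset.prod_ne_zero_iff.2 fun _ _ => by positivity
  intro h0
  rw [h0, abs_zero] at h1
  exact h2 (abs_eq_zero.1 (le_antisymm h1 (abs_nonneg _)))

omit [FiniteDimensional ℝ V] in
lemma det_rot {n : ℕ} (b : Module.Basis (Fin n) ℝ V) {U : Fin n → Fin n → ℝ} (hU : IsOrth U)
    (φ : Fin n → V) : |b.det (rot U φ)| = |b.det φ| := by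
  have h1 : b.toMatrix (rot U φ) = b.toMatrix φ * (Matrix.of U).transpose := by
    ext i j
    simp [Module.Basis.toMatrix_apply, rot, Matrix.mul_apply, Finsupp.finsetSum_apply, mul_comm]
  have h2 : (Matrix.of U) * (Matrix.of U).transpose = 1 := by
    ext i j
    simp [Matrix.mul_apply, hU.1, Matrix.one_apply]
  have h3 := congrArg Matrix.det h2
  rw [Matrix.det_mul, Matrix.det_transpose, Matrix.det_one] at h3
  have h4 : |(Matrix.of U).det| = 1 := by
    have : |(Matrix.of U).det| * |(Matrix.of U).det| = 1 := by rw [← abs_mul, h3, abs_one]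
    nlinarith [abs_nonneg (Matrix.of U).det]
  rw [b.det_apply, b.det_apply, h1, Matrix.det_mul, Matrix.det_transpose, abs_mul, h4, mul_one]

omit [FiniteDimensional ℝ V] in
lemma Contr.rot {n : ℕ} {φ : Fin n → V} (h : Contr φ) {U : Fin n → Fin n → ℝ} (hU : IsOrth U) :
    Contr (rot U φ) := by
  intro t
  have e1 : ∑ i, t i • GPair.rot U φ i = ∑ k, (∑ i, t i * U i k) • φ k := by
    simp only [GPair.rot, Finset.smul_sum, Finset.sum_smul, smul_smul]
    rw [Finset.sum_comm]
  have e2 : ∑ k, (∑ i, t i * U i k) ^ 2 = ∑ i, t i ^ 2 := by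
    have : ∀ k, (∑ i, t i * U i k) ^ 2 = ∑ i, ∑ j, (t i * t j) * (U i k * U j k) := by
      intro k; rw [sq, Finset.sum_mul_sum]
      refine Finset.sum_congr rfl fun i _ => Finset.sum_congr rfl fun k _ => by ring
    simp only [this]
    rw [Finset.sum_comm]
    refine Finset.sum_congr rfl fun i _ => ?_
    rw [Finset.sum_comm]
    simp only [← Finset.mul_sum, hU.1]
    simp [sq]
  rw [e1, ← e2]
  exact h _

/-- Existence of a contraction from `ℓ₂^n` of maximal volume and its consequences. -/
lemma exists_good_basis {n : ℕ} (hn : 1 ≤ n) (hV : Module.finrank ℝ V = n) :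
    ∃ φ : Fin n → V, Contr φ ∧
      (∀ ψ : V, ‖ψ‖ ≤ 1 → ∃ c : Fin n → ℝ, ψ = ∑ i, c i • φ i ∧ ∀ i, |c i| ≤ 3 * n) ∧
      ∀ (j : ℕ) (U : Fin n → Fin n → ℝ) (u : ℝ), 2 * j ≤ n → IsOrth U → 0 ≤ u →
        (∀ t : Fin n → ℝ, (∀ i : Fin n, i.1 < j → t i = 0) →
          ‖∑ i, t i • rot U φ i‖ ^ 2 ≤ u ^ 2 * ∑ i, t i ^ 2) → 1 / 8 < u ^ 2 := by
  let b := Module.finBasisOfFinrankEq ℝ V hV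
  obtain ⟨φ, hφ, hdet, hmax⟩ := exists_max_det b
  have hn0 : (1:ℝ) ≤ n := by exact_mod_cast hn
  have hdp : 0 < |b.det φ| := abs_pos.2 hdet
  refine ⟨φ, hφ, ?_, ?_⟩
  · intro ψ hψ
    have hb := (Module.Basis.is_basis_iff_det b (v := φ)).2 (isUnit_iff_ne_zero.2 hdet)
    let bφ := Module.Basis.mk hb.1 hb.2.ge
    have hbφ : ∀ i, bφ i = φ i := fun i => by simp [bφ]
    have hexp : ψ = ∑ i, bφ.repr ψ i • φ i := by
      conv_lhs => rw [← bφ.sum_repr ψ]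
      simp only [hbφ]
    refine ⟨fun i => bφ.repr ψ i, hexp, fun i => ?_⟩
    set c : Fin n → ℝ := fun i => bφ.repr ψ i with hc
    obtain ⟨σ, hσ⟩ := exists_sg_mul (c i)
    set s : ℝ := 1 / (2 * n) with hs
    have hs0 : 0 < s := by positivity
    have hs1 : s ≤ 1 / 2 := by rw [hs]; apply one_div_le_one_div_of_le <;> linarith
    have h1s : 0 < 1 - s := by linarith
    let a : Fin n → V := fun k => (1 - s) • φ k
    -- move the `i`-th vector slightly towards `ψ`, shrinking to keep a contraction: the determinant
    -- would grow if the coordinate `c i` exceeded `3 n`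
    let φ' : Fin n → V := Function.update a i (a i + (s * sg σ) • ψ)
    have hφ'c : Contr φ' := by
      intro t
      have e : ∑ k, t k • φ' k = (1 - s) • (∑ k, t k • φ k) + (t i * (s * sg σ)) • ψ := by
        have : ∀ k, t k • φ' k = (1 - s) • (t k • φ k) + (if k = i then (t i * (s * sg σ)) • ψ else 0) := by
          intro k
          by_cases hk : k = i
          · subst hk; simp [φ', a, smul_smul, mul_comm]
          · simp [φ', a, hk, smul_smul, mul_comm]
        simp only [this, Finset.sum_add_distrib, Finset.smul_sum]
        simp
      set τ := Real.sqrt (∑ k, t k ^ 2) with hτ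
      have hS : 0 ≤ ∑ k, t k ^ 2 := Finset.sum_nonneg fun _ _ => by positivity
      have hti : |t i| ≤ τ := by
        apply Real.abs_le_sqrt
        exact Finset.single_le_sum (f := fun k => t k ^ 2) (fun _ _ => by positivity) (mem_univ i)
      have h2 : ‖∑ k, t k • φ k‖ ≤ τ := Real.le_sqrt_of_sq_le (hφ t)
      have h3 : ‖∑ k, t k • φ' k‖ ≤ τ := by
        rw [e]
        refine (norm_add_le _ _).trans ?_
        rw [norm_smul, norm_smul, Real.norm_of_nonneg h1s.le, norm_mul, norm_mul, Real.norm_eq_abs,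
          Real.norm_of_nonneg hs0.le, Real.norm_eq_abs, abs_sg]
        have : |t i| * (s * 1) * ‖ψ‖ ≤ τ * (s * 1) * 1 := by gcongr
        nlinarith
      calc _ ≤ τ ^ 2 := by gcongr
        _ = _ := Real.sq_sqrt hS
    have hda : b.det a = (1 - s) ^ n * b.det φ := by
      have := b.det.map_smul_univ (fun _ => (1 - s)) φ
      simpa [a] using this
    have hψa : ψ = ∑ k, (c k / (1 - s)) • a k := by
      rw [hexp]; refine Finset.sum_congr rfl fun k _ => ?_
      simp only [a, smul_smul]; rw [div_mul_cancel₀ _ h1s.ne']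
    have hupd : b.det (Function.update a i ψ) = c i / (1 - s) * b.det a := by
      rw [hψa, AlternatingMap.map_update_sum]
      rw [Finset.sum_eq_single i]
      · rw [AlternatingMap.map_update_smul, Function.update_eq_self]; rfl
      · intro k _ hk
        rw [AlternatingMap.map_update_smul, AlternatingMap.map_update_self _ _ hk.symm, smul_zero]
      · simp
    have hdφ' : b.det φ' = (1 - s) ^ n * (1 + s * |c i| / (1 - s)) * b.det φ := by
      simp only [φ']
      rw [AlternatingMap.map_update_add, Function.update_eq_self, AlternatingMap.map_update_smul,
        hupd, hda, ← hσ, smul_eq_mul]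
      field_simp
    have h4 := hmax φ' hφ'c
    rw [hdφ', abs_mul] at h4
    have h5 : |(1 - s) ^ n * (1 + s * |c i| / (1 - s))| ≤ 1 := by
      by_contra! hcon
      nlinarith
    have h6 : (1 - s) ^ n * (1 + s * |c i| / (1 - s)) ≤ 1 := (le_abs_self _).trans h5
    have h7 : 1 / 2 ≤ (1 - s) ^ n := by
      have := one_add_mul_le_pow (a := -s) (by linarith) n
      have h8 : (n:ℝ) * s = 1 / 2 := by rw [hs]; field_simp
      calc (1:ℝ) / 2 = 1 + n * (-s) := by linarith
        _ ≤ (1 + -s) ^ n := this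
        _ = _ := by rw [sub_eq_add_neg]
    have h9 : 0 ≤ s * |c i| / (1 - s) := by positivity
    have h10 : s * |c i| / (1 - s) ≤ 1 := by nlinarith
    rw [div_le_one h1s] at h10
    have h11 : s * |c i| ≤ s * (3 * n) := by
      have : s * (3 * n) = 3 / 2 := by rw [hs]; field_simp
      linarith
    exact le_of_mul_le_mul_left h11 hs0
  · intro j U u hj hU hu hcut
    by_contra! hcon
    set w : Fin n → ℝ := fun i => if i.1 < j then Real.sqrt (1 / 2) else 2 with hw
    let ψ : Fin n → V := fun i => w i • rot U φ i
    have hr2 : Real.sqrt (1 / 2) ^ 2 = 1 / 2 := Real.sq_sqrt (by norm_num)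
    have hr0 : 0 ≤ Real.sqrt (1 / 2) := Real.sqrt_nonneg _
    have hψ : Contr ψ := by
      intro t
      let t1 : Fin n → ℝ := fun i => if i.1 < j then Real.sqrt (1 / 2) * t i else 0
      let t2 : Fin n → ℝ := fun i => if i.1 < j then 0 else 2 * t i
      have e : ∑ i, t i • ψ i = ∑ i, t1 i • rot U φ i + ∑ i, t2 i • rot U φ i := by
        rw [← Finset.sum_add_distrib]
        refine Finset.sum_congr rfl fun i _ => ?_
        simp only [ψ, hw, t1, t2]
        split_ifs <;> simp [smul_smul, mul_comm]
      have h1 := (hφ.rot hU) t1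
      have h2 := hcut t2 (fun i hi => by simp [t2, hi])
      have h3 : ∑ i, t1 i ^ 2 + (1 / 8) * ∑ i, t2 i ^ 2 = 1 / 2 * ∑ i, t i ^ 2 := by
        rw [Finset.mul_sum, Finset.mul_sum, ← Finset.sum_add_distrib]
        refine Finset.sum_congr rfl fun i _ => ?_
        simp only [t1, t2]
        split_ifs
        · rw [mul_pow, hr2]; ring
        · ring
      have hS2 : 0 ≤ ∑ i, t2 i ^ 2 := Finset.sum_nonneg fun _ _ => by positivity
      have h4 : u ^ 2 * ∑ i, t2 i ^ 2 ≤ 1 / 8 * ∑ i, t2 i ^ 2 := by gcongr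
      rw [e]
      have h5 := norm_add_le (∑ i, t1 i • rot U φ i) (∑ i, t2 i • rot U φ i)
      have h6 := pow_le_pow_left₀ (norm_nonneg _) h5 2
      nlinarith [sq_nonneg (‖∑ i, t1 i • rot U φ i‖ - ‖∑ i, t2 i • rot U φ i‖)]
    have h1 := hmax ψ hψ
    have h2 : b.det ψ = (∏ i, w i) * b.det (rot U φ) := b.det.map_smul_univ w _
    rw [h2, abs_mul, det_rot b hU] at h1
    have h3 : 1 < ∏ i, w i := by
      have e1 : ∏ i, w i = Real.sqrt (1 / 2) ^ j * 2 ^ (n - j) := by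
        have hcard : (univ.filter fun i : Fin n => i.1 < j).card = j := by
          have := Fin.card_filter_val_lt (n := n) (m := j)
          rw [this]; omega
        have hcard' : (univ.filter fun i : Fin n => ¬ i.1 < j).card = n - j := by
          have := Finset.card_filter_add_card_filter_not (s := (univ : Finset (Fin n))) (fun i : Fin n => i.1 < j)
          rw [hcard, Finset.card_univ, Fintype.card_fin] at this
          omega
        rw [hw, Finset.prod_ite, Finset.prod_const, Finset.prod_const, hcard, hcard']
      have e2 : n - j = j + (n - 2 * j) := by omega
      have e3 : 1 ≤ Real.sqrt (1/2) * 2 := by nlinarith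
      have e4 : ∏ i, w i = (Real.sqrt (1 / 2) * 2) ^ j * 2 ^ (n - 2 * j) := by
        rw [e1, e2, pow_add, mul_pow]; ring
      have e5 : 1 < Real.sqrt (1/2) * 2 := by nlinarith
      rw [e4]
      rcases Nat.eq_zero_or_pos j with h | h
      · subst h
        have : n - 2 * 0 ≠ 0 := by omega
        rw [pow_zero, one_mul]
        exact one_lt_pow₀ (by norm_num) this
      · have h7 : 1 < (Real.sqrt (1 / 2) * 2) ^ j := one_lt_pow₀ e5 (by omega)
        have h8 : (1:ℝ) ≤ 2 ^ (n - 2 * j) := one_le_pow₀ (by norm_num)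
        nlinarith
    have h4 : |∏ i, w i| = ∏ i, w i := abs_of_pos (by linarith)
    rw [h4] at h1
    nlinarith

end maxdet

end GPair

/-! ### Sub-Gaussian concentration on the cube -/

namespace GPair

open Finset

section conc
variable {ι : Type} [Fintype ι] [DecidableEq ι]
variable {X : Type*} [NormedAddCommGroup X] [NormedSpace ℝ X]

/-- Flip the `i`-th sign. -/
def flipAt (i : ι) : (ι → Bool) ≃ (ι → Bool) := flipEquiv (fun j => !decide (j = i))

lemma sg_flipAt (i j : ι) (ε : ι → Bool) :
    sg (flipAt i ε j) = (if j = i then -1 else 1) * sg (ε j) := by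
  have : flipAt i ε j = (ε j == !decide (j = i)) := rfl
  rw [this, sg_beq, mul_comm]
  by_cases h : j = i <;> simp [h]

lemma walsh_flipAt (i : ι) (S : Finset ι) (ε : ι → Bool) :
    walsh S (flipAt i ε) = (if i ∈ S then -1 else 1) * walsh S ε := by
  simp only [walsh, sg_flipAt, Finset.prod_mul_distrib]
  congr 1
  rw [Finset.prod_ite_eq']

lemma flipAt_flipAt (i : ι) (ε : ι → Bool) : flipAt i (flipAt i ε) = ε :=
  (flipAt i).left_inv ε

/-- The Poincaré inequality on the cube. -/
lemma poincare (g : (ι → Bool) → ℝ) :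
    4 * (avg (fun ε => g ε ^ 2) - avg g ^ 2) ≤ ∑ i, avg (fun ε => (g ε - g (flipAt i ε)) ^ 2) := by
  have h1 : ∀ i S, coeff (fun ε => g ε - g (flipAt i ε)) S = (if i ∈ S then 2 else 0) * coeff g S := by
    intro i S
    have h2 : avg (fun ε => walsh S ε * g (flipAt i ε)) =
        avg (fun ε => walsh S (flipAt i ε) * g ε) := by
      rw [← avg_equiv (flipAt i) (fun ε => walsh S (flipAt i ε) * g ε)]
      simp only [flipAt_flipAt]
    simp only [coeff, smul_eq_mul, mul_sub]
    rw [avg_sub, h2]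
    simp only [walsh_flipAt, mul_assoc]
    rw [avg_mul]
    split_ifs <;> ring
  have h3 : ∀ i, avg (fun ε => (g ε - g (flipAt i ε)) ^ 2) =
      ∑ S, (if i ∈ S then 4 * coeff g S ^ 2 else 0) := by
    intro i
    rw [← parseval]
    refine Finset.sum_congr rfl fun S _ => ?_
    rw [h1]; split_ifs <;> ring
  simp only [h3]
  rw [Finset.sum_comm, ← parseval]
  have h4 : avg g = coeff g ∅ := by simp [coeff]
  have h5 : ∀ S : Finset ι, ∑ i, (if i ∈ S then 4 * coeff g S ^ 2 else 0) =
      S.card * (4 * coeff g S ^ 2) := by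
    intro S
    rw [← Finset.sum_filter]; simp
  simp only [h5]
  rw [h4, ← Finset.add_sum_erase univ _ (mem_univ (∅ : Finset ι)),
    ← Finset.add_sum_erase univ (fun S : Finset ι => (S.card : ℝ) * (4 * coeff g S ^ 2)) (mem_univ (∅ : Finset ι))]
  simp only [card_empty, Nat.cast_zero, zero_mul, zero_add, add_sub_cancel_left, Finset.mul_sum]
  refine Finset.sum_le_sum fun S hS => ?_
  have h6 : (1:ℝ) ≤ S.card := by
    have : S ≠ ∅ := (Finset.mem_erase.1 hS).1
    exact_mod_cast Finset.card_pos.2 (Finset.nonempty_iff_ne_empty.2 this)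
  nlinarith [sq_nonneg (coeff g S)]

/-- One-sided form of the Poincaré inequality. -/
lemma poincare_pos (g : (ι → Bool) → ℝ) (G : (ι → Bool) → ι → ℝ)
    (hG : ∀ ε i, g (flipAt i ε) ≤ g ε → (g ε - g (flipAt i ε)) ^ 2 ≤ G ε i)
    (hG0 : ∀ ε i, 0 ≤ G ε i) :
    2 * (avg (fun ε => g ε ^ 2) - avg g ^ 2) ≤ avg (fun ε => ∑ i, G ε i) := by
  have h := poincare g
  have h2 : ∑ i, avg (fun ε => (g ε - g (flipAt i ε)) ^ 2) ≤
      ∑ i, avg (fun ε => G ε i + G (flipAt i ε) i) := by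
    refine Finset.sum_le_sum fun i _ => avg_mono fun ε => ?_
    rcases le_total (g (flipAt i ε)) (g ε) with h1 | h1
    · linarith [hG ε i h1, hG0 (flipAt i ε) i]
    · have := hG (flipAt i ε) i (by rwa [flipAt_flipAt])
      rw [flipAt_flipAt] at this
      have e : (g ε - g (flipAt i ε)) ^ 2 = (g (flipAt i ε) - g ε) ^ 2 := by ring
      linarith [hG0 ε i]
  have h3 : ∑ i, avg (fun ε => G ε i + G (flipAt i ε) i) = 2 * avg (fun ε => ∑ i, G ε i) := by
    rw [avg_sum, Finset.mul_sum]
    refine Finset.sum_congr rfl fun i _ => ?_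
    rw [avg_add, avg_equiv (flipAt i) (fun ε => G ε i)]; ring
  linarith

/-- The Poincaré inequality for `exp (l f / 2)`, `f = ‖∑ ε_i z_i‖`. The gradient of `f` is
controlled by a norming functional of the larger of the two values, whence the one-sided form. -/
lemma exp_moment_step (z : ι → X) (w : ℝ)
    (hw : ∀ ψ : X →L[ℝ] ℝ, ‖ψ‖ ≤ 1 → ∑ i, ψ (z i) ^ 2 ≤ w ^ 2) (l : ℝ) (hl : 0 ≤ l)
    (hlw : l * w ≤ 1) (hw0 : 0 ≤ w) :
    avg (fun ε : ι → Bool => Real.exp (l * ‖∑ i, sg (ε i) • z i‖)) ≤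
      avg (fun ε : ι → Bool => Real.exp (l / 2 * ‖∑ i, sg (ε i) • z i‖)) ^ 2 *
        Real.exp (l ^ 2 * w ^ 2) := by
  set f : (ι → Bool) → ℝ := fun ε => ‖∑ i, sg (ε i) • z i‖ with hf
  set g : (ι → Bool) → ℝ := fun ε => Real.exp (l / 2 * f ε) with hg
  have hψ : ∀ ε, ∃ ψ : X →L[ℝ] ℝ, ‖ψ‖ ≤ 1 ∧ ψ (∑ i, sg (ε i) • z i) = f ε := by
    intro ε
    obtain ⟨ψ, h1, h2⟩ := exists_dual_vector'' ℝ (∑ i, sg (ε i) • z i)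
    exact ⟨ψ, h1, h2⟩
  choose ψ hψ1 hψ2 using hψ
  have hp := poincare_pos g (fun ε i => l ^ 2 * g ε ^ 2 * ψ ε (z i) ^ 2) (by
    intro ε i hle
    have hgp : 0 < g ε := Real.exp_pos _
    have h1 : ∑ j, sg (flipAt i ε j) • z j = ∑ j, sg (ε j) • z j - (2 * sg (ε i)) • z i := by
      have : ∀ j, sg (flipAt i ε j) • z j =
          sg (ε j) • z j - (if j = i then (2 * sg (ε i)) • z i else 0) := by
        intro j; rw [sg_flipAt]
        by_cases h : j = i
        · subst h
          simp only [if_pos]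
          rw [← sub_smul]; congr 1; ring
        · simp [h]
      simp only [this, Finset.sum_sub_distrib]
      simp
    have h2 : f ε - 2 * sg (ε i) * ψ ε (z i) ≤ f (flipAt i ε) := by
      have h3 : ψ ε (∑ j, sg (flipAt i ε j) • z j) ≤ f (flipAt i ε) := by
        have := (ψ ε).le_of_opNorm_le (hψ1 ε) (∑ j, sg (flipAt i ε j) • z j)
        rw [one_mul] at this
        exact (le_abs_self _).trans this
      rw [h1, map_sub, hψ2, map_smul, smul_eq_mul] at h3
      exact h3
    have h4 : g ε - g (flipAt i ε) ≤ g ε * (l * |ψ ε (z i)|) := by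
      have h5 : g (flipAt i ε) = g ε * Real.exp (l / 2 * f (flipAt i ε) - l / 2 * f ε) := by
        rw [hg, ← Real.exp_add]; congr 1; ring
      have h6 := Real.add_one_le_exp (l / 2 * f (flipAt i ε) - l / 2 * f ε)
      have h7 : sg (ε i) * ψ ε (z i) ≤ |ψ ε (z i)| := by
        refine (le_abs_self _).trans (le_of_eq ?_)
        rw [abs_mul, abs_sg, one_mul]
      have h8 : l * (f ε - f (flipAt i ε)) ≤ l * (2 * |ψ ε (z i)|) := by
        apply mul_le_mul_of_nonneg_left _ hl; linarith
      have h9 : 1 - l * |ψ ε (z i)| ≤ Real.exp (l / 2 * f (flipAt i ε) - l / 2 * f ε) := by linarith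
      have := mul_le_mul_of_nonneg_left h9 hgp.le
      rw [h5]; linarith
    calc (g ε - g (flipAt i ε)) ^ 2 ≤ (g ε * (l * |ψ ε (z i)|)) ^ 2 :=
          pow_le_pow_left₀ (by linarith) h4 2
      _ = _ := by rw [mul_pow, mul_pow, sq_abs]; ring) (fun ε i => by positivity)
  have h1 : avg (fun ε => ∑ i, l ^ 2 * g ε ^ 2 * ψ ε (z i) ^ 2) ≤ (l ^ 2 * w ^ 2) * avg (fun ε => g ε ^ 2) := by
    rw [← avg_mul]
    refine avg_mono fun ε => ?_
    rw [← Finset.mul_sum]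
    have := mul_le_mul_of_nonneg_left (hw (ψ ε) (hψ1 ε)) (by positivity : 0 ≤ l ^ 2 * g ε ^ 2)
    linarith
  have h2 : avg (fun ε => g ε ^ 2) = avg (fun ε => Real.exp (l * f ε)) := by
    congr 1; funext ε
    rw [hg, ← Real.exp_nat_mul]; congr 1; push_cast; ring
  rw [h2] at hp h1
  set A := avg (fun ε => Real.exp (l * f ε)) with hA
  set x := l ^ 2 * w ^ 2 / 2 with hx
  have hx0 : 0 ≤ x := by positivity
  have hx1 : x ≤ 1 / 2 := by
    have h0 : 0 ≤ l * w := by positivity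
    rw [hx]; nlinarith
  have h3 : A * (1 - x) ≤ avg g ^ 2 := by rw [hx]; linarith
  have h4 : 1 ≤ (1 - x) * Real.exp (l ^ 2 * w ^ 2) := by
    have h5 := Real.add_one_le_exp (l ^ 2 * w ^ 2)
    have h6 : l ^ 2 * w ^ 2 = 2 * x := by rw [hx]; ring
    rw [h6] at h5 ⊢
    nlinarith
  have hA0 : 0 ≤ A := avg_nonneg fun _ => (Real.exp_pos _).le
  calc A = A * 1 := by ring
    _ ≤ A * ((1 - x) * Real.exp (l ^ 2 * w ^ 2)) := by gcongr
    _ = (A * (1 - x)) * Real.exp (l ^ 2 * w ^ 2) := by ring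
    _ ≤ _ := by gcongr

/-- Iterating the halving step; the errors `l² w²` are summed as a geometric series. -/
lemma exp_moment_iter (z : ι → X) (w : ℝ)
    (hw : ∀ ψ : X →L[ℝ] ℝ, ‖ψ‖ ≤ 1 → ∑ i, ψ (z i) ^ 2 ≤ w ^ 2) (hw0 : 0 ≤ w) (j : ℕ) :
    ∀ (l : ℝ), 0 ≤ l → l * w ≤ 1 →
    avg (fun ε : ι → Bool => Real.exp (l * ‖∑ i, sg (ε i) • z i‖)) ≤
      avg (fun ε : ι → Bool => Real.exp (l / 2 ^ j * ‖∑ i, sg (ε i) • z i‖)) ^ (2 ^ j) *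
        Real.exp (2 * l ^ 2 * w ^ 2) := by
  induction j with
  | zero =>
    intro l hl _
    simp only [pow_zero, div_one, pow_one]
    apply le_mul_of_one_le_right (avg_nonneg fun _ => (Real.exp_pos _).le)
    exact Real.one_le_exp (by positivity)
  | succ j ih =>
    intro l hl hlw
    refine (exp_moment_step z w hw l hl hlw hw0).trans ?_
    have h1 := ih (l / 2) (by positivity) (by nlinarith)
    have h2 := pow_le_pow_left₀ (avg_nonneg fun _ => (Real.exp_pos _).le) h1 2
    refine (mul_le_mul_of_nonneg_right h2 (Real.exp_pos _).le).trans (le_of_eq ?_)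
    rw [mul_pow, ← pow_mul, ← pow_succ, mul_assoc, ← Real.exp_nat_mul, ← Real.exp_add]
    have e1 : l / 2 / 2 ^ j = l / 2 ^ (j + 1) := by rw [div_div, pow_succ, mul_comm]
    rw [e1]
    congr 2
    push_cast; ring

/-- Sub-Gaussian bound for the exponential moments of `‖∑ ε_i z_i‖` up to the scale `1/w`. -/
lemma exp_moment (z : ι → X) (w : ℝ)
    (hw : ∀ ψ : X →L[ℝ] ℝ, ‖ψ‖ ≤ 1 → ∑ i, ψ (z i) ^ 2 ≤ w ^ 2) (hw0 : 0 ≤ w)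
    (l : ℝ) (hl : 0 ≤ l) (hlw : l * w ≤ 1) :
    avg (fun ε : ι → Bool => Real.exp (l * ‖∑ i, sg (ε i) • z i‖)) ≤
      Real.exp (l * avg (fun ε : ι → Bool => ‖∑ i, sg (ε i) • z i‖) + 2 * l ^ 2 * w ^ 2) := by
  set f : (ι → Bool) → ℝ := fun ε => ‖∑ i, sg (ε i) • z i‖ with hf
  set B := ∑ i, ‖z i‖ with hB
  have hB0 : 0 ≤ B := Finset.sum_nonneg fun _ _ => norm_nonneg _
  have hfB : ∀ ε, f ε ≤ B := by
    intro ε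
    refine (norm_sum_le _ _).trans (le_of_eq (Finset.sum_congr rfl fun i _ => ?_))
    rw [norm_smul, Real.norm_eq_abs, abs_sg, one_mul]
  have hf0 : ∀ ε, 0 ≤ f ε := fun ε => norm_nonneg _
  -- for `j` large, the exponential at the scale `l / 2 ^ j` is linear up to a second-order term,
  -- which after raising to the power `2 ^ j` still tends to zero
  have hlim : Filter.Tendsto (fun j : ℕ => Real.exp (l * avg f + l ^ 2 * B ^ 2 * (1 / 2) ^ j + 2 * l ^ 2 * w ^ 2))
      Filter.atTop (nhds (Real.exp (l * avg f + l ^ 2 * B ^ 2 * 0 + 2 * l ^ 2 * w ^ 2))) := by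
    refine (Real.continuous_exp.tendsto _).comp ?_
    refine Filter.Tendsto.add_const _ (Filter.Tendsto.const_add _ (Filter.Tendsto.const_mul _ ?_))
    exact tendsto_pow_atTop_nhds_zero_of_lt_one (by norm_num) (by norm_num)
  rw [mul_zero, add_zero] at hlim
  refine ge_of_tendsto hlim ?_
  obtain ⟨j0, hj0⟩ := pow_unbounded_of_one_lt (l * B) (by norm_num : (1:ℝ) < 2)
  filter_upwards [Filter.eventually_ge_atTop j0] with j hj
  refine (exp_moment_iter z w hw hw0 j l hl hlw).trans ?_
  rw [Real.exp_add]
  gcongr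
  set μ := l / 2 ^ j with hμ
  have hμ0 : 0 ≤ μ := by positivity
  have hμB : μ * B ≤ 1 := by
    rw [hμ, div_mul_eq_mul_div, div_le_one (by positivity)]
    exact hj0.le.trans (pow_le_pow_right₀ (by norm_num) hj)
  have h1 : avg (fun ε => Real.exp (μ * f ε)) ≤ Real.exp (μ * avg f + μ ^ 2 * B ^ 2) := by
    have h2 : ∀ ε, Real.exp (μ * f ε) ≤ 1 + μ * f ε + μ ^ 2 * B ^ 2 := by
      intro ε
      have h3 : 0 ≤ μ * f ε := mul_nonneg hμ0 (hf0 ε)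
      have h3' : μ * f ε ≤ μ * B := by gcongr; exact hfB ε
      have h4 : μ * f ε ≤ 1 := h3'.trans hμB
      have h5 := Real.abs_exp_sub_one_sub_id_le (x := μ * f ε) (by rw [abs_of_nonneg h3]; exact h4)
      have h6 := (abs_le.1 h5).2
      have h7 := pow_le_pow_left₀ h3 h3' 2
      nlinarith
    refine (avg_mono h2).trans ?_
    have h3 : avg (fun ε => 1 + μ * f ε + μ ^ 2 * B ^ 2) = μ * avg f + μ ^ 2 * B ^ 2 + 1 := by
      rw [avg_add, avg_add, avg_mul, avg_const, avg_const]; ring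
    rw [h3]; exact Real.add_one_le_exp _
  refine (pow_le_pow_left₀ (avg_nonneg fun _ => (Real.exp_pos _).le) h1 _).trans (le_of_eq ?_)
  rw [← Real.exp_nat_mul]
  congr 1
  rw [hμ]; push_cast
  have : (2:ℝ) ^ j ≠ 0 := by positivity
  rw [one_div, inv_pow]
  field_simp

end conc

end GPair

/-! ### Random operators from random copies -/

namespace GPair

open Finset

lemma le_of_sq_le {a b : ℝ} (h : a ^ 2 ≤ b ^ 2) (hb : 0 ≤ b) : a ≤ b :=
  (le_abs_self a).trans (abs_le_of_sq_le_sq h hb)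

section rop
variable {ι : Type} [Fintype ι] [DecidableEq ι]
variable {X : Type*} [NormedAddCommGroup X] [NormedSpace ℝ X]

/-- The `l`-th randomised copy `∑_i ε_{i,l} z_i`. -/
noncomputable def copy {k : ℕ} (z : ι → X) (ε : ι × Fin k → Bool) (l : Fin k) : X :=
  ∑ i, sg (ε (i, l)) • z i

lemma sum_copy {k : ℕ} (z : ι → X) (ε : ι × Fin k → Bool) (p : Fin k → ℝ) :
    ∑ q : ι × Fin k, sg (ε q) • (p q.2 • z q.1) = ∑ l, p l • copy z ε l := by
  rw [Fintype.sum_prod_type_right]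
  refine Finset.sum_congr rfl fun l _ => ?_
  rw [copy, Finset.smul_sum]
  refine Finset.sum_congr rfl fun i _ => ?_
  rw [smul_comm]

/-- Rounding towards zero to the grid of mesh `1 / (2 k)`; the grid points are indexed by a finite
type, for use as a net of the unit ball of `ℓ₂^k`. -/
lemma exists_trunc (k : ℕ) (hk : 1 ≤ k) (x : ℝ) (hx : |x| ≤ 1) : ∃ a : Fin (4 * k + 1),
    |(((a : ℕ) : ℝ) - 2 * k) / (2 * k)| ≤ |x| ∧ |x - (((a : ℕ) : ℝ) - 2 * k) / (2 * k)| ≤ 1 / (2 * k) := by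
  have hk0 : (0:ℝ) < 2 * k := by positivity
  set m := ⌊2 * k * |x|⌋₊ with hm
  have h1 : (m : ℝ) ≤ 2 * k * |x| := Nat.floor_le (by positivity)
  have h2 : 2 * k * |x| < m + 1 := Nat.lt_floor_add_one _
  have h3 : m ≤ 2 * k := by
    have : (m : ℝ) ≤ (2 * k : ℕ) := by push_cast; nlinarith
    exact_mod_cast this
  have h4 : (m : ℝ) / (2 * k) ≤ |x| := by rw [div_le_iff₀ hk0]; linarith
  have h5 : |x| - (m : ℝ) / (2 * k) ≤ 1 / (2 * k) := by
    rw [sub_le_iff_le_add, ← add_div, le_div_iff₀ hk0]; linarith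
  have h6 : 0 ≤ (m : ℝ) / (2 * k) := by positivity
  rcases le_total 0 x with h | h
  · refine ⟨⟨2 * k + m, by omega⟩, ?_⟩
    have e : (((2 * k + m : ℕ) : ℝ) - 2 * k) / (2 * k) = m / (2 * k) := by push_cast; ring
    simp only [e]
    rw [abs_of_nonneg h] at *
    rw [abs_of_nonneg h6, abs_of_nonneg (by linarith)]
    exact ⟨h4, h5⟩
  · refine ⟨⟨2 * k - m, by omega⟩, ?_⟩
    have e : (((2 * k - m : ℕ) : ℝ) - 2 * k) / (2 * k) = -(m / (2 * k)) := by
      rw [Nat.cast_sub h3]; push_cast; ring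
    simp only [e]
    rw [abs_of_nonpos h] at *
    rw [abs_neg, abs_of_nonneg h6, abs_of_nonpos (by linarith)]
    exact ⟨h4, by linarith⟩

/-- The Gaussian average of the array `p_l z_i` is that of `z`, scaled by `|p|`. -/
lemma rad_scaled_le (z : ι → X) {k : ℕ} (p : Fin k → ℝ) (hp : ∑ l, p l ^ 2 ≤ 1) :
    gabs ^ 2 * rad (fun q : ι × Fin k => p q.2 • z q.1) ≤ lg z := by
  set r := Real.sqrt (∑ l, p l ^ 2) with hr
  have hS : 0 ≤ ∑ l, p l ^ 2 := Finset.sum_nonneg fun _ _ => by positivity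
  have hr2 : r ^ 2 = ∑ l, p l ^ 2 := Real.sq_sqrt hS
  rcases hS.eq_or_lt with h0 | h0
  · have hz : ∀ l, p l = 0 := by
      intro l
      have := (Finset.sum_eq_zero_iff_of_nonneg (fun i _ => sq_nonneg (p i))).1 h0.symm l (mem_univ l)
      exact pow_eq_zero_iff (two_ne_zero) |>.1 this
    have : rad (fun q : ι × Fin k => p q.2 • z q.1) = 0 := by
      simp [rad, hz, avg]
    rw [this, mul_zero]; exact lg_nonneg z
  have hr0 : 0 < r := Real.sqrt_pos.2 h0
  have h1 := rad_smul r (fun q : ι × Fin k => (p q.2 / r) • z q.1)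
  have h2 : (fun q : ι × Fin k => r • ((p q.2 / r) • z q.1)) = fun q => p q.2 • z q.1 := by
    funext q; rw [smul_smul, mul_div_cancel₀ _ hr0.ne']
  rw [h2] at h1
  have h3 : lg (fun q : ι × Fin k => (p q.2 / r) • z q.1) = lg z := by
    have := lg_rot (fun (q : ι × Fin k) (i : ι) => if q.1 = i then p q.2 / r else 0) (by
      intro a b
      rw [Fintype.sum_prod_type]
      by_cases h : a = b
      · subst h
        simp only [if_true]
        have : ∀ i : ι, ∑ l, ((if i = a then p l / r else 0) * if i = a then p l / r else 0) =
            if i = a then 1 else 0 := by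
          intro i; split_ifs
          · simp only [← sq, div_pow]
            rw [← Finset.sum_div, hr2, div_self h0.ne']
          · simp
        simp only [this]; simp
      · simp only [h, if_false]
        refine Finset.sum_eq_zero fun i _ => Finset.sum_eq_zero fun l _ => ?_
        by_cases h2 : i = a
        · subst h2; simp [h]
        · simp [h2]) z
    rw [← this]
    congr 1; funext q; simp
  have h4 := rad_le_lg (fun q : ι × Fin k => (p q.2 / r) • z q.1)
  rw [h3] at h4
  rw [h1]
  have hr1 : r ^ 2 ≤ 1 := by rw [hr2]; exact hp
  have h5 := rad_nonneg (fun q : ι × Fin k => (p q.2 / r) • z q.1)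
  calc gabs ^ 2 * (r ^ 2 * rad (fun q : ι × Fin k => (p q.2 / r) • z q.1))
      ≤ gabs ^ 2 * (1 * rad (fun q : ι × Fin k => (p q.2 / r) • z q.1)) := by gcongr
    _ ≤ _ := by rw [one_mul]; exact h4

/-- A square is bounded by an exponential moment beyond the threshold `m + w L`. -/
lemma tail_alg {f m w L : ℝ} (hf : 0 ≤ f) (hm : 0 ≤ m) (hw : 0 < w) (hL : 0 ≤ L) :
    f ^ 2 ≤ 2 * m ^ 2 + 2 * w ^ 2 * (2 * L ^ 2 + 4 * Real.exp ((f - m) / w - L)) := by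
  set u := (f - m) / w with hu
  have hfu : f = m + w * u := by rw [hu]; field_simp; ring
  have he := Real.exp_pos (u - L)
  rcases le_total u 0 with h | h
  · have : f ≤ m := by nlinarith
    have h2 : f ^ 2 ≤ m ^ 2 := by gcongr
    have : 0 ≤ 2 * w ^ 2 * (2 * L ^ 2 + 4 * Real.exp (u - L)) := by positivity
    nlinarith [sq_nonneg m]
  · have hu2 : u ^ 2 ≤ 2 * L ^ 2 + 4 * Real.exp (u - L) := by
      rcases le_total u L with h1 | h1
      · nlinarith
      · have := Real.quadratic_le_exp_of_nonneg (x := u - L) (by linarith)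
        nlinarith [sq_nonneg (u - 2 * L)]
    have : f ^ 2 ≤ 2 * m ^ 2 + 2 * w ^ 2 * u ^ 2 := by
      rw [hfu]; nlinarith [sq_nonneg (m - w * u)]
    have h3 : 2 * w ^ 2 * u ^ 2 ≤ 2 * w ^ 2 * (2 * L ^ 2 + 4 * Real.exp (u - L)) := by gcongr
    linarith

/-- Chevet-type bound: the operator `ℓ₂^k → X` whose columns are `k` independent randomised copies
of `∑ z_i` has norm at most of order `ℓ(z)`, up to a term controlled by the norm `w` of `z` as an
operator from `ℓ₂`. -/
lemma exists_random_op (z : ι → X) (w : ℝ) (hw0 : 0 < w)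
    (hw : ∀ t : ι → ℝ, ‖∑ i, t i • z i‖ ^ 2 ≤ w ^ 2 * ∑ i, t i ^ 2) (k : ℕ) (hk : 1 ≤ k) :
    ∃ M : (ι × Fin k → Bool) → ℝ, (∀ ε, 0 ≤ M ε) ∧
      (∀ ε (t : Fin k → ℝ), ‖∑ l, t l • copy z ε l‖ ^ 2 ≤ M ε ^ 2 * ∑ l, t l ^ 2) ∧
      avg (fun ε => M ε ^ 2) ≤ 8 / gabs ^ 2 * lg z + 512 * k ^ 4 * w ^ 2 := by
  have hk0 : (1:ℝ) ≤ k := by exact_mod_cast hk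
  let G := Fin k → Fin (4 * k + 1)
  let P0 : G → Fin k → ℝ := fun g l => (((g l : ℕ) : ℝ) - 2 * k) / (2 * k)
  let P : G → Fin k → ℝ := fun g => if ∑ l, P0 g l ^ 2 ≤ 1 then P0 g else 0
  have hP : ∀ g, ∑ l, P g l ^ 2 ≤ 1 := by
    intro g; simp only [P]; split_ifs with h
    · exact h
    · simp
  let F : G → (ι × Fin k → Bool) → ℝ := fun g ε => ‖∑ l, P g l • copy z ε l‖
  have hne : (univ : Finset G).Nonempty := univ_nonempty
  -- twice the maximum over the net bounds the operator norm
  let M : (ι × Fin k → Bool) → ℝ := fun ε => 2 * univ.sup' hne (fun g => F g ε)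
  have hMle : ∀ ε g, 2 * F g ε ≤ M ε := fun ε g => by
    have := Finset.le_sup' (fun g => F g ε) (mem_univ g)
    simp only [M]; linarith
  have hMex : ∀ ε, ∃ g, M ε = 2 * F g ε := fun ε => by
    obtain ⟨g, _, hg⟩ := Finset.exists_mem_eq_sup' hne (fun g => F g ε)
    exact ⟨g, by simp only [M]; rw [hg]⟩
  have hM0 : ∀ ε, 0 ≤ M ε := fun ε => by
    obtain ⟨g, hg⟩ := hMex ε; rw [hg]; simp only [F]; positivity
  refine ⟨M, hM0, ?_, ?_⟩
  · intro ε
    let T : EuclideanSpace ℝ (Fin k) →L[ℝ] X :=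
      ∑ l, (EuclideanSpace.proj l : EuclideanSpace ℝ (Fin k) →L[ℝ] ℝ).smulRight (copy z ε l)
    have hT : ∀ t, T t = ∑ l, t l • copy z ε l := by
      intro t; simp [T, _root_.sum_apply]
    have hunit : ∀ t : EuclideanSpace ℝ (Fin k), ‖t‖ = 1 → ‖T t‖ ≤ M ε / 2 + ‖T‖ / 2 := by
      intro t ht
      have hts : ∑ l, t l ^ 2 = 1 := by
        rw [← EuclideanSpace.real_norm_sq_eq, ht, one_pow]
      have htl : ∀ l, |t l| ≤ 1 := by
        intro l
        rw [← sq_le_one_iff_abs_le_one, ← hts]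
        exact Finset.single_le_sum (f := fun l => t l ^ 2) (fun _ _ => by positivity) (mem_univ l)
      choose g hg1 hg2 using fun l => exists_trunc k hk (t l) (htl l)
      have hPg : P g = P0 g := by
        have : ∑ l, P0 g l ^ 2 ≤ 1 := by
          rw [← hts]; refine Finset.sum_le_sum fun l _ => ?_
          exact sq_le_sq.2 (hg1 l)
        simp only [P, if_pos this]
      let s : EuclideanSpace ℝ (Fin k) := WithLp.toLp 2 (P0 g)
      have hs : ‖t - s‖ ≤ 1 / 2 := by
        have h1 : ‖t - s‖ ^ 2 ≤ (1 / 2) ^ 2 := by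
          rw [EuclideanSpace.real_norm_sq_eq]
          calc ∑ l, (t - s) l ^ 2 ≤ ∑ l : Fin k, (1 / (2 * (k:ℝ))) ^ 2 := by
                refine Finset.sum_le_sum fun l _ => ?_
                rw [sq_le_sq, abs_of_nonneg (by positivity : 0 ≤ 1 / (2 * (k:ℝ)))]
                exact hg2 l
            _ = 1 / (4 * k) := by simp; field_simp; norm_num
            _ ≤ _ := by rw [div_le_iff₀ (by positivity)]; nlinarith
        exact le_of_sq_le h1 (by norm_num)
      have h2 : T t = T s + T (t - s) := by rw [← map_add]; congr 1; abel
      rw [h2]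
      refine (norm_add_le _ _).trans ?_
      have h3 : ‖T s‖ ≤ M ε / 2 := by
        have h4 : ‖T s‖ = F g ε := by
          simp only [F, hPg, hT]; rfl
        rw [h4]; linarith [hMle ε g]
      have h4 : ‖T (t - s)‖ ≤ ‖T‖ * (1 / 2) := (T.le_opNorm _).trans (by gcongr)
      linarith
    have hop : ‖T‖ ≤ M ε / 2 + ‖T‖ / 2 := by
      refine T.opNorm_le_bound (by linarith [hM0 ε, norm_nonneg T]) fun t => ?_
      by_cases h0 : t = 0
      · simp [h0]
      have h1 := hunit (‖t‖⁻¹ • t) (by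
        rw [norm_smul, norm_inv, norm_norm, inv_mul_cancel₀ (norm_ne_zero_iff.2 h0)])
      rw [map_smul, norm_smul, norm_inv, norm_norm, inv_mul_le_iff₀ (norm_pos_iff.2 h0), mul_comm] at h1
      exact h1
    have hop2 : ‖T‖ ≤ M ε := by linarith
    intro t
    have h1 := T.le_of_opNorm_le hop2 (WithLp.toLp 2 t)
    rw [hT] at h1
    have h2 := pow_le_pow_left₀ (norm_nonneg _) h1 2
    rw [mul_pow, EuclideanSpace.real_norm_sq_eq] at h2
    exact h2
  · have hg0 := gabs_pos
    set m := Real.sqrt (lg z) / gabs with hm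
    have hm0 : 0 ≤ m := by positivity
    have hm2 : m ^ 2 = lg z / gabs ^ 2 := by rw [hm, div_pow, Real.sq_sqrt (lg_nonneg z)]
    -- the threshold `L` pays for the union bound over the `(4 k + 1) ^ k` points of the net
    set L : ℝ := 4 * k ^ 2 with hL
    have hL0 : 0 ≤ L := by positivity
    have hexp : ∀ g, avg (fun ε => Real.exp ((F g ε - m) / w - L)) ≤ Real.exp (2 - L) := by
      intro g
      let Z : ι × Fin k → X := fun q => P g q.2 • z q.1
      have hF : ∀ ε, F g ε = ‖∑ q, sg (ε q) • Z q‖ := fun ε => by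
        simp only [F, Z]; rw [sum_copy]
      have hψ : ∀ ψ : X →L[ℝ] ℝ, ‖ψ‖ ≤ 1 → ∑ q, ψ (Z q) ^ 2 ≤ w ^ 2 := by
        intro ψ hψ
        have h1 : ∑ i, ψ (z i) ^ 2 ≤ w ^ 2 := by
          have h2 := hw (fun i => ψ (z i))
          set s := ∑ i, ψ (z i) ^ 2 with hs
          have hs0 : 0 ≤ s := Finset.sum_nonneg fun _ _ => by positivity
          have h3 : s ≤ ‖∑ i, ψ (z i) • z i‖ := by
            have h4 := ψ.le_of_opNorm_le hψ (∑ i, ψ (z i) • z i)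
            rw [one_mul] at h4
            refine le_trans (le_of_eq ?_) ((Real.le_norm_self _).trans h4)
            rw [map_sum, hs]; refine Finset.sum_congr rfl fun i _ => ?_
            rw [map_smul, smul_eq_mul, sq]
          have h5 := pow_le_pow_left₀ hs0 h3 2
          by_contra! hcon
          have : 0 < s := lt_of_le_of_lt (sq_nonneg w) hcon
          nlinarith
        have h2 : ∑ q, ψ (Z q) ^ 2 = (∑ l, P g l ^ 2) * ∑ i, ψ (z i) ^ 2 := by
          rw [Fintype.sum_prod_type_right, Finset.sum_mul]
          refine Finset.sum_congr rfl fun l _ => ?_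
          rw [Finset.mul_sum]; refine Finset.sum_congr rfl fun i _ => ?_
          simp only [Z, map_smul, smul_eq_mul, mul_pow]
        rw [h2]
        have := hP g
        have hs0 : 0 ≤ ∑ i, ψ (z i) ^ 2 := Finset.sum_nonneg fun _ _ => by positivity
        nlinarith
      have h1 := exp_moment Z w hψ hw0.le (1 / w) (by positivity) (by field_simp; exact le_refl _)
      have hmean : avg (fun ε : ι × Fin k → Bool => ‖∑ q, sg (ε q) • Z q‖) ≤ m := by
        have h2 := avg_sq_le (fun ε : ι × Fin k → Bool => ‖∑ q, sg (ε q) • Z q‖)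
        have h3 := rad_scaled_le z (P g) (hP g)
        have h4 : avg (fun ε : ι × Fin k → Bool => ‖∑ q, sg (ε q) • Z q‖) ^ 2 ≤ m ^ 2 := by
          rw [hm2, le_div_iff₀ (by positivity)]
          have : avg (fun ε : ι × Fin k → Bool => ‖∑ q, sg (ε q) • Z q‖ ^ 2) =
            rad (fun q : ι × Fin k => P g q.2 • z q.1) := rfl
          rw [this] at h2
          nlinarith [sq_nonneg gabs]
        exact le_of_sq_le h4 hm0
      have h2 : ∀ ε, Real.exp ((F g ε - m) / w - L) =
          Real.exp (-(m / w) - L) * Real.exp (1 / w * ‖∑ q, sg (ε q) • Z q‖) := by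
        intro ε; rw [hF, ← Real.exp_add]; congr 1; ring
      simp only [h2]
      rw [avg_mul]
      calc _ ≤ Real.exp (-(m / w) - L) * Real.exp (1 / w * avg (fun ε : ι × Fin k → Bool => ‖∑ q, sg (ε q) • Z q‖) + 2 * (1 / w) ^ 2 * w ^ 2) := by
            gcongr
        _ ≤ Real.exp (-(m / w) - L) * Real.exp (1 / w * m + 2 * (1 / w) ^ 2 * w ^ 2) := by
            gcongr
        _ = _ := by rw [← Real.exp_add]; congr 1; field_simp; ring
    have hpt : ∀ ε, M ε ^ 2 ≤ 8 * m ^ 2 + 8 * w ^ 2 * (2 * L ^ 2 + 4 * ∑ g, Real.exp ((F g ε - m) / w - L)) := by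
      intro ε
      obtain ⟨g, hg⟩ := hMex ε
      have h1 := tail_alg (f := F g ε) (norm_nonneg _) hm0 hw0 hL0
      have h2 : Real.exp ((F g ε - m) / w - L) ≤ ∑ g, Real.exp ((F g ε - m) / w - L) :=
        Finset.single_le_sum (f := fun g => Real.exp ((F g ε - m) / w - L))
          (fun _ _ => (Real.exp_pos _).le) (mem_univ g)
      have h3 : 2 * w ^ 2 * (2 * L ^ 2 + 4 * Real.exp ((F g ε - m) / w - L)) ≤
          2 * w ^ 2 * (2 * L ^ 2 + 4 * ∑ g, Real.exp ((F g ε - m) / w - L)) := by gcongr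
      rw [hg, mul_pow]; linarith
    refine (avg_mono hpt).trans ?_
    have hav : avg (fun ε => 8 * m ^ 2 + 8 * w ^ 2 * (2 * L ^ 2 + 4 * ∑ g, Real.exp ((F g ε - m) / w - L)))
        = 8 * m ^ 2 + 8 * w ^ 2 * (2 * L ^ 2 + 4 * ∑ g, avg (fun ε => Real.exp ((F g ε - m) / w - L))) := by
      rw [avg_add, avg_const, avg_mul, avg_add, avg_const, avg_mul, avg_sum]
    rw [hav]
    have hcard : ∑ g : G, avg (fun ε => Real.exp ((F g ε - m) / w - L)) ≤ 8 := by
      calc _ ≤ ∑ g : G, Real.exp (2 - L) := Finset.sum_le_sum fun g _ => hexp g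
        _ = (4 * k + 1 : ℝ) ^ k * Real.exp (2 - L) := by simp [G]
        _ ≤ (Real.exp (4 * k)) ^ k * Real.exp (2 - L) := by
            gcongr; exact Real.add_one_le_exp _
        _ = Real.exp 1 ^ 2 := by
            rw [← Real.exp_nat_mul, ← Real.exp_add, ← Real.exp_nat_mul]; congr 1
            rw [hL]; push_cast; ring
        _ ≤ 8 := by
            have := Real.exp_one_lt_d9
            have h0 := Real.exp_pos 1
            nlinarith
    have hk4 : (1:ℝ) ≤ (k:ℝ) ^ 4 := one_le_pow₀ hk0
    calc 8 * m ^ 2 + 8 * w ^ 2 * (2 * L ^ 2 + 4 * ∑ g, avg (fun ε => Real.exp ((F g ε - m) / w - L)))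
        ≤ 8 * m ^ 2 + 8 * w ^ 2 * (2 * L ^ 2 + 4 * 8) := by gcongr
      _ = 8 / gabs ^ 2 * lg z + w ^ 2 * (256 * k ^ 4 + 256) := by rw [hm2, hL]; ring
      _ ≤ _ := by nlinarith [sq_nonneg w, mul_le_mul_of_nonneg_left hk4 (sq_nonneg w)]

end rop

end GPair

/-! ### The star inequality tested on random copies -/

namespace GPair

open Finset

section fin
variable {X : Type*} [NormedAddCommGroup X] [NormedSpace ℝ X]

/-- The adjoint of an operator `ℓ₂^k → X*` of norm `M` has norm at most `M` on `X`. -/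
lemma sum_sq_apply_le {k : ℕ} (η : Fin k → (X →L[ℝ] ℝ)) {M : ℝ} (hM : 0 ≤ M)
    (h : ∀ t : Fin k → ℝ, ‖∑ l, t l • η l‖ ^ 2 ≤ M ^ 2 * ∑ l, t l ^ 2) (y : X) :
    ∑ l, η l y ^ 2 ≤ M ^ 2 * ‖y‖ ^ 2 := by
  have h2 := h (fun l => η l y)
  set s := ∑ l, η l y ^ 2 with hs
  have hs0 : 0 ≤ s := Finset.sum_nonneg fun _ _ => by positivity
  have h3 : s ≤ ‖∑ l, η l y • η l‖ * ‖y‖ := by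
    refine le_trans (le_of_eq ?_) ((Real.le_norm_self _).trans
      ((∑ l, η l y • η l).le_opNorm y))
    rw [_root_.sum_apply, hs]; refine Finset.sum_congr rfl fun i _ => ?_
    simp [sq]
  have h5 := pow_le_pow_left₀ hs0 h3 2
  rw [mul_pow] at h5
  by_contra! hcon
  have h6 : 0 < s := lt_of_le_of_lt (by positivity) hcon
  have h7 : s ^ 2 ≤ M ^ 2 * s * ‖y‖ ^ 2 := h5.trans (by gcongr)
  nlinarith

/-- The quadratic form `∑_l η_l ⊗ η_l`, tested against the family `y`. -/
lemma star_square {C : ℝ} (hC : 0 ≤ C) (hS : Star X C) {k : ℕ} (η : Fin k → (X →L[ℝ] ℝ))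
    (y : Fin k → X) {M N : ℝ} (hM : 0 ≤ M) (hN : 0 ≤ N)
    (hη : ∀ t : Fin k → ℝ, ‖∑ l, t l • η l‖ ^ 2 ≤ M ^ 2 * ∑ l, t l ^ 2)
    (hy : ∀ t : Fin k → ℝ, ‖∑ l, t l • y l‖ ^ 2 ≤ N ^ 2 * ∑ l, t l ^ 2) :
    (∑ l, η l (y l)) ^ 2 ≤ C * (k * Real.sqrt k) * M ^ 2 * N ^ 2 := by
  let A : X →L[ℝ] (X →L[ℝ] ℝ) := ∑ l, (η l).smulRight (η l)
  have hA : ∀ p q, A p q = ∑ l, η l p * η l q := by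
    intro p q
    simp only [A, _root_.sum_apply]
    simp
  -- both factors pass through `ℓ₂^k`
  have hAn : ‖A‖ ≤ M ^ 2 := by
    refine ContinuousLinearMap.opNorm_le_bound₂ _ (by positivity) fun p q => ?_
    rw [hA, Real.norm_eq_abs]
    refine abs_le_of_sq_le_sq ?_ (by positivity)
    have h1 := Finset.sum_mul_sq_le_sq_mul_sq Finset.univ (fun l => η l p) (fun l => η l q)
    refine h1.trans ?_
    calc _ ≤ (M ^ 2 * ‖p‖ ^ 2) * (M ^ 2 * ‖q‖ ^ 2) := by
          gcongr
          · exact sum_sq_apply_le η hM hη p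
          · exact sum_sq_apply_le η hM hη q
      _ = _ := by ring
  have hk := Real.sq_sqrt (Nat.cast_nonneg (α := ℝ) k)
  have hx : ∀ ψ : X →L[ℝ] ℝ, ∑ l, |ψ (y l)| ≤ (Real.sqrt k * N) * ‖ψ‖ := by
    intro ψ
    choose s hs using fun l => exists_sg_mul (ψ (y l))
    have h1 : ∑ l, |ψ (y l)| = ψ (∑ l, sg (s l) • y l) := by
      rw [map_sum]; refine Finset.sum_congr rfl fun l _ => ?_
      rw [map_smul, smul_eq_mul, hs]
    have h2 : ‖∑ l, sg (s l) • y l‖ ≤ Real.sqrt k * N := by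
      refine le_of_sq_le ((hy _).trans (le_of_eq ?_)) (by positivity)
      simp only [sg_sq]
      rw [mul_pow, hk]; simp [mul_comm]
    rw [h1, mul_comm]
    exact (Real.le_norm_self _).trans ((ψ.le_opNorm _).trans (by gcongr))
  have hb : ∀ l, ‖y l‖ ≤ N := by
    intro l
    refine le_of_sq_le ?_ hN
    have := hy (Pi.single l 1)
    simpa [Pi.single_apply, Finset.sum_ite_eq', ite_pow] using this
  have h1 := hS k A y y (Real.sqrt k * N) N (by positivity) hN hx hb
  have h2 : ∑ l, η l (y l) ^ 2 ≤ ∑ l, A (y l) (y l) := by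
    refine Finset.sum_le_sum fun l _ => ?_
    rw [hA, sq]
    exact Finset.single_le_sum (f := fun i => η i (y l) * η i (y l))
      (fun i _ => mul_self_nonneg _) (Finset.mem_univ l)
  have h3 : (∑ l, η l (y l)) ^ 2 ≤ k * ∑ l, η l (y l) ^ 2 := by
    simpa using sq_sum_le_card_mul_sum_sq (s := Finset.univ) (f := fun l => η l (y l))
  calc _ ≤ k * (C * ‖A‖ * (Real.sqrt k * N) * N) := h3.trans (by gcongr; exact h2.trans h1)
    _ ≤ k * (C * M ^ 2 * (Real.sqrt k * N) * N) := by gcongr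
    _ = _ := by ring

section copies
variable {ι : Type} [Fintype ι] [DecidableEq ι]

/-- Each of the `k` copies contributes the full trace on average, as the signs are orthonormal. -/
lemma avg_trace_copy (φ : ι → (X →L[ℝ] ℝ)) (x : ι → X) (k : ℕ) :
    avg (fun ε : ι × Fin k → Bool => ∑ l, copy φ ε l (copy x ε l)) = k * ∑ i, φ i (x i) := by
  have h1 : ∀ (ε : ι × Fin k → Bool) l, copy φ ε l (copy x ε l) =
      ∑ i, ∑ j, φ i (x j) * (sg (ε (i, l)) * sg (ε (j, l))) := by
    intro ε l
    simp only [copy, _root_.sum_apply, map_sum, _root_.smul_apply, map_smul, smul_eq_mul]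
    simp only [Finset.mul_sum]
    rw [Finset.sum_comm]
    refine Finset.sum_congr rfl fun i _ => ?_
    exact Finset.sum_congr rfl fun j _ => by ring
  simp only [h1]
  rw [avg_sum]
  have h2 : ∀ l : Fin k, avg (fun ε : ι × Fin k → Bool =>
      ∑ i, ∑ j, φ i (x j) * (sg (ε (i, l)) * sg (ε (j, l)))) = ∑ i, φ i (x i) := by
    intro l
    rw [avg_sum]
    refine Finset.sum_congr rfl fun i _ => ?_
    rw [avg_sum]
    simp only [avg_mul, avg_sg_mul_sg]
    simp [Prod.ext_iff]
  simp [h2]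

/-- Random copies: the trace `∑ φ_i(x_i)` is controlled by the Gaussian norms of `φ` and `x`. -/
lemma star_trace {C : ℝ} (hC : 0 ≤ C) (hS : Star X C) (φ : ι → (X →L[ℝ] ℝ)) (x : ι → X)
    {v w : ℝ} (hv : 0 < v) (hw : 0 < w)
    (hφ : ∀ t : ι → ℝ, ‖∑ i, t i • φ i‖ ^ 2 ≤ v ^ 2 * ∑ i, t i ^ 2)
    (hx : ∀ t : ι → ℝ, ‖∑ i, t i • x i‖ ^ 2 ≤ w ^ 2 * ∑ i, t i ^ 2)
    (hτ : 0 ≤ ∑ i, φ i (x i)) (h : ℕ) (hh : 1 ≤ h) :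
    h * (∑ i, φ i (x i)) ^ 2 ≤ C * (8 / gabs ^ 2 * lg φ + 512 * h ^ 8 * v ^ 2) *
      (8 / gabs ^ 2 * lg x + 512 * h ^ 8 * w ^ 2) := by
  obtain ⟨M, hM0, hM, hMa⟩ := exists_random_op φ v hv hφ (h ^ 2) (Nat.one_le_pow _ _ hh)
  obtain ⟨N, hN0, hN, hNa⟩ := exists_random_op x w hw hx (h ^ 2) (Nat.one_le_pow _ _ hh)
  have hh0 : (0:ℝ) < h := by exact_mod_cast hh
  have hsq : Real.sqrt ((h ^ 2 : ℕ) : ℝ) = h := by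
    push_cast; exact Real.sqrt_sq hh0.le
  have h8 : (((h ^ 2 : ℕ) : ℝ)) ^ 4 = (h:ℝ) ^ 8 := by push_cast; ring
  rw [h8] at hMa hNa
  set τ := ∑ i, φ i (x i) with hτd
  set B := 8 / gabs ^ 2 * lg φ + 512 * (h:ℝ) ^ 8 * v ^ 2 with hB
  set D := 8 / gabs ^ 2 * lg x + 512 * (h:ℝ) ^ 8 * w ^ 2 with hD
  have h1 : ∀ ε : ι × Fin (h ^ 2) → Bool, ∑ l, copy φ ε l (copy x ε l) ≤
      Real.sqrt (C * h ^ 3) * (M ε * N ε) := by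
    intro ε
    have h2 := star_square hC hS (copy φ ε) (copy x ε) (hM0 ε) (hN0 ε) (hM ε) (hN ε)
    refine le_of_sq_le (h2.trans (le_of_eq ?_)) (mul_nonneg (Real.sqrt_nonneg _)
      (mul_nonneg (hM0 ε) (hN0 ε)))
    rw [hsq, mul_pow, Real.sq_sqrt (by positivity)]
    push_cast; ring
  have h2 := avg_mono h1
  rw [avg_trace_copy, avg_mul] at h2
  have h3 := avg_cs M N
  have h4 : (((h ^ 2 : ℕ) : ℝ) * τ) ^ 2 ≤ (C * h ^ 3) * (B * D) := by
    calc _ ≤ (Real.sqrt (C * h ^ 3) * avg fun ε => M ε * N ε) ^ 2 :=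
          pow_le_pow_left₀ (by positivity) h2 2
      _ = (C * h ^ 3) * (avg fun ε => M ε * N ε) ^ 2 := by
          rw [mul_pow, Real.sq_sqrt (by positivity)]
      _ ≤ _ := by
          gcongr
          refine h3.trans ?_
          have : 0 ≤ avg (fun ε => N ε ^ 2) := avg_nonneg fun ε => sq_nonneg _
          have : 0 ≤ avg (fun ε => M ε ^ 2) := avg_nonneg fun ε => sq_nonneg _
          gcongr
          linarith
  have h5 : (h:ℝ) ^ 3 * (h * τ ^ 2) ≤ (h:ℝ) ^ 3 * (C * B * D) := by
    push_cast at h4; nlinarith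
  exact le_of_mul_le_mul_left h5 (by positivity)
end copies

/-- Kill the first `j` vectors of a family. -/
def mask {n : ℕ} {V : Type*} [Zero V] (j : ℕ) (z : Fin n → V) (i : Fin n) : V :=
  if i.1 < j then 0 else z i

/-- A bound on the span of the tail is a bound on the whole masked family. -/
lemma mask_bound {n : ℕ} (j : ℕ) (z : Fin n → X) {u w : ℝ} (huw : u ^ 2 ≤ w ^ 2)
    (h : ∀ t : Fin n → ℝ, (∀ i : Fin n, i.1 < j → t i = 0) →
          ‖∑ i, t i • z i‖ ^ 2 ≤ u ^ 2 * ∑ i, t i ^ 2) (t : Fin n → ℝ) :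
    ‖∑ i, t i • mask j z i‖ ^ 2 ≤ w ^ 2 * ∑ i, t i ^ 2 := by
  have h1 : ∑ i, t i • mask j z i = ∑ i, mask j t i • z i := by
    refine Finset.sum_congr rfl fun i _ => ?_
    simp only [mask]; split_ifs <;> simp
  have h2 := h (mask j t) (fun i hi => by simp [mask, hi])
  rw [h1]
  refine h2.trans ?_
  have h3 : ∑ i, mask j t i ^ 2 ≤ ∑ i, t i ^ 2 := by
    refine Finset.sum_le_sum fun i _ => ?_
    simp only [mask]; split_ifs
    · simp; positivity
    · exact le_refl _
  have : 0 ≤ ∑ i, mask j t i ^ 2 := Finset.sum_nonneg fun _ _ => sq_nonneg _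
  gcongr

/-- Masking costs the comparison factor between Gaussian and Rademacher averages, since it is a
contraction for the latter. -/
lemma lg_mask_le {b R : ℕ} (hb : 1 ≤ b) (hR : 1 ≤ R) (j : ℕ) {U : Fin (b ^ R) → Fin (b ^ R) → ℝ}
    (hU : IsOrth U) (z : Fin (b ^ R) → X) :
    lg (mask j (rot U z)) ≤ b * (1 + gmom R) * (lg z / gabs ^ 2) := by
  have h1 := lg_le_rad b R hb hR (by simp) (mask j (rot U z))
  have h2 : rad (mask j (rot U z)) ≤ rad (rot U z) := by
    have := rad_contract (fun i : Fin (b ^ R) => if i.1 < j then (0:ℝ) else 1)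
      (fun i => by split_ifs <;> simp) (rot U z)
    refine le_trans (le_of_eq ?_) this
    congr 1; funext i; simp only [mask]; split_ifs <;> simp
  have h3 := rad_le_lg (rot U z)
  rw [lg_rot' hU] at h3
  have h4 : rad (rot U z) ≤ lg z / gabs ^ 2 := by
    rw [le_div_iff₀ (pow_pos gabs_pos 2)]; linarith
  have := gmom_nonneg R
  refine h1.trans ?_
  gcongr
  exact h2.trans h4

/-- The trace does not depend on the orthonormal basis. -/
lemma trace_rot {n : ℕ} {U : Fin n → Fin n → ℝ} (hU : IsOrth U) (φ : Fin n → (X →L[ℝ] ℝ))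
    (x : Fin n → X) : ∑ i, rot U φ i (rot U x i) = ∑ i, φ i (x i) := by
  have h1 : ∀ i, rot U φ i (rot U x i) = ∑ k, ∑ l, (U i k * U i l) * φ k (x l) := by
    intro i
    simp only [rot, _root_.sum_apply, map_sum, _root_.smul_apply, map_smul, smul_eq_mul]
    simp only [Finset.mul_sum]
    rw [Finset.sum_comm]
    refine Finset.sum_congr rfl fun k _ => ?_
    exact Finset.sum_congr rfl fun l _ => by ring
  simp only [h1]
  rw [Finset.sum_comm]
  refine Finset.sum_congr rfl fun k _ => ?_
  rw [Finset.sum_comm]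
  simp only [← Finset.sum_mul, hU.2]
  simp

/-- Removing `j` diagonal terms of size at most `s` lowers the trace by at most `j s`. -/
lemma trace_mask {n : ℕ} (j : ℕ) (φ : Fin n → (X →L[ℝ] ℝ)) (x : Fin n → X) {s : ℝ} (hs0 : 0 ≤ s)
    (hs : ∀ i, φ i (x i) ≤ s) :
    ∑ i, φ i (x i) - j * s ≤ ∑ i, mask j φ i (mask j x i) := by
  have h1 : ∑ i, φ i (x i) = ∑ i, mask j φ i (mask j x i) +
      ∑ i, if i.1 < j then φ i (x i) else 0 := by
    rw [← Finset.sum_add_distrib]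
    refine Finset.sum_congr rfl fun i _ => ?_
    simp only [mask]; split_ifs <;> simp
  have h2 : ∑ i : Fin n, (if i.1 < j then φ i (x i) else 0) ≤ j * s := by
    rw [← Finset.sum_filter]
    refine (Finset.sum_le_card_nsmul _ _ s fun i _ => hs i).trans ?_
    rw [nsmul_eq_mul, Fin.card_filter_val_lt]
    gcongr
    exact min_le_right _ _
  linarith
end fin

end GPair

/-! ### Contradiction in high dimension -/

namespace GPair

open Finset

section main
variable {X : Type*} [NormedAddCommGroup X] [NormedSpace ℝ X]

lemma finrank_dual [FiniteDimensional ℝ X] :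
    Module.finrank ℝ (X →L[ℝ] ℝ) = Module.finrank ℝ X := by
  rw [← (LinearMap.toContinuousLinearMap (𝕜 := ℝ) (E := X) (F' := ℝ)).finrank_eq]
  exact Subspace.dual_finrank_eq

/-- A basis of the dual of maximal volume: it is a contraction from `ℓ₂^n`, it is polynomially
equivalent to the basis of `ℓ_∞^n`, and its Rademacher average is large, since otherwise the
cotype inequality would produce a subspace of dimension at least `n / 2` on which it is small. -/
lemma exists_dual_basis [FiniteDimensional ℝ X] {b R : ℕ} (hX : Module.finrank ℝ X = b ^ R)
    (hb : 1 ≤ b) (hR : 1 ≤ R) (j : ℕ) (hj1 : 1 ≤ j) (hj : 2 * j ≤ b ^ R) (α : ℝ) (hα : 0 ≤ α)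
    (hQ : Q (X →L[ℝ] ℝ) j (j * α)) :
    ∃ φ : Fin (b ^ R) → (X →L[ℝ] ℝ), Contr φ ∧
      (∀ y, ‖y‖ ≤ 3 * (b : ℝ) ^ R * ∑ i, |φ i y|) ∧
      gabs ^ 2 / 8 ≤ α * (b * (1 + gmom R) * rad φ) := by
  obtain ⟨φ, h1, h2, h3⟩ := exists_good_basis (Nat.one_le_pow _ _ hb)
    ((finrank_dual (X := X)).trans hX)
  refine ⟨φ, h1, fun y => ?_, ?_⟩
  · obtain ⟨ψ, hψ, hy⟩ := exists_dual_vector'' ℝ y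
    obtain ⟨c, hc, hcb⟩ := h2 ψ hψ
    have h4 : ‖y‖ = ∑ i, c i * φ i y := by
      have : ψ y = ‖y‖ := by simpa using hy
      rw [← this, hc, _root_.sum_apply]; rfl
    rw [h4, Finset.mul_sum]
    refine Finset.sum_le_sum fun i _ => (le_abs_self _).trans ?_
    rw [abs_mul]
    gcongr
    simpa using hcb i
  · obtain ⟨U, u, hU, hu, ht, hv⟩ := exists_cut_Q φ j hj1 (by omega) α hα hQ
    have h4 := h3 j U u hj hU hu ht
    have h5 := lg_le_rad b R hb hR (by simp) φ
    have hg := pow_pos gabs_pos 2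
    calc gabs ^ 2 / 8 ≤ gabs ^ 2 * u ^ 2 := by nlinarith
      _ ≤ α * lg φ := hv
      _ ≤ _ := by gcongr

lemma norm_rot_sq_le {n : ℕ} {U : Fin n → Fin n → ℝ} (hU : IsOrth U) (z : Fin n → X) (i : Fin n) :
    ‖rot U z i‖ ^ 2 ≤ rad z := by
  have h1 := norm_sum_sq_le_rad z (U i)
  have h2 := hU.1 i i
  simp only [if_true, ← sq] at h2
  rw [h2, one_mul] at h1
  exact h1

set_option maxHeartbeats 1000000 in
/-- The main estimate in dimension `b ^ R`. Here `α` is the gain in the cotype inequality for `J`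
vectors, `K b²` bounds the Rademacher projection, and `φ` is a contraction whose Rademacher average
`L` is large compared with `J²` and `b ^ 56`. The conclusion bounds `b` in terms of `R` and the
constants. -/
lemma core {C : ℝ} (hC : 0 ≤ C) (hS : Star X C) {b R J : ℕ} (hb : 1 ≤ b) (hR : 1 ≤ R) (hJ1 : 1 ≤ J)
    (hJR : J ≤ b ^ R) {α K c : ℝ} (hα0 : 0 ≤ α) (hα : α * b ^ 56 ≤ 1) (hQ : Q X J (J * α))
    (hK : 0 < K) (hc : 0 < c) (φ : Fin (b ^ R) → (X →L[ℝ] ℝ)) (hφ : Contr φ)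
    (hrad : ∀ f : (Fin (b ^ R) → Bool) → X,
      rad (fun i => coeff f {i}) ≤ K * b ^ 2 * avg (fun ε => ‖f ε‖ ^ 2))
    (hL0 : 0 < rad φ) (hL1 : 16 * K * b ^ 2 * J ^ 2 ≤ rad φ) (hL2 : c * b ^ 56 ≤ rad φ) :
    (b:ℝ) ≤ 16 * C * (8 * (1 + gmom R) ^ 2 / gabs ^ 4 + 512 / c) *
      (8 * K * (1 + gmom R) ^ 2 / gabs ^ 4 + 512 * K * (1 + gmom R) / gabs ^ 2) := by
  have hb1 : (1:ℝ) ≤ b := by exact_mod_cast hb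
  have hb0 : (0:ℝ) < b := by linarith
  have hg := gabs_pos
  have hG1 := gmom_nonneg R
  set G := 1 + gmom R with hG
  have hG0 : 0 < G := by linarith
  set L := rad φ with hL
  obtain ⟨x, hx1, hx2⟩ := exists_dual_rad (by positivity) hrad φ
  rw [← hL] at hx1 hx2
  obtain ⟨U, u, hU, hu, ht, hv⟩ := exists_cut_Q x J hJ1 hJR α hα0 hQ
  have hlx : lg x ≤ G * K * b ^ 3 * L := by
    calc lg x ≤ b * G * rad x := lg_le_rad b R hb hR (by simp) x
      _ ≤ b * G * (K * b ^ 2 * L) := by gcongr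
      _ = _ := by ring
  have hlφ : lg φ ≤ b * G * L := lg_le_rad b R hb hR (by simp) φ
  -- `w` bounds the operator norm of the tail of `x`, by the choice of the gain `α ≤ b ^ (-56)`
  set w := Real.sqrt (G * K * b ^ 3 * L / gabs ^ 2 / b ^ 56) with hw
  have hw0 : 0 < w := Real.sqrt_pos.2 (by positivity)
  have hw2 : w ^ 2 = G * K * b ^ 3 * L / gabs ^ 2 / b ^ 56 := Real.sq_sqrt (by positivity)
  have huw : u ^ 2 ≤ w ^ 2 := by
    rw [hw2, le_div_iff₀ (by positivity), le_div_iff₀ (by positivity)]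
    calc u ^ 2 * (b:ℝ) ^ 56 * gabs ^ 2 = (gabs ^ 2 * u ^ 2) * b ^ 56 := by ring
      _ ≤ (α * lg x) * b ^ 56 := by gcongr
      _ = (α * b ^ 56) * lg x := by ring
      _ ≤ 1 * lg x := by have := lg_nonneg x; gcongr
      _ ≤ _ := by linarith
  -- `s` bounds the diagonal terms; the `J` removed ones amount to at most half of the trace
  set s := Real.sqrt (K * b ^ 2 * L) with hs
  have hs0 : 0 ≤ s := Real.sqrt_nonneg _
  have hs2 : s ^ 2 = K * b ^ 2 * L := Real.sq_sqrt (by positivity)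
  have hterm : ∀ i, rot U φ i (rot U x i) ≤ s := by
    intro i
    have h1 : ‖rot U x i‖ ≤ s := by
      refine le_of_sq_le ?_ hs0
      rw [hs2]; exact (norm_rot_sq_le hU x i).trans hx2
    refine (Real.le_norm_self _).trans (((rot U φ i).le_opNorm _).trans ?_)
    calc _ ≤ 1 * s := by gcongr; exact (hφ.rot hU).norm_le i
      _ = s := one_mul s
  have hτ := trace_mask J (rot U φ) (rot U x) hs0 hterm
  rw [trace_rot hU] at hτ
  have hJs : J * s ≤ L / 4 := by
    refine le_of_sq_le ?_ (by positivity)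
    rw [mul_pow, hs2]
    have : 16 * K * b ^ 2 * J ^ 2 * L ≤ L * L := by gcongr
    linarith
  set τ := ∑ i, mask J (rot U φ) i (mask J (rot U x) i) with hτd
  have hτ4 : L / 4 ≤ τ := by linarith
  have hmφ : ∀ t : Fin (b ^ R) → ℝ, ‖∑ i, t i • mask J (rot U φ) i‖ ^ 2 ≤ 1 ^ 2 * ∑ i, t i ^ 2 :=
    mask_bound J (rot U φ) (le_refl ((1:ℝ) ^ 2)) (fun t _ => by
      rw [one_pow, one_mul]; exact hφ.rot hU t)
  have hmx := mask_bound J (rot U x) huw ht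
  -- with `h = b ^ 7` the error terms carry `h ^ 8 = b ^ 56`, which `w` and `L` absorb
  have key := star_trace hC hS (mask J (rot U φ)) (mask J (rot U x)) one_pos hw0 hmφ hmx
    (by linarith) (b ^ 7) (Nat.one_le_pow _ _ hb)
  rw [← hτd] at key
  push_cast at key
  have hb7 : ((b:ℝ) ^ 7) ^ 8 = b ^ 56 := by ring
  rw [hb7] at key
  set P := 8 * G ^ 2 / gabs ^ 4 + 512 / c with hP
  set S := 8 * K * G ^ 2 / gabs ^ 4 + 512 * K * G / gabs ^ 2 with hSd
  have hP0 : 0 ≤ P := by positivity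
  have hS0 : 0 ≤ S := by positivity
  have h1 : 8 / gabs ^ 2 * lg (mask J (rot U φ)) + 512 * (b:ℝ) ^ 56 * 1 ^ 2 ≤ P * (b ^ 2 * L) := by
    have h2 : lg (mask J (rot U φ)) ≤ b * G * (b * G * L / gabs ^ 2) := by
      refine (lg_mask_le hb hR J hU φ).trans ?_
      gcongr
    have h3 : (b:ℝ) ^ 56 ≤ b ^ 2 * L / c := by
      rw [le_div_iff₀ hc]
      calc (b:ℝ) ^ 56 * c ≤ 1 * L := by linarith
        _ ≤ b ^ 2 * L := by gcongr; exact one_le_pow₀ hb1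
    calc _ ≤ 8 / gabs ^ 2 * (b * G * (b * G * L / gabs ^ 2)) + 512 * (b ^ 2 * L / c) * 1 ^ 2 := by
          gcongr
      _ = _ := by rw [hP]; field_simp
  have h2 : 8 / gabs ^ 2 * lg (mask J (rot U x)) + 512 * (b:ℝ) ^ 56 * w ^ 2 ≤ S * (b ^ 4 * L) := by
    have h2 : lg (mask J (rot U x)) ≤ b * G * (G * K * b ^ 3 * L / gabs ^ 2) := by
      refine (lg_mask_le hb hR J hU x).trans ?_
      gcongr
    have h3 : (b:ℝ) ^ 56 * w ^ 2 ≤ G * K * b ^ 4 * L / gabs ^ 2 := by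
      rw [hw2]
      calc _ = G * K * (b:ℝ) ^ 3 * L / gabs ^ 2 := by field_simp
        _ ≤ _ := by gcongr; norm_num
    calc _ ≤ 8 / gabs ^ 2 * (b * G * (G * K * b ^ 3 * L / gabs ^ 2)) +
            512 * (G * K * b ^ 4 * L / gabs ^ 2) := by
          rw [mul_assoc 512]; gcongr
      _ = _ := by rw [hSd]; field_simp
  have h3 : (b:ℝ) ^ 7 * (L / 4) ^ 2 ≤ C * (P * (b ^ 2 * L)) * (S * (b ^ 4 * L)) := by
    calc _ ≤ (b:ℝ) ^ 7 * τ ^ 2 := by gcongr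
      _ ≤ _ := key
      _ ≤ _ := by
        have := lg_nonneg (mask J (rot U x))
        gcongr
  have h4 : (b ^ 6 * L ^ 2 : ℝ) * b ≤ (b ^ 6 * L ^ 2) * (16 * C * P * S) := by
    calc (b ^ 6 * L ^ 2 : ℝ) * b = 16 * ((b:ℝ) ^ 7 * (L / 4) ^ 2) := by ring
      _ ≤ 16 * (C * (P * (b ^ 2 * L)) * (S * (b ^ 4 * L))) := by gcongr
      _ = _ := by ring
  exact le_of_mul_le_mul_left h4 (by positivity)

/-- Spaces of all dimensions cannot satisfy the star condition with one constant. -/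
lemma not_star (E : ℕ → Type*) [∀ n, NormedAddCommGroup (E n)] [∀ n, NormedSpace ℝ (E n)]
    [∀ n, FiniteDimensional ℝ (E n)] (hdim : ∀ n, 1 ≤ n → Module.finrank ℝ (E n) = n) {C : ℝ}
    (hC : 0 ≤ C) (hS : ∀ n, 1 ≤ n → Star (E n) C) : False := by
  obtain ⟨k, a, hk, ha0, ha1, hQ⟩ := exists_Q_of_star C hC
  have hk0 : (0:ℝ) < k := by exact_mod_cast (by omega : 0 < k)
  obtain ⟨r', hr'⟩ := exists_pow_lt_of_lt_one (show (0:ℝ) < 1 / k by positivity) ha1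
  obtain ⟨r, hr1, hr⟩ : ∃ r, 1 ≤ r ∧ a ^ r ≤ 1 / k :=
    ⟨r' + 1, by omega, (pow_le_pow_of_le_one ha0.le ha1.le (by omega)).trans hr'.le⟩
  -- since `a ^ r ≤ 1 / k`, in dimension `b ^ R` with `b = k ^ v` the gain `a ^ (v R)` is at most
  -- `b ^ (-(112 r + 4))`, so that `L` exceeds `J² = b ^ (112 r)` by the factors that `core` needs
  set R := r * (112 * r + 4) with hR
  have hR1 : 1 ≤ R := Nat.one_le_iff_ne_zero.2 (by positivity)
  obtain ⟨K, hK, hcoef⟩ := rad_coeff_le R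
  have hg := gabs_pos
  have hG1 := gmom_nonneg R
  set G := 1 + gmom R with hG
  have hG0 : 0 < G := by linarith
  set c := gabs ^ 2 * a / (8 * G) with hc
  have hc0 : 0 < c := by positivity
  set T := 16 * C * (8 * G ^ 2 / gabs ^ 4 + 512 / c) *
      (8 * K * G ^ 2 / gabs ^ 4 + 512 * K * G / gabs ^ 2) with hT
  obtain ⟨v, hv⟩ := exists_nat_gt (T + 16 * K / c + 1)
  have hT0 : 0 ≤ T := by positivity
  have hv1 : 1 ≤ v := by
    by_contra h0
    have : v = 0 := by omega
    subst this
    have : 0 ≤ 16 * K / c := by positivity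
    push_cast at hv; linarith
  set b := k ^ v with hbd
  have hvb : (v:ℝ) < b := by exact_mod_cast Nat.lt_pow_self (by omega)
  have hb : 1 ≤ b := Nat.one_le_pow _ _ (by omega)
  have hb0 : (1:ℝ) ≤ b := by exact_mod_cast hb
  have hn : 1 ≤ b ^ R := Nat.one_le_pow _ _ hb
  obtain ⟨hQ1, hQ2⟩ := hQ (E (b ^ R)) (hS _ hn)
  have hpow : ∀ m : ℕ, a ^ (v * (r * m)) * (b:ℝ) ^ m ≤ 1 := by
    intro m
    have h1 : a ^ (v * (r * m)) * (b:ℝ) ^ m = (a ^ r * k) ^ (v * m) := by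
      rw [hbd]; push_cast; rw [mul_pow, ← pow_mul, ← pow_mul]; ring_nf
    rw [h1]
    refine pow_le_one₀ (by positivity) ?_
    rwa [le_div_iff₀ hk0] at hr
  have hvR : 1 ≤ v * R := Nat.one_le_iff_ne_zero.2 (by positivity)
  have hQ3 := hQ2.pow (by positivity) (v * R - 1)
  rw [mul_pow] at hQ3
  have hbR : b ^ R = k * k ^ (v * R - 1) := by
    rw [hbd, ← pow_mul, ← pow_succ']; congr 1; omega
  have haR : a ^ (v * R) = a * a ^ (v * R - 1) := by
    rw [← pow_succ']; congr 1; omega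
  obtain ⟨φ, hφ, hy, hL⟩ := exists_dual_basis (hdim _ hn) hb hR1 (k ^ (v * R - 1))
    (Nat.one_le_pow _ _ (by omega)) (by rw [hbR]; exact Nat.mul_le_mul_right _ hk)
    (a ^ (v * R - 1)) (by positivity) (by exact_mod_cast hQ3)
  have hL3 : c * (b:ℝ) ^ (112 * r + 3) ≤ rad φ := by
    have h1 := hpow (112 * r + 4)
    rw [← hR, haR] at h1
    have hr0 := rad_nonneg φ
    rw [hc, div_mul_eq_mul_div, div_le_iff₀ (by positivity)]
    have h2 : gabs ^ 2 * (b:ℝ) ^ (112 * r + 4) * a ≤ 8 * G * b * rad φ := by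
      calc gabs ^ 2 * (b:ℝ) ^ (112 * r + 4) * a
          ≤ (8 * (a ^ (v * R - 1) * (b * G * rad φ))) * (b:ℝ) ^ (112 * r + 4) * a := by
            gcongr; linarith
        _ = 8 * G * b * rad φ * (a * a ^ (v * R - 1) * (b:ℝ) ^ (112 * r + 4)) := by ring
        _ ≤ 8 * G * b * rad φ * 1 := by gcongr
        _ = _ := mul_one _
    have h3 : (b:ℝ) * (gabs ^ 2 * a * b ^ (112 * r + 3)) ≤ b * (rad φ * (8 * G)) := by
      calc _ = gabs ^ 2 * (b:ℝ) ^ (112 * r + 4) * a := by ring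
        _ ≤ _ := h2
        _ = _ := by ring
    exact le_of_mul_le_mul_left h3 (by linarith)
  have hL0 : 0 < rad φ := lt_of_lt_of_le (by positivity) hL3
  have hQ4 := hQ1.pow (by positivity) (v * (r * 56))
  have hJ : k ^ (v * (r * 56)) = b ^ (56 * r) := by rw [hbd, ← pow_mul]; ring_nf
  rw [mul_pow] at hQ4
  have hcK : 16 * K ≤ c * b := by
    have h1 : 16 * K / c ≤ b := by linarith
    rw [div_le_iff₀ hc0] at h1; linarith
  have hfin := core hC (hS _ hn) hb hR1 (J := k ^ (v * (r * 56))) (Nat.one_le_pow _ _ (by omega))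
    (by rw [hJ]; exact Nat.pow_le_pow_right hb (by rw [hR]; nlinarith)) (α := a ^ (v * (r * 56)))
    (by positivity) (hpow 56) (by exact_mod_cast hQ4) hK hc0 φ hφ
    (hcoef b hb _ φ (fun i => hφ.norm_le i) hy _) hL0
    (by
      refine le_trans ?_ hL3
      rw [hJ]; push_cast
      calc 16 * K * (b:ℝ) ^ 2 * (b ^ (56 * r)) ^ 2 ≤ c * b * b ^ 2 * (b ^ (56 * r)) ^ 2 := by gcongr
        _ = _ := by ring)
    (by
      refine le_trans ?_ hL3
      gcongr
      omega)
  have : 0 ≤ 16 * K / c := by positivity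
  linarith
end main

end GPair

/-- If `(𝓔, F)` is a Grothendieck pair, then either `F` is finite dimensional or both `F`
and its dual `F*` have non-trivial (finite) cotype. -/
theorem statement0
    (E : ℕ → Type*) [∀ n, NormedAddCommGroup (E n)] [∀ n, NormedSpace ℝ (E n)]
    [∀ n, FiniteDimensional ℝ (E n)]
    (hdim : ∀ n, 1 ≤ n → Module.finrank ℝ (E n) = n)
    (F : Type*) [NormedAddCommGroup F] [NormedSpace ℝ F] [CompleteSpace F]
    (hGP : ∃ C > 0, ∀ n, 1 ≤ n →
      ∀ (A : E n →L[ℝ] (E n →L[ℝ] ℝ)) (u : (E n →L[ℝ] ℝ) →L[ℝ] F),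
        projNorm (u.comp A.flip) ≤ C * ‖A‖ * ‖u‖) :
    FiniteDimensional ℝ F ∨
      ((∃ q, 2 ≤ q ∧ HasCotype F q) ∧ ∃ q, 2 ≤ q ∧ HasCotype (F →L[ℝ] ℝ) q) := by
  obtain ⟨C, hC, hGP⟩ := hGP
  have hC8 : 0 ≤ 8 * C := by linarith
  refine Or.inr ⟨?_, ?_⟩
  · by_contra hF
    exact GPair.not_star E hdim hC8 fun n hn =>
      GPair.star_of_linf hC (hGP n hn) (GPair.hasLinf_of_no_cotype hF)
  · by_contra hF
    exact GPair.not_star E hdim hC8 fun n hn =>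
      GPair.star_of_dual_linf hC (hGP n hn) (GPair.hasLinf_of_no_cotype hF)
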